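/- (Proposition 3.5, virial decay estimates for the free mKdV flow in a moving frame.) Let c₀ > 0 and m > 1/2. There exist δ > 0 and C > 0 (depending on c₀, m) such that for ε₀ sufficiently small the following holds. Let c̃ : [0,T] → ℝ be continuous with c₀/2 ≤ c̃(t) ≤ 2c₀, and let v be a classical solution on [0,T] of ∂_t v - c̃(t) ∂_y v + ∂_y³ v + ∂_y(v³) = 0 whose initial data satisfies ‖v(0)‖_{H¹} + ‖⟨y₊⟩^m v(0)‖_{H¹} ≤ ε₀. Then, with the weight w(y) = (1 + tanh(δy))^{1/2}, for all t ∈ [0,T]: (i) ‖v(t)‖_{H¹_w} ≤ C ε₀ ⟨t⟩^{-m}; (ii) ‖⟨y₊⟩^m v(t)‖_{H¹} ≤ C ε₀; and (iii) ∫₀^T ‖v(s)‖²_{H²_{w'}} ds ≤ C ε₀². -/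

import Mathlib

/-!
The proof rests on the almost monotonicity of a localized energy. Let `ψ` be bounded, increasing and
slowly varying (`ψ''' ≤ (c₀/16) ψ'`; here `ψ(x) = 1 + tanh(δx)` with `δ = √c₀ / 8`), let
`0 ≤ σ ≤ c₀/8` and `α ∈ ℝ`. Differentiating `∫ ψ(y + σt - α) (v² + v_y² - v⁴/2) dy` in time gives
`-(c̃ - σ) ∫ ψ' (v² + v_y² - v⁴/2) - 3 ∫ ψ' (v_y² + v_yy²) + ∫ ψ''' (v² + v_y²)` plus terms carrying an
extra factor `v²`. Since `c̃ ≥ c₀/2`, the drift absorbs the `ψ'''` term, and the nonlinear terms are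
absorbed because the conserved mass and energy keep `v` uniformly small (`FlowData.small`). This is
`wsrc_le`, and its integrated form is `FlowData.mono_est`. The three conclusions follow
(`main_est`):

* (i) with `α = σt`, the energy at time `t` weighted by `ψ(y)` is bounded by the initial energy
  weighted by `ψ(y - σt)`, which is at most `C ⟨t⟩^(-2m) ⟨y₊⟩^(2m)` (`shift_bound`);
* (ii) with `σ = 0`, integrating the estimates against `α^(2m-1) dα` over `α > 0` turns the weights
  `ψ(y - α)` into a weight comparable to `⟨y₊⟩^(2m)` (`FlowData.poly_est`);
* (iii) with `σ = α = 0`, the dissipated quantity `∫∫ ψ' (v² + v_y² + v_yy²)` is bounded, and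
  `(w')² ≤ (δ/2) ψ'`.

A classical solution is only assumed to be Schwartz in `y` for each fixed `t`, with no uniformity in
`t`, so differentiating under the integral sign is not immediate. All balance laws
are derived from one truncation lemma (`balance`), which requires a bound on the `H³` norm uniform in
time. That bound is `FlowData.bounded`: on any time interval where the `H³` norm is known to be
finite uniformly, the three conservation laws `cons0`, `cons1`, `cons2` control the `H²` norm, and a
balance law for difference quotients of `v_yy` controls the `H³` norm, by constants that depend only
on the `H³` norm at a single time of the interval (`FlowData.prop_global`). As the `H³` norm is lower
semicontinuous in `t`, a Baire category argument (`baire_bound`) removes the a priori assumption.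
-/

noncomputable section

open MeasureTheory Real

/-- L² norm of a real-valued function. -/
def L2r (g : ℝ → ℝ) : ℝ := Real.sqrt (∫ x : ℝ, (g x) ^ 2)

/-- H¹ norm: ‖g‖² = ‖g‖_{L²}² + ‖∂g‖_{L²}². -/
def H1r (g : ℝ → ℝ) : ℝ := Real.sqrt (L2r g ^ 2 + L2r (deriv g) ^ 2)

/-- Weighted H¹ norm: ‖g‖²_{H¹_ω} = ‖ω g‖_{L²}² + ‖ω ∂g‖_{L²}². -/
def H1w (ω g : ℝ → ℝ) : ℝ :=
  Real.sqrt (L2r (fun x => ω x * g x) ^ 2 + L2r (fun x => ω x * deriv g x) ^ 2)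

/-- Square of the weighted H² norm: ‖g‖²_{H²_ω} = Σ_{k≤2} ‖ω ∂^k g‖_{L²}². -/
def H2wSq (ω g : ℝ → ℝ) : ℝ :=
  ∑ k ∈ Finset.range 3, L2r (fun x => ω x * iteratedDeriv k g x) ^ 2

/-- The weight w(x) = (1 + tanh(δx))^{1/2}. -/
def wgt (δ : ℝ) (x : ℝ) : ℝ := Real.sqrt (1 + Real.tanh (δ * x))

/-- The weight ⟨x₊⟩^m = (1 + (max x 0)²)^{m/2}. -/
def japPlus (m x : ℝ) : ℝ := (1 + (max x 0) ^ 2) ^ (m / 2)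

/-- Japanese bracket ⟨t⟩ = (1+t²)^{1/2}. -/
def jap (t : ℝ) : ℝ := Real.sqrt (1 + t ^ 2)

/-- `v` is a classical solution on `[0,T]` of the free mKdV equation in the moving frame
`∂ₜv - c̃(t)∂_y v + ∂_y³v + ∂_y(v³) = 0`: smooth, Schwartz in space, pointwise solution. -/
def IsFrameMKdV (ct : ℝ → ℝ) (v : ℝ → ℝ → ℝ) (T : ℝ) : Prop :=
  ContDiffOn ℝ (⊤ : ℕ∞) (Function.uncurry v) (Set.Icc 0 T ×ˢ Set.univ) ∧
  (∀ t ∈ Set.Icc 0 T, ∃ g : SchwartzMap ℝ ℝ, ∀ y, v t y = g y) ∧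
  (∀ t ∈ Set.Icc 0 T, ∀ y : ℝ,
    deriv (fun s => v s y) t - ct t * deriv (fun z => v t z) y
      + iteratedDeriv 3 (fun z => v t z) y + deriv (fun z => (v t z) ^ 3) y = 0)

section VirialProof

open Set Filter Topology

/-! ### A truncated balance law -/

/-- A compactly supported cutoff equal to `1` at the origin, with its first two derivatives. -/
lemma exists_cutoff : ∃ χ χ₁ χ₂ : ℝ → ℝ, ∃ M : ℝ, 0 ≤ M ∧ Continuous χ ∧ Continuous χ₁ ∧ Continuous χ₂ ∧
    (∀ x, HasDerivAt χ (χ₁ x) x) ∧ (∀ x, HasDerivAt χ₁ (χ₂ x) x) ∧ χ 0 = 1 ∧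
    (∀ x, |χ x| ≤ M) ∧ (∀ x, |χ₁ x| ≤ M) ∧ (∀ x, |χ₂ x| ≤ M) ∧
    HasCompactSupport χ ∧ HasCompactSupport χ₁ ∧ HasCompactSupport χ₂ := by
  let b : ContDiffBump (0:ℝ) := ⟨1, 2, by norm_num, by norm_num⟩
  have hb : ContDiff ℝ (2:ℕ) (b : ℝ → ℝ) := b.contDiff
  have hb1 : ContDiff ℝ (1:ℕ) (deriv (b : ℝ → ℝ)) := by
    have : ContDiff ℝ ((1:ℕ) + 1 : ℕ) (b : ℝ → ℝ) := b.contDiff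
    exact (contDiff_succ_iff_deriv (n := ((1:ℕ):WithTop ℕ∞))).1 (by exact_mod_cast this) |>.2.2
  have hs : HasCompactSupport (b : ℝ → ℝ) := b.hasCompactSupport
  have hs1 := hs.deriv
  have hs2 := hs1.deriv
  have c0 := hb.continuous
  have c1 := hb1.continuous
  have c2 : Continuous (deriv (deriv (b : ℝ → ℝ))) := hb1.continuous_deriv (by norm_num)
  obtain ⟨M0, h0⟩ := hs.exists_bound_of_continuous c0
  obtain ⟨M1, h1⟩ := hs1.exists_bound_of_continuous c1
  obtain ⟨M2, h2⟩ := hs2.exists_bound_of_continuous c2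
  refine ⟨b, deriv b, deriv (deriv b), max M0 (max M1 M2), ?_, c0, c1, c2, fun x => ?_, fun x => ?_,
    ?_, fun x => ?_, fun x => ?_, fun x => ?_, hs, hs1, hs2⟩
  · exact le_trans (norm_nonneg _) ((h0 0).trans (le_max_left _ _))
  · exact ((hb.differentiable (by norm_num)) x).hasDerivAt
  · exact ((hb1.differentiable (by norm_num)) x).hasDerivAt
  · exact b.one_of_mem_closedBall (by simp [b])
  · exact (h0 x).trans (le_max_left _ _)
  · exact (h1 x).trans ((le_max_left _ _).trans (le_max_right _ _))
  · exact (h2 x).trans ((le_max_right _ _).trans (le_max_right _ _))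

/-- Fundamental theorem of calculus in time, tested against a compactly supported function of space. -/
lemma fubini_cutoff {a b : ℝ} (hab : a ≤ b) {ρ q : ℝ → ℝ → ℝ} {χ : ℝ → ℝ}
    (hχ : Continuous χ) (hs : HasCompactSupport χ)
    (hρ : Continuous (fun p : ℝ × ℝ => ρ p.1 p.2)) (hq : Continuous (fun p : ℝ × ℝ => q p.1 p.2))
    (hd : ∀ t ∈ Ioo a b, ∀ y, HasDerivAt (fun s => ρ s y) (q t y) t) :
    ∫ y, χ y * (ρ b y - ρ a y) = ∫ t in a..b, ∫ y, χ y * q t y := by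
  have h1 : ∀ y, χ y * (ρ b y - ρ a y) = ∫ t in Ioc a b, χ y * q t y := by
    intro y
    rw [← intervalIntegral.integral_of_le hab, intervalIntegral.integral_const_mul]
    congr 1
    symm
    apply intervalIntegral.integral_eq_sub_of_hasDerivAt_of_le hab
    · exact (hρ.comp (by fun_prop : Continuous fun s : ℝ => (s, y))).continuousOn
    · exact fun t ht => hd t ht y
    · exact (hq.comp (by fun_prop : Continuous fun s : ℝ => (s, y))).intervalIntegrable _ _
  simp_rw [h1]
  rw [intervalIntegral.integral_of_le hab]
  apply integral_integral_swap (f := fun y t => χ y * q t y)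
  have hc : Continuous (Function.uncurry fun y t => χ y * q t y) := by
    have : Continuous fun p : ℝ × ℝ => q p.2 p.1 := hq.comp (by fun_prop : Continuous fun p : ℝ × ℝ => (p.2, p.1))
    exact (hχ.comp continuous_fst).mul this
  have hm : (volume : Measure ℝ).prod (volume.restrict (Ioc a b)) =
      ((volume : Measure ℝ).prod volume).restrict (univ ×ˢ Ioc a b) := by
    rw [← Measure.prod_restrict, Measure.restrict_univ]
  rw [hm]
  have hK : IsCompact (tsupport χ ×ˢ Icc a b) := IsCompact.prod hs isCompact_Icc
  have := hc.continuousOn.integrableOn_compact (μ := (volume : Measure ℝ).prod volume) hK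
  refine IntegrableOn.of_forall_sdiff_eq_zero this (by measurability) ?_
  rintro ⟨y, t⟩ ⟨⟨-, h2⟩, h3⟩
  have : y ∉ tsupport χ := fun h => h3 ⟨h, Ioc_subset_Icc_self h2⟩
  simp [image_eq_zero_of_notMem_tsupport this]

/-- Integration by parts against a compactly supported test function. -/
lemma ibp_compact {χ χ' F F' : ℝ → ℝ} (hχ : Continuous χ) (hχ' : Continuous χ') (hs : HasCompactSupport χ)
    (hs' : HasCompactSupport χ') (hd : ∀ x, HasDerivAt χ (χ' x) x) (hF : ∀ x, HasDerivAt F (F' x) x)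
    (hF' : Continuous F') : ∫ y, χ y * F' y = - ∫ y, χ' y * F y := by
  have cF : Continuous F := continuous_iff_continuousAt.2 fun x => (hF x).continuousAt
  apply integral_mul_deriv_eq_deriv_mul_of_integrable (fun x _ => hd x) (fun x _ => hF x)
  · exact (hχ.mul hF').integrable_of_hasCompactSupport hs.mul_right
  · exact (hχ'.mul cF).integrable_of_hasCompactSupport hs'.mul_right
  · exact (hχ.mul cF).integrable_of_hasCompactSupport hs.mul_right

lemma integrable_of_dom {h n : ℝ → ℝ} {C : ℝ} (hh : Continuous h) (hn : Integrable n) (hle : ∀ y, |h y| ≤ C * n y) :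
    Integrable h :=
  (hn.const_mul C).mono' hh.aestronglyMeasurable (Eventually.of_forall hle)

lemma abs_integral_le_of_dom {h n : ℝ → ℝ} {C : ℝ} (hn : Integrable n) (hle : ∀ y, |h y| ≤ C * n y) :
    |∫ y, h y| ≤ C * ∫ y, n y := by
  rw [← integral_const_mul]
  exact norm_integral_le_of_norm_le (f := h) (hn.const_mul C) (Eventually.of_forall hle)

/-- A space integral dominated uniformly in time is integrable in time; measurability in time comes
from joint continuity of the integrand. -/
lemma intervalIntegrable_param {a b B C : ℝ} {h n : ℝ → ℝ → ℝ} (hab : a ≤ b) (hC : 0 ≤ C)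
    (hh : Continuous (fun p : ℝ × ℝ => h p.1 p.2))
    (hn : ∀ t ∈ Icc a b, Integrable (n t)) (hB : ∀ t ∈ Icc a b, ∫ y, n t y ≤ B)
    (hle : ∀ t ∈ Icc a b, ∀ y, |h t y| ≤ C * n t y) :
    IntervalIntegrable (fun t => ∫ y, h t y) volume a b := by
  rw [intervalIntegrable_iff_integrableOn_Ioc_of_le hab]
  refine Integrable.mono' (g := fun _ => C * B) (integrable_const _) ?_ ?_
  · exact (hh.stronglyMeasurable.integral_prod_right (f := h)).aestronglyMeasurable
  · refine (ae_restrict_iff' measurableSet_Ioc).2 (Eventually.of_forall fun t ht => ?_)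
    have ht := Ioc_subset_Icc_self ht
    exact (abs_integral_le_of_dom (hn t ht) (hle t ht)).trans
      (mul_le_mul_of_nonneg_left (hB t ht) hC)

/-- Integrated balance law: if `∂ₜρ = r + ∂_y (f + ∂_y g)` then `∫ρ` changes by the time integral of
`∫r`. Only `ρ`, `f`, `g` and `r` have to be dominated by a density `n` whose integral is bounded in
time; the full flux `F = f + ∂_y g` need not be integrable, as its singular part `∂_y g` is integrated
by parts once more against the cutoff `χ(εy)`. This matters at the top order, where `∂_y g` contains a
derivative that is not controlled. -/
theorem balance {a b B C : ℝ} (hab : a ≤ b) (hC : 0 ≤ C) {ρ q F f g r n : ℝ → ℝ → ℝ}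
    (hρ : Continuous (fun p : ℝ × ℝ => ρ p.1 p.2)) (hq : Continuous (fun p : ℝ × ℝ => q p.1 p.2))
    (hf : Continuous (fun p : ℝ × ℝ => f p.1 p.2)) (hg : Continuous (fun p : ℝ × ℝ => g p.1 p.2))
    (hr : Continuous (fun p : ℝ × ℝ => r p.1 p.2))
    (hd : ∀ t ∈ Ioo a b, ∀ y, HasDerivAt (fun s => ρ s y) (q t y) t)
    (hF : ∀ t y, HasDerivAt (F t) (q t y - r t y) y)
    (hG : ∀ t y, HasDerivAt (g t) (F t y - f t y) y)
    (hn : ∀ t ∈ Icc a b, Integrable (n t)) (hB : ∀ t ∈ Icc a b, ∫ y, n t y ≤ B)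
    (bρ : ∀ t ∈ Icc a b, ∀ y, |ρ t y| ≤ C * n t y)
    (bf : ∀ t ∈ Icc a b, ∀ y, |f t y| ≤ C * n t y)
    (bg : ∀ t ∈ Icc a b, ∀ y, |g t y| ≤ C * n t y)
    (br : ∀ t ∈ Icc a b, ∀ y, |r t y| ≤ C * n t y) :
    (∫ y, ρ b y) - ∫ y, ρ a y = ∫ t in a..b, ∫ y, r t y := by
  obtain ⟨χ, χ₁, χ₂, M, hM, c0, c1, c2, d0, d1, hχ0, b0, b1, b2, s0, s1, s2⟩ := exists_cutoff
  have sl : ∀ {h : ℝ → ℝ → ℝ}, Continuous (fun p : ℝ × ℝ => h p.1 p.2) → ∀ t, Continuous (h t) :=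
    fun {h} hh t => hh.comp (by fun_prop : Continuous fun s : ℝ => (t, s))
  have ia : a ∈ Icc a b := ⟨le_rfl, hab⟩
  have ib : b ∈ Icc a b := ⟨hab, le_rfl⟩
  have iρa := integrable_of_dom (sl hρ a) (hn a ia) (bρ a ia)
  have iρb := integrable_of_dom (sl hρ b) (hn b ib) (bρ b ib)
  -- the dilation parameter tends to zero along `1 / (k + 1)`
  let ε : ℕ → ℝ := fun k => 1 / ((k:ℝ) + 1)
  have ε0 : ∀ k, 0 < ε k := fun k => by positivity
  have ε1 : ∀ k, ε k ≤ 1 := fun k => by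
    rw [div_le_one (by positivity)]; linarith [Nat.cast_nonneg (α := ℝ) k]
  have εlim : Tendsto ε atTop (𝓝 0) := tendsto_one_div_add_atTop_nhds_zero_nat
  let R : ℕ → ℝ → ℝ → ℝ := fun k t y =>
    χ (ε k * y) * r t y - ε k * χ₁ (ε k * y) * f t y + ε k ^ 2 * χ₂ (ε k * y) * g t y
  have key : ∀ k, ∫ y, χ (ε k * y) * (ρ b y - ρ a y) = ∫ t in a..b, ∫ y, R k t y := by
    intro k
    have hemb : Topology.IsClosedEmbedding (fun y : ℝ => ε k * y) :=
      (Homeomorph.mulLeft₀ (ε k) (ε0 k).ne').isClosedEmbedding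
    have t0 := s0.comp_isClosedEmbedding hemb
    have t1 := s1.comp_isClosedEmbedding hemb
    have t2 := s2.comp_isClosedEmbedding hemb
    have e0 : ∀ y, HasDerivAt (fun y => χ (ε k * y)) (ε k * χ₁ (ε k * y)) y := fun y => by
      have := (d0 (ε k * y)).comp y ((hasDerivAt_id y).const_mul (ε k))
      refine this.congr_deriv ?_
      simp [mul_comm]
    have e1 : ∀ y, HasDerivAt (fun y => ε k * χ₁ (ε k * y)) (ε k ^ 2 * χ₂ (ε k * y)) y := fun y => by
      have := ((d1 (ε k * y)).comp y ((hasDerivAt_id y).const_mul (ε k))).const_mul (ε k)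
      refine this.congr_deriv ?_
      simp; ring
    have k0 : Continuous (fun y => χ (ε k * y)) := by fun_prop
    have k1 : Continuous (fun y => ε k * χ₁ (ε k * y)) := by fun_prop
    have k2 : Continuous (fun y => ε k ^ 2 * χ₂ (ε k * y)) := by fun_prop
    have t1' : HasCompactSupport (fun y => ε k * χ₁ (ε k * y)) := t1.mul_left (f := fun _ => ε k)
    have t2' : HasCompactSupport (fun y => ε k ^ 2 * χ₂ (ε k * y)) := t2.mul_left (f := fun _ => ε k ^ 2)
    have hfub := fubini_cutoff (χ := fun y => χ (ε k * y)) hab k0 t0 hρ hq hd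
    refine hfub.trans ?_
    congr 1
    ext t
    have cF : Continuous (F t) := continuous_iff_continuousAt.2 fun x => (hF t x).continuousAt
    have A := ibp_compact k0 k1 t0 t1' e0 (hF t) ((sl hq t).sub (sl hr t))
    have A2 := ibp_compact k1 k2 t1' t2' e1 (hG t) (cF.sub (sl hf t))
    have j1 : Integrable (fun y => χ (ε k * y) * r t y) :=
      (k0.mul (sl hr t)).integrable_of_hasCompactSupport t0.mul_right
    have j2 : Integrable (fun y => χ (ε k * y) * (q t y - r t y)) :=
      (k0.mul ((sl hq t).sub (sl hr t))).integrable_of_hasCompactSupport t0.mul_right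
    have j3 : Integrable (fun y => ε k * χ₁ (ε k * y) * f t y) :=
      (k1.mul (sl hf t)).integrable_of_hasCompactSupport t1'.mul_right
    have j4 : Integrable (fun y => ε k * χ₁ (ε k * y) * (F t y - f t y)) :=
      (k1.mul (cF.sub (sl hf t))).integrable_of_hasCompactSupport t1'.mul_right
    have j5 : Integrable (fun y => ε k ^ 2 * χ₂ (ε k * y) * g t y) :=
      (k2.mul (sl hg t)).integrable_of_hasCompactSupport t2'.mul_right
    have B1 : ∫ y, χ (ε k * y) * q t y = (∫ y, χ (ε k * y) * r t y) + ∫ y, χ (ε k * y) * (q t y - r t y) := by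
      rw [← integral_add j1 j2]; congr 1; ext y; ring
    have B2 : ∫ y, ε k * χ₁ (ε k * y) * F t y =
        (∫ y, ε k * χ₁ (ε k * y) * f t y) + ∫ y, ε k * χ₁ (ε k * y) * (F t y - f t y) := by
      rw [← integral_add j3 j4]; congr 1; ext y; ring
    have B3 : ∫ y, R k t y = (∫ y, χ (ε k * y) * r t y) - (∫ y, ε k * χ₁ (ε k * y) * f t y)
        + ∫ y, ε k ^ 2 * χ₂ (ε k * y) * g t y := by
      rw [← integral_sub j1 j3]; exact integral_add (j1.sub j3) j5
    rw [B1, B3, A, B2, A2]; ring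
  have hχlim : ∀ y, Tendsto (fun k => χ (ε k * y)) atTop (𝓝 1) := fun y => by
    rw [← hχ0]
    apply (c0.tendsto 0).comp
    simpa using εlim.mul_const y
  have L1 : Tendsto (fun k => ∫ y, χ (ε k * y) * (ρ b y - ρ a y)) atTop (𝓝 (∫ y, (ρ b y - ρ a y))) := by
    apply tendsto_integral_of_dominated_convergence (fun y => M * |ρ b y - ρ a y|)
    · intro k
      exact ((c0.comp (by fun_prop)).mul ((sl hρ b).sub (sl hρ a))).aestronglyMeasurable
    · exact ((iρb.sub iρa).abs).const_mul M
    · intro k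
      refine Eventually.of_forall fun y => ?_
      rw [norm_mul]
      exact mul_le_mul_of_nonneg_right (b0 _) (norm_nonneg _)
    · refine Eventually.of_forall fun y => ?_
      simpa using (hχlim y).mul_const (ρ b y - ρ a y)
  have bR : ∀ k, ∀ t ∈ Icc a b, ∀ y, |R k t y| ≤ (3 * M * C) * n t y := by
    intro k t ht y
    have h1 : |χ (ε k * y) * r t y| ≤ M * (C * n t y) := by
      rw [abs_mul]; exact mul_le_mul (b0 _) (br t ht y) (abs_nonneg _) hM
    have h2 : |ε k * χ₁ (ε k * y) * f t y| ≤ (1 * M) * (C * n t y) := by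
      rw [abs_mul, abs_mul, abs_of_pos (ε0 k)]
      exact mul_le_mul (mul_le_mul (ε1 k) (b1 _) (abs_nonneg _) zero_le_one) (bf t ht y)
        (abs_nonneg _) (by positivity)
    have h3 : |ε k ^ 2 * χ₂ (ε k * y) * g t y| ≤ (1 * M) * (C * n t y) := by
      rw [abs_mul, abs_mul, abs_of_pos (pow_pos (ε0 k) 2)]
      exact mul_le_mul (mul_le_mul (pow_le_one₀ (ε0 k).le (ε1 k)) (b2 _) (abs_nonneg _) zero_le_one)
        (bg t ht y) (abs_nonneg _) (by positivity)
    have := abs_add_le (χ (ε k * y) * r t y - ε k * χ₁ (ε k * y) * f t y) (ε k ^ 2 * χ₂ (ε k * y) * g t y)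
    have := abs_sub (χ (ε k * y) * r t y) (ε k * χ₁ (ε k * y) * f t y)
    simp only [R]
    linarith
  have cR : ∀ k, Continuous (fun p : ℝ × ℝ => R k p.1 p.2) := by
    intro k; simp only [R]; fun_prop
  have L2 : Tendsto (fun k => ∫ t in a..b, ∫ y, R k t y) atTop (𝓝 (∫ t in a..b, ∫ y, r t y)) := by
    apply intervalIntegral.tendsto_integral_filter_of_dominated_convergence (fun _ => (3 * M * C) * B)
    · exact Eventually.of_forall fun k =>
        ((cR k).stronglyMeasurable.integral_prod_right (f := R k)).aestronglyMeasurable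
    · refine Eventually.of_forall fun k => Eventually.of_forall fun t ht => ?_
      rw [uIoc_of_le hab] at ht
      have ht := Ioc_subset_Icc_self ht
      exact (abs_integral_le_of_dom (hn t ht) (bR k t ht)).trans
        (mul_le_mul_of_nonneg_left (hB t ht) (by positivity))
    · simp
    · refine Eventually.of_forall fun t ht => ?_
      rw [uIoc_of_le hab] at ht
      have ht := Ioc_subset_Icc_self ht
      apply tendsto_integral_of_dominated_convergence (fun y => (3 * M * C) * n t y)
      · exact fun k => (sl (cR k) t).aestronglyMeasurable
      · exact (hn t ht).const_mul _
      · exact fun k => Eventually.of_forall (bR k t ht)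
      · refine Eventually.of_forall fun y => ?_
        have z1 : Tendsto (fun k => ε k * χ₁ (ε k * y)) atTop (𝓝 0) := by
          apply squeeze_zero_norm (a := fun k => ε k * M) _ (by simpa using εlim.mul_const M)
          intro k
          rw [norm_mul, Real.norm_of_nonneg (ε0 k).le]
          exact mul_le_mul_of_nonneg_left (b1 _) (ε0 k).le
        have z2 : Tendsto (fun k => ε k ^ 2 * χ₂ (ε k * y)) atTop (𝓝 0) := by
          apply squeeze_zero_norm (a := fun k => ε k ^ 2 * M) _ (by simpa using (εlim.pow 2).mul_const M)
          intro k
          rw [norm_mul, Real.norm_of_nonneg (pow_pos (ε0 k) 2).le]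
          exact mul_le_mul_of_nonneg_left (b2 _) (pow_pos (ε0 k) 2).le
        have := (((hχlim y).mul_const (r t y)).sub (z1.mul_const (f t y))).add (z2.mul_const (g t y))
        simpa [R] using this
  rw [← integral_sub iρb iρa]
  refine tendsto_nhds_unique L1 ?_
  simpa only [key] using L2

/-! ### The flow and its conservation laws -/

/-- The mKdV flow in the moving frame, as used in the energy estimates: `u k t y` is `∂_y^k v(t, y)`,
continuous in both variables and rapidly decreasing in `y` for each `t`, without uniformity in
`t`. The equation and its first two space derivatives are the fields `d0`, `d1`, `d2`; they hold at
interior times only. The speed `c` and all `u k` are defined for every real `t`, values outside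
`[0, T]` being immaterial. -/
structure FlowData (c : ℝ → ℝ) (T c₁ : ℝ) (u : ℕ → ℝ → ℝ → ℝ) : Prop where
  cc : Continuous c
  cb : ∀ t, |c t| ≤ c₁
  cont : ∀ k, Continuous (fun p : ℝ × ℝ => u k p.1 p.2)
  dy : ∀ k t y, HasDerivAt (u k t) (u (k + 1) t y) y
  dec : ∀ k j t, ∃ C, ∀ y, (1 + y ^ 2) ^ (j : ℕ) * |u k t y| ≤ C
  d0 : ∀ t ∈ Ioo 0 T, ∀ y, HasDerivAt (fun s => u 0 s y)
    (c t * u 1 t y - u 3 t y - 3 * u 0 t y ^ 2 * u 1 t y) t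
  d1 : ∀ t ∈ Ioo 0 T, ∀ y, HasDerivAt (fun s => u 1 s y)
    (c t * u 2 t y - u 4 t y - (3 * u 0 t y ^ 2 * u 2 t y + 6 * u 0 t y * u 1 t y ^ 2)) t
  d2 : ∀ t ∈ Ioo 0 T, ∀ y, HasDerivAt (fun s => u 2 s y)
    (c t * u 3 t y - u 5 t y - (3 * u 0 t y ^ 2 * u 3 t y + 18 * u 0 t y * u 1 t y * u 2 t y
      + 6 * u 1 t y ^ 3)) t

/-- `h` is bounded on the strip `[a, b] × ℝ`. -/
def Bd (a b : ℝ) (h : ℝ → ℝ → ℝ) : Prop := ∃ C, 0 ≤ C ∧ ∀ t ∈ Icc a b, ∀ y, |h t y| ≤ C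

/-- `h` is dominated by a multiple of the density `n` on the strip `[a, b] × ℝ`. -/
def QB (a b : ℝ) (n h : ℝ → ℝ → ℝ) : Prop := ∃ C, 0 ≤ C ∧ ∀ t ∈ Icc a b, ∀ y, |h t y| ≤ C * n t y

section dominated
variable {a b : ℝ} {n h k : ℝ → ℝ → ℝ}

lemma Bd.const (x : ℝ) : Bd a b (fun _ _ => x) := ⟨|x|, abs_nonneg _, fun _ _ _ => le_rfl⟩

lemma Bd.mul (hh : Bd a b h) (hk : Bd a b k) : Bd a b (fun t y => h t y * k t y) := by
  obtain ⟨C, hC, h1⟩ := hh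
  obtain ⟨D, hD, h2⟩ := hk
  exact ⟨C * D, by positivity, fun t ht y => by
    rw [abs_mul]; exact mul_le_mul (h1 t ht y) (h2 t ht y) (abs_nonneg _) hC⟩

lemma Bd.add (hh : Bd a b h) (hk : Bd a b k) : Bd a b (fun t y => h t y + k t y) := by
  obtain ⟨C, hC, h1⟩ := hh
  obtain ⟨D, hD, h2⟩ := hk
  exact ⟨C + D, by positivity, fun t ht y =>
    (abs_add_le _ _).trans (add_le_add (h1 t ht y) (h2 t ht y))⟩

lemma Bd.pow (hh : Bd a b h) (m : ℕ) : Bd a b (fun t y => h t y ^ m) := by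
  obtain ⟨C, hC, h1⟩ := hh
  exact ⟨C ^ m, by positivity, fun t ht y => by
    rw [abs_pow]; exact pow_le_pow_left₀ (abs_nonneg _) (h1 t ht y) m⟩

lemma QB.zero : QB a b n (fun _ _ => 0) :=
  ⟨0, le_rfl, fun t _ y => by simp⟩

lemma QB.add (hh : QB a b n h) (hk : QB a b n k) : QB a b n (fun t y => h t y + k t y) := by
  obtain ⟨C, hC, h1⟩ := hh
  obtain ⟨D, hD, h2⟩ := hk
  exact ⟨C + D, by positivity, fun t ht y => by
    rw [add_mul]; exact (abs_add_le _ _).trans (add_le_add (h1 t ht y) (h2 t ht y))⟩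

lemma QB.sub (hh : QB a b n h) (hk : QB a b n k) : QB a b n (fun t y => h t y - k t y) := by
  obtain ⟨C, hC, h1⟩ := hh
  obtain ⟨D, hD, h2⟩ := hk
  exact ⟨C + D, by positivity, fun t ht y => by
    rw [add_mul]; exact (abs_sub _ _).trans (add_le_add (h1 t ht y) (h2 t ht y))⟩

lemma QB.mul (hk : Bd a b k) (hh : QB a b n h) : QB a b n (fun t y => k t y * h t y) := by
  obtain ⟨C, hC, h1⟩ := hh
  obtain ⟨D, hD, h2⟩ := hk
  exact ⟨D * C, by positivity, fun t ht y => by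
    rw [abs_mul, mul_assoc]; exact mul_le_mul (h2 t ht y) (h1 t ht y) (abs_nonneg _) hD⟩

lemma QB.prod (h1 : ∀ t y, h t y ^ 2 ≤ n t y) (h2 : ∀ t y, k t y ^ 2 ≤ n t y) :
    QB a b n (fun t y => h t y * k t y) :=
  ⟨1, zero_le_one, fun t _ y => by
    rw [one_mul, abs_le]
    constructor <;> nlinarith [h1 t y, h2 t y, sq_nonneg (h t y + k t y), sq_nonneg (h t y - k t y)]⟩

end dominated

/-- The balance law `balance` with the four domination hypotheses in the form `QB`. -/
theorem balance' {a b B : ℝ} (hab : a ≤ b) {ρ q F f g r n : ℝ → ℝ → ℝ}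
    (hρ : Continuous (fun p : ℝ × ℝ => ρ p.1 p.2)) (hq : Continuous (fun p : ℝ × ℝ => q p.1 p.2))
    (hf : Continuous (fun p : ℝ × ℝ => f p.1 p.2)) (hg : Continuous (fun p : ℝ × ℝ => g p.1 p.2))
    (hr : Continuous (fun p : ℝ × ℝ => r p.1 p.2))
    (hd : ∀ t ∈ Ioo a b, ∀ y, HasDerivAt (fun s => ρ s y) (q t y) t)
    (hF : ∀ t y, HasDerivAt (F t) (q t y - r t y) y)
    (hG : ∀ t y, HasDerivAt (g t) (F t y - f t y) y)
    (hn : ∀ t ∈ Icc a b, Integrable (n t)) (hB : ∀ t ∈ Icc a b, ∫ y, n t y ≤ B)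
    (hn0 : ∀ t y, 0 ≤ n t y)
    (bρ : QB a b n ρ) (bf : QB a b n f) (bg : QB a b n g) (br : QB a b n r) :
    (∫ y, ρ b y) - ∫ y, ρ a y = ∫ t in a..b, ∫ y, r t y := by
  obtain ⟨C1, p1, h1⟩ := bρ
  obtain ⟨C2, p2, h2⟩ := bf
  obtain ⟨C3, p3, h3⟩ := bg
  obtain ⟨C4, p4, h4⟩ := br
  refine balance (C := C1 + C2 + C3 + C4) hab (by positivity) hρ hq hf hg hr hd hF hG hn hB ?_ ?_ ?_ ?_
  · exact fun t ht y => (h1 t ht y).trans (mul_le_mul_of_nonneg_right (by linarith) (hn0 t y))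
  · exact fun t ht y => (h2 t ht y).trans (mul_le_mul_of_nonneg_right (by linarith) (hn0 t y))
  · exact fun t ht y => (h3 t ht y).trans (mul_le_mul_of_nonneg_right (by linarith) (hn0 t y))
  · exact fun t ht y => (h4 t ht y).trans (mul_le_mul_of_nonneg_right (by linarith) (hn0 t y))

/-- The density of the squared `H³` norm. -/
def dens (u : ℕ → ℝ → ℝ → ℝ) (t y : ℝ) : ℝ := u 0 t y ^ 2 + u 1 t y ^ 2 + u 2 t y ^ 2 + u 3 t y ^ 2

lemma integrable_of_decay {h : ℝ → ℝ} (hc : Continuous h) {C : ℝ} (hh : ∀ y, (1 + y ^ 2) * |h y| ≤ C) :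
    Integrable h := by
  refine (integrable_inv_one_add_sq.const_mul C).mono' hc.aestronglyMeasurable (Eventually.of_forall fun y => ?_)
  have : 0 < 1 + y ^ 2 := by positivity
  rw [← div_eq_mul_inv, le_div_iff₀ this, Real.norm_eq_abs, mul_comm]
  exact hh y

/-- One-dimensional Sobolev inequality with a free parameter. -/
lemma sobolev {g g' : ℝ → ℝ} (hd : ∀ y, HasDerivAt g (g' y) y) (hc : Continuous g')
    (i0 : Integrable (fun y => g y ^ 2)) (i1 : Integrable (fun y => g' y ^ 2))
    (hlim : Tendsto g atBot (𝓝 0)) {θ : ℝ} (hθ : 0 < θ) (y : ℝ) :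
    g y ^ 2 ≤ θ⁻¹ * (∫ y, g y ^ 2) + θ * ∫ y, g' y ^ 2 := by
  have cg : Continuous g := continuous_iff_continuousAt.2 fun x => (hd x).continuousAt
  have hb : ∀ x, |2 * g x * g' x| ≤ θ⁻¹ * g x ^ 2 + θ * g' x ^ 2 := by
    intro x
    have e1 : 0 ≤ θ⁻¹ * (g x - θ * g' x) ^ 2 := by positivity
    have e2 : 0 ≤ θ⁻¹ * (g x + θ * g' x) ^ 2 := by positivity
    have e3 : θ⁻¹ * (g x - θ * g' x) ^ 2 = θ⁻¹ * g x ^ 2 + θ * g' x ^ 2 - 2 * g x * g' x := by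
      field_simp; ring
    have e4 : θ⁻¹ * (g x + θ * g' x) ^ 2 = θ⁻¹ * g x ^ 2 + θ * g' x ^ 2 + 2 * g x * g' x := by
      field_simp; ring
    rw [abs_le]; constructor <;> linarith
  have iS : Integrable (fun x => θ⁻¹ * g x ^ 2 + θ * g' x ^ 2) := (i0.const_mul _).add (i1.const_mul _)
  have iP : Integrable (fun x => 2 * g x * g' x) :=
    iS.mono' (by fun_prop) (Eventually.of_forall hb)
  have h1 : ∫ x in Iic y, 2 * g x * g' x = g y ^ 2 - 0 := by
    apply integral_Iic_of_hasDerivAt_of_tendsto' (f := fun x => g x ^ 2)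
    · intro x _
      exact ((hd x).pow 2).congr_deriv (by simp)
    · exact iP.integrableOn
    · simpa using hlim.pow 2
  calc g y ^ 2 = ∫ x in Iic y, 2 * g x * g' x := by rw [h1]; ring
    _ ≤ ∫ x in Iic y, (θ⁻¹ * g x ^ 2 + θ * g' x ^ 2) :=
        integral_mono iP.integrableOn iS.integrableOn fun x => (le_abs_self _).trans (hb x)
    _ ≤ ∫ x, (θ⁻¹ * g x ^ 2 + θ * g' x ^ 2) :=
        setIntegral_le_integral iS (Eventually.of_forall fun x => by positivity)
    _ = _ := by rw [integral_add (i0.const_mul _) (i1.const_mul _), integral_const_mul, integral_const_mul]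

namespace FlowData
variable {c : ℝ → ℝ} {T c₁ : ℝ} {u : ℕ → ℝ → ℝ → ℝ}

lemma contu (S : FlowData c T c₁ u) (k : ℕ) : Continuous (Function.uncurry (u k)) := S.cont k

lemma conty (S : FlowData c T c₁ u) (k : ℕ) (t : ℝ) : Continuous (u k t) :=
  (S.cont k).comp (by fun_prop : Continuous fun s : ℝ => (t, s))

lemma isq (S : FlowData c T c₁ u) (k : ℕ) (t : ℝ) : Integrable (fun y => u k t y ^ 2) := by
  obtain ⟨C, hC⟩ := S.dec k 1 t
  refine integrable_of_decay ((S.conty k t).pow 2) (C := C * C) fun y => ?_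
  have h1 := hC y
  rw [pow_one] at h1
  have h2 : |u k t y| ≤ C := le_trans (le_mul_of_one_le_left (abs_nonneg _) (by nlinarith [sq_nonneg y])) h1
  have : |u k t y ^ 2| = |u k t y| * |u k t y| := by rw [abs_pow, sq]
  rw [this, ← mul_assoc]
  exact mul_le_mul h1 h2 (abs_nonneg _) ((by positivity : 0 ≤ (1 + y ^ 2) * |u k t y|).trans h1)

lemma lim (S : FlowData c T c₁ u) (k : ℕ) (t : ℝ) : Tendsto (u k t) atBot (𝓝 0) := by
  obtain ⟨C, hC⟩ := S.dec k 1 t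
  have hl : Tendsto (fun y : ℝ => C * (1 + y ^ 2)⁻¹) atBot (𝓝 0) := by
    rw [show (0:ℝ) = C * 0 by ring]
    refine Tendsto.const_mul C (tendsto_inv_atTop_zero.comp ?_)
    refine tendsto_atTop_add_const_left _ _ ?_
    simpa only [Function.comp_def, sq_abs] using
      (tendsto_pow_atTop (α := ℝ) two_ne_zero).comp tendsto_abs_atBot_atTop
  refine squeeze_zero_norm (fun y => ?_) hl
  have : 0 < 1 + y ^ 2 := by positivity
  rw [← div_eq_mul_inv, le_div_iff₀ this, Real.norm_eq_abs, mul_comm]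
  simpa using hC y

lemma sob (S : FlowData c T c₁ u) (k : ℕ) (t : ℝ) {θ : ℝ} (hθ : 0 < θ) (y : ℝ) :
    u k t y ^ 2 ≤ θ⁻¹ * (∫ y, u k t y ^ 2) + θ * ∫ y, u (k+1) t y ^ 2 :=
  sobolev (S.dy k t) (S.conty _ t) (S.isq k t) (S.isq (k+1) t) (S.lim k t) hθ y

lemma idens (S : FlowData c T c₁ u) (t : ℝ) : Integrable (dens u t) :=
  (((S.isq 0 t).add (S.isq 1 t)).add (S.isq 2 t)).add (S.isq 3 t)

lemma int_dens (S : FlowData c T c₁ u) (t : ℝ) : ∫ y, dens u t y =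
    (∫ y, u 0 t y ^ 2) + (∫ y, u 1 t y ^ 2) + (∫ y, u 2 t y ^ 2) + ∫ y, u 3 t y ^ 2 := by
  have i1 : Integrable (fun y => u 0 t y ^ 2 + u 1 t y ^ 2) := (S.isq 0 t).add (S.isq 1 t)
  have i2 : Integrable (fun y => u 0 t y ^ 2 + u 1 t y ^ 2 + u 2 t y ^ 2) := i1.add (S.isq 2 t)
  unfold dens
  rw [integral_add i2 (S.isq 3 t), integral_add i1 (S.isq 2 t), integral_add (S.isq 0 t) (S.isq 1 t)]

lemma sup_dens (S : FlowData c T c₁ u) {k : ℕ} (hk : k < 3) (t y : ℝ) : u k t y ^ 2 ≤ ∫ y, dens u t y := by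
  have := S.sob k t one_pos y
  rw [S.int_dens]
  have i : ∀ j, 0 ≤ ∫ y, u j t y ^ 2 := fun j => integral_nonneg fun _ => sq_nonneg _
  have := i 0; have := i 1; have := i 2; have := i 3
  interval_cases k <;> simp at * <;> linarith

lemma bd (S : FlowData c T c₁ u) {a b B : ℝ} (hB : ∀ t ∈ Icc a b, ∫ y, dens u t y ≤ B) {k : ℕ} (hk : k < 3) :
    Bd a b (u k) :=
  ⟨√B, Real.sqrt_nonneg _, fun t ht y => Real.abs_le_sqrt ((S.sup_dens hk t y).trans (hB t ht))⟩

lemma bdc (S : FlowData c T c₁ u) {a b : ℝ} : Bd a b (fun t _ => c t) :=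
  ⟨c₁, (abs_nonneg _).trans (S.cb 0), fun t _ _ => S.cb t⟩

lemma qd {a b : ℝ} {i j : ℕ} (hi : i < 4) (hj : j < 4) :
    QB a b (dens u) (fun t y => u i t y * u j t y) := by
  apply QB.prod <;> intro t y <;> unfold dens
  · interval_cases i <;> nlinarith [sq_nonneg (u 0 t y), sq_nonneg (u 1 t y), sq_nonneg (u 2 t y), sq_nonneg (u 3 t y)]
  · interval_cases j <;> nlinarith [sq_nonneg (u 0 t y), sq_nonneg (u 1 t y), sq_nonneg (u 2 t y), sq_nonneg (u 3 t y)]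

lemma dens_nonneg (t y : ℝ) : 0 ≤ dens u t y := by unfold dens; positivity

/-- Conservation of mass, on intervals with a uniform `H³` bound. -/
lemma cons0 (S : FlowData c T c₁ u) {a b B : ℝ} (ha : 0 ≤ a) (hab : a ≤ b) (hb : b ≤ T)
    (hB : ∀ t ∈ Icc a b, ∫ y, dens u t y ≤ B) :
    ∫ y, u 0 b y ^ 2 = ∫ y, u 0 a y ^ 2 := by
  have b0 := S.bd hB (k := 0) (by norm_num)
  have bc := S.bdc (a := a) (b := b)
  have cc := S.cc
  have u0 := S.contu 0
  have u1 := S.contu 1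
  have u2 := S.contu 2
  have u3 := S.contu 3
  have h := balance' (n := dens u) (B := B) hab (ρ := fun t y => u 0 t y ^ 2)
    (q := fun t y => 2 * u 0 t y * (c t * u 1 t y - u 3 t y - 3 * u 0 t y ^ 2 * u 1 t y))
    (F := fun t y => c t * (u 0 t y * u 0 t y) - 2 * (u 0 t y * u 2 t y) + u 1 t y * u 1 t y
      - 3 / 2 * u 0 t y ^ 2 * (u 0 t y * u 0 t y))
    (f := fun t y => c t * (u 0 t y * u 0 t y) - 2 * (u 0 t y * u 2 t y) + u 1 t y * u 1 t y
      - 3 / 2 * u 0 t y ^ 2 * (u 0 t y * u 0 t y))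
    (g := fun _ _ => 0) (r := fun _ _ => 0) (by fun_prop) (by fun_prop) (by fun_prop) (by fun_prop) (by fun_prop)
    (fun t ht y => ?_) (fun t y => ?_) (fun t y => ?_)
    (fun t _ => S.idens t) hB dens_nonneg ?_ ?_ QB.zero QB.zero
  · simp only [integral_zero, intervalIntegral.integral_zero] at h
    linarith
  · refine ((S.d0 t ⟨ha.trans_lt ht.1, ht.2.trans_le hb⟩ y).pow 2).congr_deriv ?_
    simp
  · have e0 := S.dy 0 t y
    have e1 := S.dy 1 t y
    have e2 := S.dy 2 t y
    refine (((((e0.mul e0).const_mul (c t)).sub ((e0.mul e2).const_mul 2)).add (e1.mul e1)).sub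
      (((e0.pow 2).const_mul (3/2)).mul (e0.mul e0))).congr_deriv ?_
    simp; ring
  · simpa using hasDerivAt_const y (0:ℝ)
  · simpa only [sq] using qd (u := u) (i := 0) (j := 0) (by norm_num) (by norm_num)
  · exact (((QB.mul bc (qd (by norm_num) (by norm_num))).sub (QB.mul (.const _) (qd (by norm_num) (by norm_num)))).add
      (qd (by norm_num) (by norm_num))).sub (QB.mul ((Bd.const _).mul (b0.pow 2)) (qd (by norm_num) (by norm_num)))

/-- Conservation of energy, on intervals with a uniform `H³` bound. -/
lemma cons1 (S : FlowData c T c₁ u) {a b B : ℝ} (ha : 0 ≤ a) (hab : a ≤ b) (hb : b ≤ T)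
    (hB : ∀ t ∈ Icc a b, ∫ y, dens u t y ≤ B) :
    ∫ y, (u 1 b y ^ 2 - 1 / 2 * u 0 b y ^ 4) = ∫ y, (u 1 a y ^ 2 - 1 / 2 * u 0 a y ^ 4) := by
  have b0 := S.bd hB (k := 0) (by norm_num)
  have bc := S.bdc (a := a) (b := b)
  have cc := S.cc
  have u0 := S.contu 0
  have u1 := S.contu 1
  have u2 := S.contu 2
  have u3 := S.contu 3
  have u4 := S.contu 4
  have Q : ∀ {i j : ℕ}, i < 4 → j < 4 → QB a b (dens u) (fun t y => u i t y * u j t y) := fun hi hj => qd hi hj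
  have h := balance' (n := dens u) (B := B) hab (ρ := fun t y => u 1 t y ^ 2 - 1 / 2 * u 0 t y ^ 4)
    (q := fun t y => 2 * u 1 t y * (c t * u 2 t y - u 4 t y - (3 * u 0 t y ^ 2 * u 2 t y + 6 * u 0 t y * u 1 t y ^ 2))
      - 2 * u 0 t y ^ 3 * (c t * u 1 t y - u 3 t y - 3 * u 0 t y ^ 2 * u 1 t y))
    (F := fun t y => c t * (u 1 t y * u 1 t y - 1 / 2 * u 0 t y ^ 2 * (u 0 t y * u 0 t y)) - 2 * (u 1 t y * u 3 t y)
      + u 2 t y * u 2 t y + 2 * u 0 t y ^ 2 * (u 0 t y * u 2 t y) - 6 * u 0 t y ^ 2 * (u 1 t y * u 1 t y)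
      + u 0 t y ^ 4 * (u 0 t y * u 0 t y))
    (f := fun t y => c t * (u 1 t y * u 1 t y - 1 / 2 * u 0 t y ^ 2 * (u 0 t y * u 0 t y)) - 2 * (u 1 t y * u 3 t y)
      + u 2 t y * u 2 t y + 2 * u 0 t y ^ 2 * (u 0 t y * u 2 t y) - 6 * u 0 t y ^ 2 * (u 1 t y * u 1 t y)
      + u 0 t y ^ 4 * (u 0 t y * u 0 t y))
    (g := fun _ _ => 0) (r := fun _ _ => 0) (by fun_prop) (by fun_prop) (by fun_prop) (by fun_prop) (by fun_prop)
    (fun t ht y => ?_) (fun t y => ?_) (fun t y => ?_)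
    (fun t _ => S.idens t) hB dens_nonneg ?_ ?_ QB.zero QB.zero
  · simp only [integral_zero, intervalIntegral.integral_zero] at h
    linarith
  · have hI : t ∈ Ioo 0 T := ⟨ha.trans_lt ht.1, ht.2.trans_le hb⟩
    refine (((S.d1 t hI y).pow 2).sub (((S.d0 t hI y).pow 4).const_mul (1/2))).congr_deriv ?_
    simp; ring
  · have e0 := S.dy 0 t y
    have e1 := S.dy 1 t y
    have e2 := S.dy 2 t y
    have e3 := S.dy 3 t y
    refine ((((((((e1.mul e1).sub (((e0.pow 2).const_mul (1/2)).mul (e0.mul e0))).const_mul (c t)).sub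
      ((e1.mul e3).const_mul 2)).add (e2.mul e2)).add (((e0.pow 2).const_mul 2).mul (e0.mul e2))).sub
      (((e0.pow 2).const_mul 6).mul (e1.mul e1))).add ((e0.pow 4).mul (e0.mul e0))).congr_deriv ?_
    simp; ring
  · simpa using hasDerivAt_const y (0:ℝ)
  · have := (Q (i := 1) (j := 1) (by norm_num) (by norm_num)).sub
      (QB.mul ((Bd.const (1/2)).mul (b0.pow 2)) (Q (i := 0) (j := 0) (by norm_num) (by norm_num)))
    convert this using 3
    ring
  · refine QB.add (QB.sub (QB.add (QB.add (QB.sub (QB.mul bc (QB.sub (Q ?_ ?_) (QB.mul ?_ (Q ?_ ?_))))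
      (QB.mul (.const _) (Q ?_ ?_))) (Q ?_ ?_)) (QB.mul ?_ (Q ?_ ?_))) (QB.mul ?_ (Q ?_ ?_)))
      (QB.mul (b0.pow 4) (Q ?_ ?_))
    all_goals first
      | norm_num; done
      | exact (Bd.const _).mul (b0.pow 2)

/-- The next conservation law of the mKdV hierarchy, at the level of `H²`. The flux contains
`-2 u_yy u_yyyy`, of which `-2 ∂_y (u_yy u_yyy)` is split off as the singular part. -/
lemma cons2 (S : FlowData c T c₁ u) {a b B : ℝ} (ha : 0 ≤ a) (hab : a ≤ b) (hb : b ≤ T)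
    (hB : ∀ t ∈ Icc a b, ∫ y, dens u t y ≤ B) :
    ∫ y, (u 2 b y ^ 2 - 5 * u 0 b y ^ 2 * u 1 b y ^ 2 + 1 / 2 * u 0 b y ^ 6) =
    ∫ y, (u 2 a y ^ 2 - 5 * u 0 a y ^ 2 * u 1 a y ^ 2 + 1 / 2 * u 0 a y ^ 6) := by
  have b0 := S.bd hB (k := 0) (by norm_num)
  have b1 := S.bd hB (k := 1) (by norm_num)
  have bc := S.bdc (a := a) (b := b)
  have cc := S.cc
  have u0 := S.contu 0
  have u1 := S.contu 1
  have u2 := S.contu 2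
  have u3 := S.contu 3
  have u4 := S.contu 4
  have u5 := S.contu 5
  have Q : ∀ {i j : ℕ}, i < 4 → j < 4 → QB a b (dens u) (fun t y => u i t y * u j t y) := fun hi hj => qd hi hj
  have h := balance' (n := dens u) (B := B) hab
    (ρ := fun t y => u 2 t y ^ 2 - 5 * u 0 t y ^ 2 * u 1 t y ^ 2 + 1 / 2 * u 0 t y ^ 6)
    (q := fun t y => 2 * u 2 t y * (c t * u 3 t y - u 5 t y - (3 * u 0 t y ^ 2 * u 3 t y
        + 18 * u 0 t y * u 1 t y * u 2 t y + 6 * u 1 t y ^ 3))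
      - 10 * u 0 t y ^ 2 * u 1 t y *
        (c t * u 2 t y - u 4 t y - (3 * u 0 t y ^ 2 * u 2 t y + 6 * u 0 t y * u 1 t y ^ 2))
      + (3 * u 0 t y ^ 5 - 10 * u 0 t y * u 1 t y ^ 2) * (c t * u 1 t y - u 3 t y - 3 * u 0 t y ^ 2 * u 1 t y))
    (F := fun t y => c t * (u 2 t y * u 2 t y - 5 * u 0 t y ^ 2 * (u 1 t y * u 1 t y)
        + 1 / 2 * u 0 t y ^ 4 * (u 0 t y * u 0 t y))
      + u 3 t y * u 3 t y + 10 * u 0 t y ^ 2 * (u 1 t y * u 3 t y) - 8 * u 0 t y ^ 2 * (u 2 t y * u 2 t y)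
      - 10 * (u 0 t y * u 1 t y) * (u 1 t y * u 2 t y) - 1 / 2 * u 1 t y ^ 2 * (u 1 t y * u 1 t y)
      - 3 * u 0 t y ^ 4 * (u 0 t y * u 2 t y) + 45 / 2 * u 0 t y ^ 4 * (u 1 t y * u 1 t y)
      - 9 / 8 * u 0 t y ^ 6 * (u 0 t y * u 0 t y) - 2 * (u 2 t y * u 4 t y))
    (f := fun t y => c t * (u 2 t y * u 2 t y - 5 * u 0 t y ^ 2 * (u 1 t y * u 1 t y)
        + 1 / 2 * u 0 t y ^ 4 * (u 0 t y * u 0 t y))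
      + 3 * (u 3 t y * u 3 t y) + 10 * u 0 t y ^ 2 * (u 1 t y * u 3 t y) - 8 * u 0 t y ^ 2 * (u 2 t y * u 2 t y)
      - 10 * (u 0 t y * u 1 t y) * (u 1 t y * u 2 t y) - 1 / 2 * u 1 t y ^ 2 * (u 1 t y * u 1 t y)
      - 3 * u 0 t y ^ 4 * (u 0 t y * u 2 t y) + 45 / 2 * u 0 t y ^ 4 * (u 1 t y * u 1 t y)
      - 9 / 8 * u 0 t y ^ 6 * (u 0 t y * u 0 t y))
    (g := fun t y => (-2) * (u 2 t y * u 3 t y)) (r := fun _ _ => 0) (by fun_prop) (by fun_prop) (by fun_prop) (by fun_prop) (by fun_prop)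
    (fun t ht y => ?_) (fun t y => ?_) (fun t y => ?_)
    (fun t _ => S.idens t) hB dens_nonneg ?_ ?_ ?_ QB.zero
  · simp only [integral_zero, intervalIntegral.integral_zero] at h
    linarith
  · have hI : t ∈ Ioo 0 T := ⟨ha.trans_lt ht.1, ht.2.trans_le hb⟩
    refine ((((S.d2 t hI y).pow 2).sub ((((S.d0 t hI y).pow 2).const_mul 5).mul ((S.d1 t hI y).pow 2))).add
      (((S.d0 t hI y).pow 6).const_mul (1/2))).congr_deriv ?_
    simp; ring
  · have e0 := S.dy 0 t y
    have e1 := S.dy 1 t y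
    have e2 := S.dy 2 t y
    have e3 := S.dy 3 t y
    have e4 := S.dy 4 t y
    refine ((((((((((((e2.mul e2).sub (((e0.pow 2).const_mul 5).mul (e1.mul e1))).add
      (((e0.pow 4).const_mul (1/2)).mul (e0.mul e0))).const_mul (c t)).add (e3.mul e3)).add
      (((e0.pow 2).const_mul 10).mul (e1.mul e3))).sub (((e0.pow 2).const_mul 8).mul (e2.mul e2))).sub
      (((e0.mul e1).const_mul 10).mul (e1.mul e2))).sub (((e1.pow 2).const_mul (1/2)).mul (e1.mul e1))).sub
      (((e0.pow 4).const_mul 3).mul (e0.mul e2))).add (((e0.pow 4).const_mul (45/2)).mul (e1.mul e1))).sub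
      (((e0.pow 6).const_mul (9/8)).mul (e0.mul e0))).sub ((e2.mul e4).const_mul 2) |>.congr_deriv ?_
    simp; ring
  · have e2 := S.dy 2 t y
    have e3 := S.dy 3 t y
    refine ((e2.mul e3).const_mul (-2)).congr_deriv ?_
    simp; ring
  · have := (QB.sub (Q (i := 2) (j := 2) (by norm_num) (by norm_num))
      (QB.mul ((Bd.const 5).mul (b0.pow 2)) (Q (i := 1) (j := 1) (by norm_num) (by norm_num)))).add
      (QB.mul ((Bd.const (1/2)).mul (b0.pow 4)) (Q (i := 0) (j := 0) (by norm_num) (by norm_num)))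
    convert this using 3
    ring
  · refine QB.sub (QB.add (QB.sub (QB.sub (QB.sub (QB.sub (QB.add (QB.add (QB.mul bc (QB.add (QB.sub (Q ?_ ?_)
      (QB.mul ?_ (Q ?_ ?_))) (QB.mul ?_ (Q ?_ ?_)))) (QB.mul ?_ (Q ?_ ?_))) (QB.mul ?_ (Q ?_ ?_))) (QB.mul ?_ (Q ?_ ?_)))
      (QB.mul ?_ (Q ?_ ?_))) (QB.mul ?_ (Q ?_ ?_))) (QB.mul ?_ (Q ?_ ?_))) (QB.mul ?_ (Q ?_ ?_))) (QB.mul ?_ (Q ?_ ?_))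
    all_goals first
      | norm_num; done
      | exact Bd.const _
      | exact (Bd.const _).mul (b0.pow _)
      | exact (Bd.const _).mul (b1.pow _)
      | exact (Bd.const _).mul (b0.mul b1)
  · exact QB.mul (.const _) (Q (by norm_num) (by norm_num))

end FlowData

/-! ### Difference quotients in `L²` -/

/-- Cauchy–Schwarz for the mean of `g'` over `[y, y + h]`. -/
lemma diffquot_pointwise {g' : ℝ → ℝ} (hc : Continuous g') {h : ℝ} (hh : 0 < h) (y : ℝ) :
    ((∫ s in (0:ℝ)..h, g' (y + s)) / h) ^ 2 ≤ h⁻¹ * ∫ s in (0:ℝ)..h, g' (y + s) ^ 2 := by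
  set x := ∫ s in (0:ℝ)..h, g' (y + s) with hx
  have c1 : Continuous fun s => g' (y + s) := by fun_prop
  have h0 : 0 ≤ ∫ s in (0:ℝ)..h, (g' (y + s) - x / h) ^ 2 :=
    intervalIntegral.integral_nonneg hh.le fun _ _ => sq_nonneg _
  have h1 : ∫ s in (0:ℝ)..h, (g' (y + s) - x / h) ^ 2 =
      (∫ s in (0:ℝ)..h, g' (y + s) ^ 2) - x ^ 2 / h := by
    have : ∀ s, (g' (y + s) - x / h) ^ 2 = g' (y + s) ^ 2 - (2 * (x / h)) * g' (y + s) + (x / h) ^ 2 := by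
      intro s; ring
    simp_rw [this]
    rw [intervalIntegral.integral_add (by apply Continuous.intervalIntegrable; fun_prop)
      (by apply Continuous.intervalIntegrable; fun_prop),
      intervalIntegral.integral_sub (by apply Continuous.intervalIntegrable; fun_prop)
      (by apply Continuous.intervalIntegrable; fun_prop), intervalIntegral.integral_const_mul,
      intervalIntegral.integral_const, ← hx]
    simp only [smul_eq_mul]
    field_simp
    ring
  rw [h1] at h0
  have : (x / h) ^ 2 = h⁻¹ * (x ^ 2 / h) := by field_simp
  rw [this]
  exact mul_le_mul_of_nonneg_left (by linarith) (by positivity)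

/-- Difference quotients are bounded in `L²` by the derivative. -/
lemma diffquot_le {g g' : ℝ → ℝ} (hd : ∀ y, HasDerivAt g (g' y) y) (hc : Continuous g')
    (i1 : Integrable (fun y => g' y ^ 2)) {h : ℝ} (hh : 0 < h) :
    ∫ y, ((g (y + h) - g y) / h) ^ 2 ≤ ∫ y, g' y ^ 2 := by
  have e : ∀ y, g (y + h) - g y = ∫ s in (0:ℝ)..h, g' (y + s) := by
    intro y
    rw [intervalIntegral.integral_comp_add_left (fun s => g' s) y, add_zero,
      intervalIntegral.integral_eq_sub_of_hasDerivAt (fun x _ => hd x) (hc.intervalIntegrable _ _)]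
  have iP : Integrable (Function.uncurry fun y s => g' (y + s) ^ 2) (volume.prod (volume.restrict (Ioc 0 h))) := by
    rw [integrable_prod_iff' (by unfold Function.uncurry; fun_prop)]
    constructor
    · exact Eventually.of_forall fun s => i1.comp_add_right s
    · have : ∀ s, ∫ y, ‖Function.uncurry (fun y s => g' (y + s) ^ 2) (y, s)‖ = ∫ y, g' y ^ 2 := by
        intro s
        simp only [Function.uncurry, norm_pow, Real.norm_eq_abs, sq_abs]
        exact integral_add_right_eq_self (fun y => g' y ^ 2) s
      simp_rw [this]
      exact integrable_const _
  have iI : Integrable (fun y => ∫ s in (0:ℝ)..h, g' (y + s) ^ 2) := by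
    simp_rw [intervalIntegral.integral_of_le hh.le]
    exact iP.integral_prod_left
  have sw : ∫ y, ∫ s in (0:ℝ)..h, g' (y + s) ^ 2 = h * ∫ y, g' y ^ 2 := by
    simp_rw [intervalIntegral.integral_of_le hh.le]
    rw [integral_integral_swap iP]
    have : ∀ s, ∫ y, g' (y + s) ^ 2 = ∫ y, g' y ^ 2 := fun s =>
      integral_add_right_eq_self (fun y => g' y ^ 2) s
    simp_rw [this]
    simp [hh.le]
  calc ∫ y, ((g (y + h) - g y) / h) ^ 2 ≤ ∫ y, h⁻¹ * ∫ s in (0:ℝ)..h, g' (y + s) ^ 2 := by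
        refine integral_mono_of_nonneg (Eventually.of_forall fun _ => sq_nonneg _) (iI.const_mul _)
          (Eventually.of_forall fun y => ?_)
        simp only [e]
        exact diffquot_pointwise hc hh y
    _ = ∫ y, g' y ^ 2 := by rw [integral_const_mul, sw]; field_simp

lemma diffquot_sup {g g' : ℝ → ℝ} (hd : ∀ y, HasDerivAt g (g' y) y) {M : ℝ}
    (hM : ∀ y, g' y ^ 2 ≤ M) {h : ℝ} (hh : 0 < h) (y : ℝ) : ((g (y + h) - g y) / h) ^ 2 ≤ M := by
  obtain ⟨ξ, -, hξ⟩ := exists_hasDerivAt_eq_slope g g' (by linarith : y < y + h)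
    (fun x _ => (hd x).continuousAt.continuousWithinAt) (fun x _ => hd x)
  rw [add_sub_cancel_left] at hξ
  rw [← hξ]; exact hM ξ

/-- Fatou's lemma for difference quotients. -/
lemma diffquot_fatou {g g' : ℝ → ℝ} (hd : ∀ y, HasDerivAt g (g' y) y)
    (i1 : Integrable (fun y => g' y ^ 2)) {M : ℝ} (hM0 : 0 ≤ M)
    (iz : ∀ h > 0, Integrable fun y => ((g (y + h) - g y) / h) ^ 2)
    (hM : ∀ h > 0, ∫ y, ((g (y + h) - g y) / h) ^ 2 ≤ M) : ∫ y, g' y ^ 2 ≤ M := by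
  have cg : Continuous g := continuous_iff_continuousAt.2 fun x => (hd x).continuousAt
  let h : ℕ → ℝ := fun n => 1 / ((n:ℝ) + 1)
  have hp : ∀ n, 0 < h n := fun n => Nat.one_div_pos_of_nat
  have hl : Tendsto h atTop (𝓝[≠] 0) := tendsto_nhdsWithin_iff.2
    ⟨tendsto_one_div_add_atTop_nhds_zero_nat, Eventually.of_forall fun n => (hp n).ne'⟩
  let z : ℕ → ℝ → ENNReal := fun n y => ENNReal.ofReal (((g (y + h n) - g y) / h n) ^ 2)
  have zm : ∀ n, Measurable (z n) := fun n => by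
    have : Continuous fun y => ((g (y + h n) - g y) / h n) ^ 2 := by fun_prop
    exact this.measurable.ennreal_ofReal
  have lim : ∀ y, Tendsto (fun n => z n y) atTop (𝓝 (ENNReal.ofReal (g' y ^ 2))) := by
    intro y
    refine (ENNReal.continuous_ofReal.tendsto _).comp (Tendsto.pow ?_ 2)
    have := ((hasDerivAt_iff_tendsto_slope_zero.1 (hd y)).comp hl)
    refine this.congr fun n => ?_
    simp [div_eq_inv_mul]
  have F := lintegral_liminf_le (μ := volume) (u := atTop) zm
  have e1 : ∫⁻ y, liminf (fun n => z n y) atTop = ENNReal.ofReal (∫ y, g' y ^ 2) := by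
    rw [ofReal_integral_eq_lintegral_ofReal i1 (Eventually.of_forall fun _ => sq_nonneg _)]
    exact lintegral_congr fun y => (lim y).liminf_eq
  have e2 : liminf (fun n => ∫⁻ y, z n y) atTop ≤ ENNReal.ofReal M := by
    refine (liminf_le_liminf (v := fun _ => ENNReal.ofReal M) (Eventually.of_forall fun n => ?_)).trans ?_
    · simp only [z]
      rw [← ofReal_integral_eq_lintegral_ofReal (iz _ (hp n)) (Eventually.of_forall fun _ => sq_nonneg _)]
      exact ENNReal.ofReal_le_ofReal (hM _ (hp n))
    · simp
  rw [e1] at F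
  exact (ENNReal.ofReal_le_ofReal_iff hM0).1 (F.trans e2)

/-! ### Balance law for difference quotients -/

/-- Spatial difference quotient of the `k`-th derivative. -/
def dq (u : ℕ → ℝ → ℝ → ℝ) (h : ℝ) (k : ℕ) (t y : ℝ) : ℝ := (u k t (y + h) - u k t y) / h

/-- Density dominating all quadratic expressions in `u`, its translate and its difference quotients. -/
def densh (u : ℕ → ℝ → ℝ → ℝ) (h : ℝ) (t y : ℝ) : ℝ :=
  (1 + 2 / h ^ 2) * (dens u t y + dens u t (y + h))

/-- The source term in the balance law for the square of the difference quotient of `∂_y² u`. -/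
def srch (u : ℕ → ℝ → ℝ → ℝ) (h : ℝ) (t y : ℝ) : ℝ :=
  (-30 * (u 0 t (y + h) * u 1 t (y + h))) * (dq u h 2 t y * dq u h 2 t y)
  + (-6 * (dq u h 0 t y * (u 0 t (y + h) + u 0 t y))) * (dq u h 2 t y * u 3 t y)
  + (-36 * (u 0 t (y + h) * dq u h 1 t y)) * (dq u h 2 t y * u 2 t y)
  + (-36 * (dq u h 0 t y * u 1 t y)) * (dq u h 2 t y * u 2 t y)
  + (-12 * (u 1 t (y + h) ^ 2 + u 1 t (y + h) * u 1 t y + u 1 t y ^ 2)) * (dq u h 2 t y * dq u h 1 t y)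

lemma sq_le_dens (u : ℕ → ℝ → ℝ → ℝ) {k : ℕ} (hk : k < 4) (t y : ℝ) : u k t y ^ 2 ≤ dens u t y := by
  unfold dens
  interval_cases k <;> nlinarith [sq_nonneg (u 0 t y), sq_nonneg (u 1 t y), sq_nonneg (u 2 t y), sq_nonneg (u 3 t y)]

namespace FlowData
variable {c : ℝ → ℝ} {T c₁ : ℝ} {u : ℕ → ℝ → ℝ → ℝ}

lemma cdq (S : FlowData c T c₁ u) (h : ℝ) (k : ℕ) : Continuous (Function.uncurry (dq u h k)) := by
  have := S.contu k
  unfold dq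
  unfold Function.uncurry
  fun_prop

lemma csh (S : FlowData c T c₁ u) (h : ℝ) (k : ℕ) : Continuous (fun p : ℝ × ℝ => u k p.1 (p.2 + h)) := by
  have := S.contu k
  fun_prop

lemma dsh (S : FlowData c T c₁ u) (h : ℝ) (k : ℕ) (t y : ℝ) :
    HasDerivAt (fun x => u k t (x + h)) (u (k + 1) t (y + h)) y := by
  simpa using (S.dy k t (y + h)).comp_add_const y h

lemma ddq (S : FlowData c T c₁ u) (h : ℝ) (k : ℕ) (t y : ℝ) :
    HasDerivAt (dq u h k t) (dq u h (k + 1) t y) y :=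
  ((S.dsh h k t y).sub (S.dy k t y)).div_const h

lemma densh_nonneg (h t y : ℝ) : 0 ≤ densh u h t y := by
  unfold densh
  have := dens_nonneg (u := u) t y
  have := dens_nonneg (u := u) t (y + h)
  positivity

lemma sq_le_densh {h : ℝ} {k : ℕ} (hk : k < 4) (t y : ℝ) : u k t y ^ 2 ≤ densh u h t y := by
  unfold densh
  have := dens_nonneg (u := u) t y
  have := dens_nonneg (u := u) t (y + h)
  have := sq_le_dens u hk t y
  have h2 : 0 ≤ 2 / h ^ 2 := by positivity
  nlinarith [mul_nonneg h2 (dens_nonneg (u := u) t y), mul_nonneg h2 (dens_nonneg (u := u) t (y+h))]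

lemma dq_sq_le_densh {h : ℝ} (hh : 0 < h) {k : ℕ} (hk : k < 4) (t y : ℝ) :
    dq u h k t y ^ 2 ≤ densh u h t y := by
  unfold densh dq
  have := dens_nonneg (u := u) t y
  have := dens_nonneg (u := u) t (y + h)
  have h1 := sq_le_dens u hk t y
  have h2 := sq_le_dens u hk t (y + h)
  rw [div_pow, add_mul, one_mul]
  have : (u k t (y + h) - u k t y) ^ 2 / h ^ 2 ≤ 2 / h ^ 2 * (dens u t y + dens u t (y + h)) := by
    rw [div_mul_eq_mul_div]
    gcongr
    nlinarith [sq_nonneg (u k t (y + h) + u k t y)]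
  linarith

lemma idensh (S : FlowData c T c₁ u) (h t : ℝ) : Integrable (densh u h t) :=
  ((S.idens t).add ((S.idens t).comp_add_right h)).const_mul _

lemma int_densh (S : FlowData c T c₁ u) (h t : ℝ) :
    ∫ y, densh u h t y = (1 + 2 / h ^ 2) * (2 * ∫ y, dens u t y) := by
  unfold densh
  rw [integral_const_mul, integral_add (S.idens t) ((S.idens t).comp_add_right h),
    integral_add_right_eq_self (fun y => dens u t y) h, two_mul]

/-- The `L²` norm of the difference quotient of `∂_y² u` satisfies a balance law in which no derivative
beyond the third occurs in the source, so that it is available under an `H³` bound alone. -/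
lemma dq_balance (S : FlowData c T c₁ u) {a b B : ℝ} (ha : 0 ≤ a) (hab : a ≤ b) (hb : b ≤ T)
    (hB : ∀ t ∈ Icc a b, ∫ y, dens u t y ≤ B) {h : ℝ} (hh : 0 < h) :
    (∫ y, dq u h 2 b y ^ 2) - ∫ y, dq u h 2 a y ^ 2 = ∫ t in a..b, ∫ y, srch u h t y := by
  have b0 := S.bd hB (k := 0) (by norm_num)
  have b1 := S.bd hB (k := 1) (by norm_num)
  have sh : ∀ {k : ℕ}, k < 3 → Bd a b (fun t y => u k t (y + h)) := fun {k} hk => by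
    obtain ⟨C, hC, h1⟩ := S.bd hB hk
    exact ⟨C, hC, fun t ht y => h1 t ht _⟩
  have a0 := sh (k := 0) (by norm_num)
  have a1 := sh (k := 1) (by norm_num)
  have bq : ∀ {k : ℕ}, k < 3 → Bd a b (dq u h k) := fun {k} hk => by
    obtain ⟨C, hC, h1⟩ := S.bd hB hk
    refine ⟨(C + C) / h, by positivity, fun t ht y => ?_⟩
    unfold dq
    rw [abs_div, abs_of_pos hh]
    gcongr
    exact (abs_sub _ _).trans (add_le_add (h1 t ht _) (h1 t ht _))
  have q0 := bq (k := 0) (by norm_num)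
  have q1 := bq (k := 1) (by norm_num)
  have bc := S.bdc (a := a) (b := b)
  have cc := S.cc
  have u0 := S.contu 0
  have u1 := S.contu 1
  have u2 := S.contu 2
  have u3 := S.contu 3
  have s0 := S.csh h 0
  have s1 := S.csh h 1
  have s2 := S.csh h 2
  have s3 := S.csh h 3
  have z0 := S.cdq h 0
  have z1 := S.cdq h 1
  have z2 := S.cdq h 2
  have z3 := S.cdq h 3
  have z5 := S.cdq h 5
  have Q : ∀ {i j : ℕ}, i < 4 → j < 4 → QB a b (densh u h) (fun t y => dq u h i t y * dq u h j t y) :=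
    fun hi hj => QB.prod (dq_sq_le_densh hh hi) (dq_sq_le_densh hh hj)
  have Q' : ∀ {i j : ℕ}, i < 4 → j < 4 → QB a b (densh u h) (fun t y => dq u h i t y * u j t y) :=
    fun hi hj => QB.prod (dq_sq_le_densh hh hi) (sq_le_densh hj)
  refine balance' (n := densh u h) (B := (1 + 2 / h ^ 2) * (2 * B)) hab
    (ρ := fun t y => dq u h 2 t y ^ 2)
    (q := fun t y => 2 * dq u h 2 t y * (c t * dq u h 3 t y - dq u h 5 t y
      - ((3 * u 0 t (y + h) ^ 2 * u 3 t (y + h) + 18 * u 0 t (y + h) * u 1 t (y + h) * u 2 t (y + h)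
      + 6 * u 1 t (y + h) ^ 3) - (3 * u 0 t y ^ 2 * u 3 t y + 18 * u 0 t y * u 1 t y * u 2 t y
      + 6 * u 1 t y ^ 3)) / h))
    (F := fun t y => c t * (dq u h 2 t y * dq u h 2 t y) + dq u h 3 t y * dq u h 3 t y
      - 3 * u 0 t (y + h) ^ 2 * (dq u h 2 t y * dq u h 2 t y) - 2 * (dq u h 2 t y * dq u h 4 t y))
    (f := fun t y => c t * (dq u h 2 t y * dq u h 2 t y) + 3 * (dq u h 3 t y * dq u h 3 t y)
      - 3 * u 0 t (y + h) ^ 2 * (dq u h 2 t y * dq u h 2 t y))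
    (g := fun t y => (-2) * (dq u h 2 t y * dq u h 3 t y)) (r := srch u h)
    (by fun_prop) (by fun_prop) (by fun_prop) (by fun_prop) (by unfold srch; fun_prop)
    (fun t ht y => ?_) (fun t y => ?_) (fun t y => ?_)
    (fun t _ => S.idensh h t) (fun t ht => ?_) (densh_nonneg h) ?_ ?_ ?_ ?_
  · have hI : t ∈ Ioo 0 T := ⟨ha.trans_lt ht.1, ht.2.trans_le hb⟩
    refine ((((S.d2 t hI (y + h)).sub (S.d2 t hI y)).div_const h).pow 2).congr_deriv ?_
    simp [dq]; left; ring
  · have e2 := S.ddq h 2 t y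
    have e3 := S.ddq h 3 t y
    have e4 := S.ddq h 4 t y
    have e0 := S.dsh h 0 t y
    refine (((((e2.mul e2).const_mul (c t)).add (e3.mul e3)).sub
      (((e0.pow 2).const_mul 3).mul (e2.mul e2))).sub ((e2.mul e4).const_mul 2)).congr_deriv ?_
    simp [dq, srch]
    field_simp
    ring
  · have e2 := S.ddq h 2 t y
    have e3 := S.ddq h 3 t y
    refine ((e2.mul e3).const_mul (-2)).congr_deriv ?_
    simp; ring
  · rw [S.int_densh]
    have := hB t ht
    gcongr
  · simpa only [sq] using Q (i := 2) (j := 2) (by norm_num) (by norm_num)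
  · exact QB.sub (QB.add (QB.mul bc (Q (by norm_num) (by norm_num))) (QB.mul (.const _) (Q (by norm_num) (by norm_num))))
      (QB.mul ((Bd.const _).mul (a0.pow 2)) (Q (by norm_num) (by norm_num)))
  · exact QB.mul (.const _) (Q (by norm_num) (by norm_num))
  · unfold srch
    refine QB.add (QB.add (QB.add (QB.add (QB.mul ?_ (Q ?_ ?_)) (QB.mul ?_ (Q' ?_ ?_)))
      (QB.mul ?_ (Q' ?_ ?_))) (QB.mul ?_ (Q' ?_ ?_))) (QB.mul ?_ (Q ?_ ?_))
    all_goals first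
      | norm_num; done
      | exact (Bd.const _).mul (a0.mul a1)
      | exact (Bd.const _).mul (q0.mul (a0.add b0))
      | exact (Bd.const _).mul (a0.mul q1)
      | exact (Bd.const _).mul (q0.mul b1)
      | exact (Bd.const _).mul (((a1.pow 2).add (a1.mul b1)).add (b1.pow 2))

end FlowData

/-! ### Propagation of the `H³` norm over short times -/

/-- Pointwise bound for the source `srch`: the factors at most quadratic in the first two orders are
bounded by `M`, leaving an expression quadratic in the highest orders. -/
lemma srch_alg {M Z a0 a1 b0 b1 b2 b3 d0 d1 z : ℝ} (hM : 0 ≤ M) (h1 : a0 ^ 2 ≤ M) (h2 : a1 ^ 2 ≤ M) (h3 : b0 ^ 2 ≤ M)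
    (h4 : b1 ^ 2 ≤ M) (h5 : d0 ^ 2 ≤ M) (h6 : d1 ^ 2 ≤ M + Z) :
    |(-30 * (a0 * a1)) * (z * z) + (-6 * (d0 * (a0 + b0))) * (z * b3) + (-36 * (a0 * d1)) * (z * b2)
      + (-36 * (d0 * b1)) * (z * b2) + (-12 * (a1 ^ 2 + a1 * b1 + b1 ^ 2)) * (z * d1)|
    ≤ 90 * M * z ^ 2 + 6 * M * b3 ^ 2 + (36 * M + 18 * Z) * b2 ^ 2 + 18 * M * d1 ^ 2 := by
  have P : ∀ {x y : ℝ}, x ^ 2 ≤ M → y ^ 2 ≤ M → |x * y| ≤ M := fun {x y} hx hy => by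
    rw [abs_le]; constructor <;> nlinarith [sq_nonneg (x + y), sq_nonneg (x - y)]
  have A : ∀ x y : ℝ, |x * y| ≤ (x ^ 2 + y ^ 2) / 2 := fun x y => by
    rw [abs_le]; constructor <;> nlinarith [sq_nonneg (x + y), sq_nonneg (x - y)]
  have t1 : |(-30 * (a0 * a1)) * (z * z)| ≤ 30 * M * z ^ 2 := by
    rw [abs_mul, abs_mul, abs_mul_self, abs_of_neg (by norm_num : (-30:ℝ) < 0), ← sq]
    have := P h1 h2
    nlinarith [sq_nonneg z]
  have t2 : |(-6 * (d0 * (a0 + b0))) * (z * b3)| ≤ 6 * M * (z ^ 2 + b3 ^ 2) := by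
    rw [abs_mul, abs_mul, abs_of_neg (by norm_num : (-6:ℝ) < 0)]
    have e : |d0 * (a0 + b0)| ≤ 2 * M := by
      rw [mul_add]; exact (abs_add_le _ _).trans (by linarith [P h5 h1, P h5 h3])
    have := mul_le_mul e (A z b3) (abs_nonneg _) (by linarith)
    linarith
  have t3 : |(-36 * (a0 * d1)) * (z * b2)| ≤ 18 * (M * z ^ 2 + (M + Z) * b2 ^ 2) := by
    have e : (-36 * (a0 * d1)) * (z * b2) = -36 * ((a0 * z) * (d1 * b2)) := by ring
    rw [e, abs_mul, abs_of_neg (by norm_num : (-36:ℝ) < 0)]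
    have := A (a0 * z) (d1 * b2)
    rw [mul_pow, mul_pow] at this
    nlinarith [mul_le_mul_of_nonneg_right h1 (sq_nonneg z), mul_le_mul_of_nonneg_right h6 (sq_nonneg b2)]
  have t4 : |(-36 * (d0 * b1)) * (z * b2)| ≤ 18 * M * (z ^ 2 + b2 ^ 2) := by
    rw [abs_mul, abs_mul, abs_of_neg (by norm_num : (-36:ℝ) < 0)]
    have := mul_le_mul (P h5 h4) (A z b2) (abs_nonneg _) hM
    linarith
  have t5 : |(-12 * (a1 ^ 2 + a1 * b1 + b1 ^ 2)) * (z * d1)| ≤ 18 * M * (z ^ 2 + d1 ^ 2) := by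
    rw [abs_mul, abs_mul, abs_of_neg (by norm_num : (-12:ℝ) < 0)]
    have e : |a1 ^ 2 + a1 * b1 + b1 ^ 2| ≤ 3 * M := by
      have := P h2 h4
      rw [abs_le] at this ⊢
      constructor <;> nlinarith [sq_nonneg a1, sq_nonneg b1]
    have := mul_le_mul e (A z d1) (abs_nonneg _) (by linarith)
    linarith
  refine (abs_add_le _ _).trans ?_
  refine (add_le_add_left ((abs_add_le _ _).trans (add_le_add_left ((abs_add_le _ _).trans
    (add_le_add_left (abs_add_le _ _) _)) _)) _).trans ?_
  linarith

namespace FlowData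
variable {c : ℝ → ℝ} {T c₁ : ℝ} {u : ℕ → ℝ → ℝ → ℝ}

lemma idq (S : FlowData c T c₁ u) {h : ℝ} (hh : 0 < h) {k : ℕ} (hk : k < 4) (t : ℝ) :
    Integrable fun y => dq u h k t y ^ 2 := by
  have := S.conty k t
  refine integrable_of_dom (C := 1) (n := densh u h t) (by unfold dq; fun_prop) (S.idensh h t) fun y => ?_
  rw [abs_of_nonneg (sq_nonneg _), one_mul]
  exact dq_sq_le_densh hh hk t y

lemma dq_le (S : FlowData c T c₁ u) {h : ℝ} (hh : 0 < h) (k : ℕ) (t : ℝ) :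
    ∫ y, dq u h k t y ^ 2 ≤ ∫ y, u (k+1) t y ^ 2 :=
  diffquot_le (S.dy k t) (S.conty (k+1) t) (S.isq (k+1) t) hh

/-- Uniformly in the step `h`, the source is at most affine in the squared `L²` norm of `∂_y³ u`. -/
lemma srch_le (S : FlowData c T c₁ u) {h : ℝ} (hh : 0 < h) {M t : ℝ}
    (hM : (∫ y, u 0 t y ^ 2) + (∫ y, u 1 t y ^ 2) + (∫ y, u 2 t y ^ 2) ≤ M) :
    |∫ y, srch u h t y| ≤ 114 * M * (M + ∫ y, u 3 t y ^ 2) := by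
  have i : ∀ j, 0 ≤ ∫ y, u j t y ^ 2 := fun j => integral_nonneg fun _ => sq_nonneg _
  set Z := ∫ y, u 3 t y ^ 2 with hZ
  have p0 := i 0
  have p1 := i 1
  have p2 := i 2
  have p3 : 0 ≤ Z := i 3
  have hM0 : 0 ≤ M := by linarith
  have s0 : ∀ y, u 0 t y ^ 2 ≤ M := fun y => by
    have := S.sob 0 t one_pos y; simp at this; linarith
  have s1 : ∀ y, u 1 t y ^ 2 ≤ M := fun y => by
    have := S.sob 1 t one_pos y; simp at this; linarith
  have s2 : ∀ y, u 2 t y ^ 2 ≤ M + Z := fun y => by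
    have := S.sob 2 t one_pos y; simp at this; linarith
  have hb : ∀ y, |srch u h t y| ≤ 90 * M * dq u h 2 t y ^ 2 + 6 * M * u 3 t y ^ 2
      + (36 * M + 18 * Z) * u 2 t y ^ 2 + 18 * M * dq u h 1 t y ^ 2 := fun y =>
    srch_alg hM0 (s0 _) (s1 _) (s0 _) (s1 _) (diffquot_sup (S.dy 0 t) s1 hh y) (diffquot_sup (S.dy 1 t) s2 hh y)
  have j1 := (S.idq hh (k := 2) (by norm_num) t).const_mul (90 * M)
  have j2 := (S.isq 3 t).const_mul (6 * M)
  have j3 := (S.isq 2 t).const_mul (36 * M + 18 * Z)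
  have j4 := (S.idq hh (k := 1) (by norm_num) t).const_mul (18 * M)
  have j12 : Integrable fun y => 90 * M * dq u h 2 t y ^ 2 + 6 * M * u 3 t y ^ 2 := j1.add j2
  have j123 : Integrable fun y => 90 * M * dq u h 2 t y ^ 2 + 6 * M * u 3 t y ^ 2
    + (36 * M + 18 * Z) * u 2 t y ^ 2 := j12.add j3
  have := norm_integral_le_of_norm_le (f := srch u h t) (j123.add j4) (Eventually.of_forall hb)
  refine this.trans ?_
  rw [integral_add' j123 j4, integral_add j12 j3, integral_add j1 j2, integral_const_mul, integral_const_mul,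
    integral_const_mul, integral_const_mul]
  have q1 := S.dq_le hh 2 t
  have q2 := S.dq_le hh 1 t
  simp only [Nat.reduceAdd, ← hZ] at q1 q2
  have e1 : 90 * M * (∫ y, dq u h 2 t y ^ 2) ≤ 90 * M * Z := by gcongr
  have e2 : 18 * M * (∫ y, dq u h 1 t y ^ 2) ≤ 18 * M * M := by gcongr; linarith
  have e3 : (36 * M + 18 * Z) * (∫ y, u 2 t y ^ 2) ≤ (36 * M + 18 * Z) * M := by gcongr; linarith
  rw [← hZ]
  nlinarith [mul_nonneg hM0 hM0]

/-- Change of the top order norm over an interval, in both time directions, in terms of an upper bound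
`W` for it on that interval; the step of the difference quotients tends to zero by Fatou's lemma. -/
lemma prop3_aux (S : FlowData c T c₁ u) {a b B M W : ℝ} (ha : 0 ≤ a) (hb : b ≤ T)
    (hB : ∀ t ∈ Icc a b, ∫ y, dens u t y ≤ B)
    (hM : ∀ t ∈ Icc a b, (∫ y, u 0 t y ^ 2) + (∫ y, u 1 t y ^ 2) + (∫ y, u 2 t y ^ 2) ≤ M)
    (hS : ∀ t ∈ Icc a b, M + (∫ y, u 3 t y ^ 2) ≤ W)
    {s t : ℝ} (hs : s ∈ Icc a b) (ht : t ∈ Icc a b) :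
    ∫ y, u 3 t y ^ 2 ≤ (∫ y, u 3 s y ^ 2) + 114 * M * W * (b - a) := by
  have i : ∀ j t, 0 ≤ ∫ y, u j t y ^ 2 := fun j t => integral_nonneg fun _ => sq_nonneg _
  have hM0 : 0 ≤ M := le_trans (by linarith [i 0 s, i 1 s, i 2 s]) (hM s hs)
  have hS0 : 0 ≤ W := le_trans (by linarith [i 3 s]) (hS s hs)
  have key : ∀ h > 0, ∀ s ∈ Icc a b, ∀ t ∈ Icc a b, s ≤ t →
      |(∫ y, dq u h 2 t y ^ 2) - ∫ y, dq u h 2 s y ^ 2| ≤ 114 * M * W * (b - a) := by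
    intro h hh s hs t ht hst
    rw [S.dq_balance (ha.trans hs.1) hst (ht.2.trans hb)
      (fun τ hτ => hB τ ⟨hs.1.trans hτ.1, hτ.2.trans ht.2⟩) hh]
    have : ∀ τ ∈ Set.uIoc s t, ‖∫ y, srch u h τ y‖ ≤ 114 * M * W := by
      intro τ hτ
      rw [uIoc_of_le hst] at hτ
      have hτ' : τ ∈ Icc a b := ⟨hs.1.trans hτ.1.le, hτ.2.trans ht.2⟩
      refine (S.srch_le hh (hM τ hτ')).trans ?_
      have := hS τ hτ'
      gcongr
    refine (intervalIntegral.norm_integral_le_of_norm_le_const this).trans ?_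
    rw [abs_of_nonneg (by linarith)]
    have := hs.1
    have := ht.2
    gcongr
  have key' : ∀ h > 0, ∫ y, dq u h 2 t y ^ 2 ≤ (∫ y, dq u h 2 s y ^ 2) + 114 * M * W * (b - a) := by
    intro h hh
    rcases le_total s t with hst | hst
    · have := (abs_le.1 (key h hh s hs t ht hst)).2; linarith
    · have := (abs_le.1 (key h hh t ht s hs hst)).1; linarith
  have hba : a ≤ b := hs.1.trans hs.2
  refine diffquot_fatou (S.dy 2 t) (S.isq 3 t) ?_ (fun h hh => S.idq hh (by norm_num) t) (fun h hh => ?_)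
  · have := i 3 s
    have : 0 ≤ b - a := by linarith
    positivity
  · exact (key' h hh).trans (by have := S.dq_le hh 2 s; simpa using this)

/-- On a short interval the top order norm at most doubles, in both time directions: the supremum of the
norm, finite by hypothesis, is absorbed. The bound `B` does not enter the estimate. -/
lemma prop3 (S : FlowData c T c₁ u) {a b B M : ℝ} (ha : 0 ≤ a) (hb : b ≤ T)
    (hB : ∀ t ∈ Icc a b, ∫ y, dens u t y ≤ B)
    (hM : ∀ t ∈ Icc a b, (∫ y, u 0 t y ^ 2) + (∫ y, u 1 t y ^ 2) + (∫ y, u 2 t y ^ 2) ≤ M)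
    (hL : 114 * M * (b - a) ≤ 1 / 2)
    {s t : ℝ} (hs : s ∈ Icc a b) (ht : t ∈ Icc a b) :
    M + (∫ y, u 3 t y ^ 2) ≤ 2 * (M + ∫ y, u 3 s y ^ 2) := by
  have i : ∀ j t, 0 ≤ ∫ y, u j t y ^ 2 := fun j t => integral_nonneg fun _ => sq_nonneg _
  set P : Set ℝ := (fun t => M + ∫ y, u 3 t y ^ 2) '' Icc a b with hP
  have bdd : BddAbove P := by
    refine ⟨M + B, ?_⟩
    rintro _ ⟨τ, hτ, rfl⟩
    have := hB τ hτ
    rw [S.int_dens] at this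
    have := i 0 τ; have := i 1 τ; have := i 2 τ
    simp only
    linarith
  have le : ∀ τ ∈ Icc a b, M + (∫ y, u 3 τ y ^ 2) ≤ sSup P := fun τ hτ => le_csSup bdd ⟨τ, hτ, rfl⟩
  have h1 : sSup P ≤ (M + ∫ y, u 3 s y ^ 2) + sSup P / 2 := by
    refine csSup_le ⟨_, ⟨s, hs, rfl⟩⟩ ?_
    rintro _ ⟨τ, hτ, rfl⟩
    have := S.prop3_aux ha hb hB hM le hs hτ
    have hM0 : 0 ≤ M := le_trans (by linarith [i 0 s, i 1 s, i 2 s]) (hM s hs)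
    have hS0 : 0 ≤ sSup P := le_trans (by linarith [i 3 s]) (le s hs)
    simp only
    nlinarith
  have := le t ht
  linarith

end FlowData

/-! ### Propagation of the `H³` norm over long times -/

/-- Bound for the `H¹` seminorm in terms of an initial `H³` bound. -/
def lowX (n : ℝ) : ℝ := 2 * n + (1 + n) * n ^ 2

/-- Bound for the `H²` norm in terms of an initial `H³` bound. -/
def lowM (n : ℝ) : ℝ := n + lowX n + (n + n ^ 3 + 5 * (n + lowX n) * lowX n)

namespace FlowData
variable {c : ℝ → ℝ} {T c₁ : ℝ} {u : ℕ → ℝ → ℝ → ℝ}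

lemma sup01 (S : FlowData c T c₁ u) (t y : ℝ) : u 0 t y ^ 2 ≤ (∫ y, u 0 t y ^ 2) + ∫ y, u 1 t y ^ 2 := by
  simpa using S.sob 0 t one_pos y

lemma i_mul (S : FlowData c T c₁ u) (k : ℕ) (t : ℝ) {p : ℝ → ℝ} (hp : Continuous p) {K : ℝ}
    (hK : ∀ y, |p y| ≤ K) : Integrable fun y => p y * u k t y ^ 2 := by
  have := S.conty k t
  refine integrable_of_dom (C := K) (by fun_prop) (S.isq k t) fun y => ?_
  rw [abs_mul, abs_of_nonneg (sq_nonneg (u k t y))]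
  exact mul_le_mul_of_nonneg_right (hK y) (sq_nonneg _)

lemma int_mul_le (S : FlowData c T c₁ u) (k : ℕ) (t : ℝ) {p : ℝ → ℝ} (hp : Continuous p) {K : ℝ}
    (h0 : ∀ y, 0 ≤ p y) (hK : ∀ y, p y ≤ K) : ∫ y, p y * u k t y ^ 2 ≤ K * ∫ y, u k t y ^ 2 := by
  rw [← integral_const_mul]
  refine integral_mono (S.i_mul k t hp (K := K) fun y => ?_) ((S.isq k t).const_mul K) fun y => ?_
  · rw [abs_of_nonneg (h0 y)]; exact hK y
  · exact mul_le_mul_of_nonneg_right (hK y) (sq_nonneg _)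

/-- The three conservation laws and the Sobolev inequality bound the `H²` norm on the whole interval by
a function of the `H³` norm at one time. -/
lemma lower (S : FlowData c T c₁ u) {a b B n : ℝ} (ha : 0 ≤ a) (hb : b ≤ T)
    (hB : ∀ t ∈ Icc a b, ∫ y, dens u t y ≤ B) {s t : ℝ} (hs : s ∈ Icc a b) (ht : t ∈ Icc a b)
    (hn : ∫ y, dens u s y ≤ n) :
    (∫ y, u 0 t y ^ 2) + (∫ y, u 1 t y ^ 2) + (∫ y, u 2 t y ^ 2) ≤ lowM n := by
  have i : ∀ j t, 0 ≤ ∫ y, u j t y ^ 2 := fun j t => integral_nonneg fun _ => sq_nonneg _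
  have c0 : ∫ y, u 0 t y ^ 2 = ∫ y, u 0 s y ^ 2 := by
    rcases le_total s t with h | h
    · exact S.cons0 (ha.trans hs.1) h (ht.2.trans hb) fun τ hτ => hB τ ⟨hs.1.trans hτ.1, hτ.2.trans ht.2⟩
    · exact (S.cons0 (ha.trans ht.1) h (hs.2.trans hb) fun τ hτ => hB τ ⟨ht.1.trans hτ.1, hτ.2.trans hs.2⟩).symm
  have c1 : ∫ y, (u 1 t y ^ 2 - 1 / 2 * u 0 t y ^ 4) = ∫ y, (u 1 s y ^ 2 - 1 / 2 * u 0 s y ^ 4) := by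
    rcases le_total s t with h | h
    · exact S.cons1 (ha.trans hs.1) h (ht.2.trans hb) fun τ hτ => hB τ ⟨hs.1.trans hτ.1, hτ.2.trans ht.2⟩
    · exact (S.cons1 (ha.trans ht.1) h (hs.2.trans hb) fun τ hτ => hB τ ⟨ht.1.trans hτ.1, hτ.2.trans hs.2⟩).symm
  have c2 : ∫ y, (u 2 t y ^ 2 - 5 * u 0 t y ^ 2 * u 1 t y ^ 2 + 1 / 2 * u 0 t y ^ 6)
      = ∫ y, (u 2 s y ^ 2 - 5 * u 0 s y ^ 2 * u 1 s y ^ 2 + 1 / 2 * u 0 s y ^ 6) := by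
    rcases le_total s t with h | h
    · exact S.cons2 (ha.trans hs.1) h (ht.2.trans hb) fun τ hτ => hB τ ⟨hs.1.trans hτ.1, hτ.2.trans ht.2⟩
    · exact (S.cons2 (ha.trans ht.1) h (hs.2.trans hb) fun τ hτ => hB τ ⟨ht.1.trans hτ.1, hτ.2.trans hs.2⟩).symm
  rw [S.int_dens] at hn
  have p0 := i 0 s
  have p1 := i 1 s
  have p2 := i 2 s
  have p3 := i 3 s
  have q0 := i 0 t
  have q1 := i 1 t
  have q2 := i 2 t
  have n0 : 0 ≤ n := by linarith
  have cu : ∀ k τ, Continuous (u k τ) := S.conty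
  have cs0 := cu 0 t
  have cs1 := cu 0 s
  have ab : ∀ τ y, |u 0 τ y ^ 2| ≤ (∫ y, u 0 τ y ^ 2) + ∫ y, u 1 τ y ^ 2 := fun τ y => by
    rw [abs_of_nonneg (sq_nonneg _)]; exact S.sup01 τ y
  -- the quartic term
  have I4 : ∀ τ, Integrable fun y => 1 / 2 * u 0 τ y ^ 4 := fun τ => by
    have := (S.i_mul 0 τ (p := fun y => u 0 τ y ^ 2) ((cu 0 τ).pow 2) (ab τ)).const_mul (1 / 2)
    refine this.congr (Eventually.of_forall fun y => ?_)
    simp only; ring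
  have E1 : ∀ τ, ∫ y, (u 1 τ y ^ 2 - 1 / 2 * u 0 τ y ^ 4)
      = (∫ y, u 1 τ y ^ 2) - 1 / 2 * ∫ y, u 0 τ y ^ 2 * u 0 τ y ^ 2 := fun τ => by
    rw [integral_sub (S.isq 1 τ) (I4 τ), integral_const_mul]
    congr 2
    exact integral_congr_ae (Eventually.of_forall fun y => by simp only; ring)
  have s0 : ∀ y, u 0 t y ^ 2 ≤ (1 + n) * n + (1 + n)⁻¹ * ∫ y, u 1 t y ^ 2 := fun y => by
    have := S.sob 0 t (θ := (1 + n)⁻¹) (by positivity) y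
    rw [inv_inv] at this
    refine this.trans (add_le_add_left ?_ _)
    rw [c0]; gcongr; linarith
  have k4 := S.int_mul_le 0 t (p := fun y => u 0 t y ^ 2) (by fun_prop) (fun y => sq_nonneg _) s0
  have k4' : 0 ≤ ∫ y, u 0 s y ^ 2 * u 0 s y ^ 2 := integral_nonneg fun y => by positivity
  have hX : ∫ y, u 1 t y ^ 2 ≤ lowX n := by
    rw [E1, E1] at c1
    have e : ((1 + n) * n + (1 + n)⁻¹ * ∫ y, u 1 t y ^ 2) * (∫ y, u 0 t y ^ 2)
        ≤ (1 + n) * n ^ 2 + ∫ y, u 1 t y ^ 2 := by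
      have h1 : (1 + n) * n * (∫ y, u 0 t y ^ 2) ≤ (1 + n) * n * n := by
        rw [c0]; gcongr; linarith
      have h2 : (1 + n)⁻¹ * (∫ y, u 0 t y ^ 2) ≤ 1 := by
        rw [inv_mul_le_iff₀ (by positivity), c0]; linarith
      have h3 := mul_le_mul_of_nonneg_right h2 q1
      nlinarith
    unfold lowX
    linarith
  -- the sextic terms
  have I22 : ∀ τ, Integrable fun y => 5 * u 0 τ y ^ 2 * u 1 τ y ^ 2 := fun τ => by
    have := (S.i_mul 1 τ (p := fun y => u 0 τ y ^ 2) ((cu 0 τ).pow 2) (ab τ)).const_mul 5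
    refine this.congr (Eventually.of_forall fun y => ?_)
    simp only; ring
  have ab4 : ∀ τ y, |u 0 τ y ^ 4| ≤ ((∫ y, u 0 τ y ^ 2) + ∫ y, u 1 τ y ^ 2) ^ 2 := fun τ y => by
    have := pow_le_pow_left₀ (abs_nonneg _) (ab τ y) 2
    rw [sq_abs, ← pow_mul] at this
    rw [abs_of_nonneg (by positivity)]; exact this
  have I6 : ∀ τ, Integrable fun y => 1 / 2 * u 0 τ y ^ 6 := fun τ => by
    have := (S.i_mul 0 τ (p := fun y => u 0 τ y ^ 4) ((cu 0 τ).pow 4) (ab4 τ)).const_mul (1 / 2)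
    refine this.congr (Eventually.of_forall fun y => ?_)
    simp only; ring
  have E2 : ∀ τ, ∫ y, (u 2 τ y ^ 2 - 5 * u 0 τ y ^ 2 * u 1 τ y ^ 2 + 1 / 2 * u 0 τ y ^ 6)
      = (∫ y, u 2 τ y ^ 2) - 5 * (∫ y, u 0 τ y ^ 2 * u 1 τ y ^ 2)
        + 1 / 2 * ∫ y, u 0 τ y ^ 4 * u 0 τ y ^ 2 := fun τ => by
    have j1 : Integrable fun y => u 2 τ y ^ 2 - 5 * u 0 τ y ^ 2 * u 1 τ y ^ 2 := (S.isq 2 τ).sub (I22 τ)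
    rw [integral_add j1 (I6 τ), integral_sub (S.isq 2 τ) (I22 τ), integral_const_mul]
    simp_rw [mul_assoc (5:ℝ)]
    rw [integral_const_mul]
    congr 2
    exact integral_congr_ae (Eventually.of_forall fun y => by simp only; ring)
  rw [E2, E2] at c2
  have k22 := S.int_mul_le 1 t (p := fun y => u 0 t y ^ 2) (by fun_prop) (fun y => sq_nonneg _) (S.sup01 t)
  have k6 := S.int_mul_le 0 s (p := fun y => u 0 s y ^ 4) (by fun_prop) (fun y => by positivity) (fun y => (le_abs_self _).trans (ab4 s y))
  have k22' : 0 ≤ ∫ y, u 0 s y ^ 2 * u 1 s y ^ 2 := integral_nonneg fun y => by positivity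
  have k6' : 0 ≤ ∫ y, u 0 t y ^ 4 * u 0 t y ^ 2 := integral_nonneg fun y => by positivity
  have X0 : 0 ≤ lowX n := q1.trans hX
  have m1 : ((∫ y, u 0 t y ^ 2) + ∫ y, u 1 t y ^ 2) * (∫ y, u 1 t y ^ 2) ≤ (n + lowX n) * lowX n := by
    gcongr; rw [c0]; linarith
  have m2 : ((∫ y, u 0 s y ^ 2) + ∫ y, u 1 s y ^ 2) ^ 2 * (∫ y, u 0 s y ^ 2) ≤ n ^ 2 * n := by
    gcongr <;> linarith
  unfold lowM
  nlinarith [pow_nonneg n0 3]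

/-- Iteration of `prop3` along `k + 1` short steps from `s` to `t`. -/
lemma prop3_iter (S : FlowData c T c₁ u) {a b B M : ℝ} (ha : 0 ≤ a) (hb : b ≤ T)
    (hB : ∀ t ∈ Icc a b, ∫ y, dens u t y ≤ B)
    (hM : ∀ t ∈ Icc a b, (∫ y, u 0 t y ^ 2) + (∫ y, u 1 t y ^ 2) + (∫ y, u 2 t y ^ 2) ≤ M) (k : ℕ) :
    ∀ s ∈ Icc a b, ∀ t ∈ Icc a b, 114 * M * |t - s| ≤ k / 2 →
    M + (∫ y, u 3 t y ^ 2) ≤ 2 ^ (k + 1) * (M + ∫ y, u 3 s y ^ 2) := by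
  have short : ∀ s ∈ Icc a b, ∀ t ∈ Icc a b, 114 * M * |t - s| ≤ 1 / 2 →
      M + (∫ y, u 3 t y ^ 2) ≤ 2 * (M + ∫ y, u 3 s y ^ 2) := by
    intro s hs t ht h
    have sub : ∀ τ ∈ Icc (min s t) (max s t), τ ∈ Icc a b := fun τ hτ =>
      ⟨(le_min hs.1 ht.1).trans hτ.1, hτ.2.trans (max_le hs.2 ht.2)⟩
    refine S.prop3 (ha.trans (le_min hs.1 ht.1)) ((max_le hs.2 ht.2).trans hb) (fun τ hτ => hB τ (sub τ hτ))
      (fun τ hτ => hM τ (sub τ hτ)) ?_ ⟨min_le_left _ _, le_max_left _ _⟩ ⟨min_le_right _ _, le_max_right _ _⟩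
    rwa [max_sub_min_eq_abs]
  induction k with
  | zero =>
    intro s hs t ht h
    have := short s hs t ht (by rw [Nat.cast_zero] at h; linarith)
    simpa using this
  | succ k ih =>
    intro s hs t ht h
    have hk : (0:ℝ) < k + 1 := by positivity
    set θ : ℝ := k / (k + 1) with hθ
    have h0 : 0 ≤ θ := by positivity
    have h1 : 0 ≤ 1 - θ := by rw [hθ, sub_nonneg, div_le_one hk]; linarith
    set r := (1 - θ) * s + θ * t with hr
    have hrI : r ∈ Icc a b := (convex_Icc a b) hs ht h1 h0 (by ring)
    have e1 : |r - s| = θ * |t - s| := by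
      rw [← abs_of_nonneg h0, ← abs_mul, hr]; congr 1; ring
    have e2 : |t - r| = (1 - θ) * |t - s| := by
      rw [← abs_of_nonneg h1, ← abs_mul, hr]; congr 1; ring
    have e3 : 1 - θ = 1 / (k + 1) := by rw [hθ]; field_simp; ring
    push_cast at h
    have f1 : 114 * M * |r - s| ≤ k / 2 := by
      rw [e1]
      calc 114 * M * (θ * |t - s|) = θ * (114 * M * |t - s|) := by ring
        _ ≤ θ * ((k + 1) / 2) := by gcongr
        _ = k / 2 := by rw [hθ]; field_simp
    have f2 : 114 * M * |t - r| ≤ 1 / 2 := by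
      rw [e2]
      calc 114 * M * ((1 - θ) * |t - s|) = (1 - θ) * (114 * M * |t - s|) := by ring
        _ ≤ (1 - θ) * ((k + 1) / 2) := by gcongr
        _ = 1 / 2 := by rw [e3]; field_simp
    have g1 := ih s hs r hrI f1
    have g2 := short r hrI t ht f2
    rw [pow_succ]
    linarith

/-- If the `H³` norm is bounded on an interval, it is controlled there by its value at any
single point, with a bound that does not involve the a priori one. -/
lemma prop_global (S : FlowData c T c₁ u) (n : ℝ) : ∃ K, ∀ a b B, 0 ≤ a → b ≤ T →
    (∀ t ∈ Icc a b, ∫ y, dens u t y ≤ B) → ∀ s ∈ Icc a b, ∀ t ∈ Icc a b,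
    ∫ y, dens u s y ≤ n → ∫ y, dens u t y ≤ K := by
  obtain ⟨k, hk⟩ := exists_nat_ge (228 * lowM n * T)
  refine ⟨lowM n + 2 ^ (k + 1) * (lowM n + n), fun a b B ha hb hB s hs t ht hn => ?_⟩
  have i : ∀ j t, 0 ≤ ∫ y, u j t y ^ 2 := fun j t => integral_nonneg fun _ => sq_nonneg _
  have h2 := S.lower ha hb hB hs ht hn
  have hM0 : 0 ≤ lowM n := le_trans (by linarith [i 0 t, i 1 t, i 2 t]) h2
  have h1 := S.prop3_iter ha hb hB (fun τ hτ => S.lower ha hb hB hs hτ hn) k s hs t ht (by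
    have : |t - s| ≤ T := by
      rw [abs_le]; constructor <;> linarith [hs.1, hs.2, ht.1, ht.2]
    have := mul_le_mul_of_nonneg_left this hM0
    linarith)
  have := i 0 s; have := i 1 s; have := i 2 s
  rw [S.int_dens] at hn ⊢
  have : (2:ℝ) ^ (k + 1) * (lowM n + ∫ y, u 3 s y ^ 2) ≤ 2 ^ (k + 1) * (lowM n + n) := by
    gcongr; linarith
  linarith

end FlowData

/-! ### The uniform `H³` bound -/

lemma bdd_of_locally {N : ℝ → ℝ} {a b : ℝ}
    (h : ∀ t ∈ Icc a b, ∃ B, ∃ ε > 0, ∀ τ ∈ Icc a b, |τ - t| < ε → N τ ≤ B) :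
    ∃ B, ∀ t ∈ Icc a b, N t ≤ B := by
  refine isCompact_Icc.induction_on (p := fun s => ∃ B, ∀ t ∈ s, N t ≤ B) ⟨0, by simp⟩ ?_ ?_ ?_
  · rintro s t hst ⟨B, hB⟩
    exact ⟨B, fun x hx => hB x (hst hx)⟩
  · rintro s t ⟨B, hB⟩ ⟨D, hD⟩
    exact ⟨max B D, fun x hx => hx.elim (fun h => (hB x h).trans (le_max_left _ _))
      (fun h => (hD x h).trans (le_max_right _ _))⟩
  · intro x hx
    obtain ⟨B, ε, hε, h⟩ := h x hx
    refine ⟨Icc a b ∩ Metric.ball x ε, ?_, B, fun t ht => h t ht.1 ht.2⟩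
    exact inter_mem self_mem_nhdsWithin (mem_nhdsWithin_of_mem_nhds (Metric.ball_mem_nhds x hε))

/-- A lower semicontinuous function on an interval which propagates bounds, in both directions, on every
subinterval where it is a priori bounded, is bounded. Otherwise the closed set `F` of times near which
it is unbounded is nonempty, and by Baire's theorem the function is at most `n` on a relatively open
piece of `F`. A nearby time `τ ∉ F` with a large value is joined to its nearest point of `F` on that
piece by an interval on which the function is bounded, and propagation from that point contradicts
the large value at `τ`. -/
lemma baire_bound {N : ℝ → ℝ} {T : ℝ} (hcl : ∀ M, IsClosed {t | N t ≤ M})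
    (hprop : ∀ n, ∃ K, ∀ a b B, 0 ≤ a → b ≤ T → (∀ t ∈ Icc a b, N t ≤ B) →
      ∀ s ∈ Icc a b, ∀ t ∈ Icc a b, N s ≤ n → N t ≤ K) :
    ∃ B, ∀ t ∈ Icc 0 T, N t ≤ B := by
  -- the set of times near which `N` is unbounded
  set F : Set ℝ := {t | t ∈ Icc 0 T ∧ ∀ B, ∀ ε > 0, ∃ τ ∈ Icc 0 T, |τ - t| < ε ∧ B < N τ} with hF
  have Fcl : IsClosed F := by
    rw [← isSeqClosed_iff_isClosed]
    intro x p hx hp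
    refine ⟨isClosed_Icc.mem_of_tendsto hp (Eventually.of_forall fun n => (hx n).1), fun B ε hε => ?_⟩
    obtain ⟨n, hn⟩ := (Metric.tendsto_atTop.1 hp (ε / 2) (by positivity))
    obtain ⟨τ, hτ, h1, h2⟩ := (hx n).2 B (ε / 2) (by positivity)
    refine ⟨τ, hτ, ?_, h2⟩
    have := hn n le_rfl
    rw [Real.dist_eq] at this
    calc |τ - p| ≤ |τ - x n| + |x n - p| := abs_sub_le _ _ _
      _ < ε := by linarith
  have nF : ∀ t ∈ Icc 0 T, t ∉ F → ∃ B, ∃ ε > 0, ∀ τ ∈ Icc 0 T, |τ - t| < ε → N τ ≤ B := by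
    intro t ht h
    have h' : ¬ ∀ B, ∀ ε > 0, ∃ τ ∈ Icc 0 T, |τ - t| < ε ∧ B < N τ := fun h' => h ⟨ht, h'⟩
    push Not at h'
    exact h'
  have bd : ∀ a b, 0 ≤ a → b ≤ T → (∀ t ∈ Icc a b, t ∉ F) → ∃ B, ∀ t ∈ Icc a b, N t ≤ B := by
    intro a b ha hb h
    have sub : ∀ τ ∈ Icc a b, τ ∈ Icc 0 T := fun τ hτ => ⟨ha.trans hτ.1, hτ.2.trans hb⟩
    refine bdd_of_locally fun t ht => ?_
    obtain ⟨B, ε, hε, h3⟩ := nF t (sub t ht) (h t ht)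
    exact ⟨B, ε, hε, fun τ hτ => h3 τ (sub τ hτ)⟩
  rcases F.eq_empty_or_nonempty with hE | hne
  · exact bd 0 T le_rfl le_rfl fun t _ ht => by rw [hE] at ht; exact ht
  exfalso
  have : Nonempty F := hne.to_subtype
  have : CompleteSpace F := Fcl.completeSpace_coe
  obtain ⟨n, ⟨t0, ht0F⟩, hint⟩ := nonempty_interior_of_iUnion_of_closed
    (f := fun n : ℕ => {x : F | N x ≤ n}) (fun n => (hcl n).preimage continuous_subtype_val) (by
      refine eq_univ_of_forall fun x => mem_iUnion.2 ?_
      exact exists_nat_ge (N x))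
  rw [mem_interior_iff_mem_nhds, Metric.mem_nhds_iff] at hint
  obtain ⟨ε, hε, hball⟩ := hint
  have hnear : ∀ x ∈ F, |x - t0| < ε → N x ≤ n := fun x hx hd =>
    hball (show (⟨x, hx⟩ : F) ∈ Metric.ball ⟨t0, ht0F⟩ ε from hd)
  obtain ⟨K, hK⟩ := hprop n
  obtain ⟨τ, hτ, hd, hbig⟩ := ht0F.2 (max n K) ε hε
  have hτF : τ ∉ F := fun h => absurd ((hnear τ h hd).trans (le_max_left _ K)) (not_le.2 hbig)
  have hne' : τ ≠ t0 := fun h => hτF (h ▸ ht0F)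
  obtain ⟨D, hD⟩ := hprop (N τ)
  refine absurd (?_ : N τ ≤ K) (not_le.2 ((le_max_right _ _).trans_lt hbig))
  rcases lt_or_gt_of_ne hne' with hlt | hlt
  · -- `τ < t0`: the first point `b` of `F` after `τ`
    have hc : IsCompact (F ∩ Icc τ t0) := isCompact_Icc.inter_left Fcl
    obtain ⟨b, hb, hmin⟩ := hc.exists_isLeast ⟨t0, ht0F, hlt.le, le_rfl⟩
    have hτb : τ < b := lt_of_le_of_ne hb.2.1 fun h => hτF (h ▸ hb.1)
    have free : ∀ x, τ ≤ x → x < b → x ∉ F := fun x h1 h2 h3 =>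
      absurd (hmin ⟨h3, h1, h2.le.trans hb.2.2⟩) (not_le.2 h2)
    have hbT := hb.1.1
    have h1 : ∀ x, τ ≤ x → x < b → N x ≤ D := by
      intro x h1 h2
      obtain ⟨B, hB⟩ := bd τ x hτ.1 (h2.le.trans hbT.2) fun t ht => free t ht.1 (ht.2.trans_lt h2)
      exact hD τ x B hτ.1 (h2.le.trans hbT.2) hB τ ⟨le_rfl, h1⟩ x ⟨h1, le_rfl⟩ le_rfl
    have hNb : N b ≤ n := hnear b hb.1 (by
      rw [abs_lt] at hd ⊢; constructor <;> linarith [hb.2.2])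
    refine hK τ b (max D n) hτ.1 hbT.2 (fun x hx => ?_) b ⟨hτb.le, le_rfl⟩ τ ⟨le_rfl, hτb.le⟩ hNb
    rcases lt_or_eq_of_le hx.2 with h | h
    · exact (h1 x hx.1 h).trans (le_max_left _ _)
    · rw [h]; exact hNb.trans (le_max_right _ _)
  · -- `t0 < τ`: the last point `b` of `F` before `τ`
    have hc : IsCompact (F ∩ Icc t0 τ) := isCompact_Icc.inter_left Fcl
    obtain ⟨b, hb, hmax⟩ := hc.exists_isGreatest ⟨t0, ht0F, le_rfl, hlt.le⟩
    have hτb : b < τ := lt_of_le_of_ne hb.2.2 fun h => hτF (h ▸ hb.1)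
    have free : ∀ x, b < x → x ≤ τ → x ∉ F := fun x h1 h2 h3 =>
      absurd (hmax ⟨h3, hb.2.1.trans h1.le, h2⟩) (not_le.2 h1)
    have hbT := hb.1.1
    have h1 : ∀ x, b < x → x ≤ τ → N x ≤ D := by
      intro x h1 h2
      obtain ⟨B, hB⟩ := bd x τ (hbT.1.trans h1.le) hτ.2 fun t ht => free t (h1.trans_le ht.1) ht.2
      exact hD x τ B (hbT.1.trans h1.le) hτ.2 hB τ ⟨h2, le_rfl⟩ x ⟨le_rfl, h2⟩ le_rfl
    have hNb : N b ≤ n := hnear b hb.1 (by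
      rw [abs_lt] at hd ⊢; constructor <;> linarith [hb.2.1])
    refine hK b τ (max D n) hbT.1 hτ.2 (fun x hx => ?_) b ⟨le_rfl, hτb.le⟩ τ ⟨hτb.le, le_rfl⟩ hNb
    rcases lt_or_eq_of_le hx.1 with h | h
    · exact (h1 x h hx.2).trans (le_max_left _ _)
    · rw [← h]; exact hNb.trans (le_max_right _ _)

namespace FlowData
variable {c : ℝ → ℝ} {T c₁ : ℝ} {u : ℕ → ℝ → ℝ → ℝ}

/-- The `H³` norm is lower semicontinuous in time, being a supremum of integrals over bounded intervals. -/
lemma closed_dens (S : FlowData c T c₁ u) (M : ℝ) : IsClosed {t | ∫ y, dens u t y ≤ M} := by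
  have u0 := S.contu 0
  have u1 := S.contu 1
  have u2 := S.contu 2
  have u3 := S.contu 3
  have cd : Continuous (Function.uncurry (dens u)) := by
    unfold dens Function.uncurry; fun_prop
  have e : {t | ∫ y, dens u t y ≤ M} = ⋂ n : ℕ, {t | ∫ y in (-(n:ℝ))..n, dens u t y ≤ M} := by
    ext t
    simp only [mem_ofPred_eq, mem_iInter]
    constructor
    · intro h n
      rw [intervalIntegral.integral_of_le (by linarith [n.cast_nonneg (α := ℝ)])]
      exact (setIntegral_le_integral (S.idens t) (Eventually.of_forall fun y => dens_nonneg t y)).trans h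
    · intro h
      refine le_of_tendsto (intervalIntegral_tendsto_integral (S.idens t)
        (tendsto_neg_atTop_atBot.comp tendsto_natCast_atTop_atTop) tendsto_natCast_atTop_atTop)
        (Eventually.of_forall h)
  rw [e]
  refine isClosed_iInter fun n => isClosed_le ?_ continuous_const
  exact intervalIntegral.continuous_parametric_intervalIntegral_of_continuous' cd _ _

/-- The `H³` norm of the flow is bounded uniformly on `[0, T]`. -/
theorem bounded (S : FlowData c T c₁ u) : ∃ B, ∀ t ∈ Icc 0 T, ∫ y, dens u t y ≤ B :=
  baire_bound S.closed_dens S.prop_global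

end FlowData

/-! ### The localized energy -/

namespace FlowData
variable {c : ℝ → ℝ} {T c₁ : ℝ} {u : ℕ → ℝ → ℝ → ℝ}

/-- Mass and energy conservation propagate smallness in `H¹`, hence in `L^∞`. -/
lemma small (S : FlowData c T c₁ u) {ε : ℝ} (hε : ε ^ 2 ≤ 1 / 2)
    (h0 : ∫ y, u 0 0 y ^ 2 ≤ ε ^ 2) (h1 : ∫ y, u 1 0 y ^ 2 ≤ ε ^ 2) {t : ℝ} (ht : t ∈ Icc 0 T) :
    (∫ y, u 0 t y ^ 2) ≤ ε ^ 2 ∧ (∫ y, u 1 t y ^ 2) ≤ 2 * ε ^ 2 ∧ ∀ y, u 0 t y ^ 2 ≤ 3 * ε ^ 2 := by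
  obtain ⟨B, hB⟩ := S.bounded
  have hB' : ∀ τ ∈ Icc 0 t, ∫ y, dens u τ y ≤ B := fun τ hτ => hB τ ⟨hτ.1, hτ.2.trans ht.2⟩
  have c0 := S.cons0 le_rfl ht.1 ht.2 hB'
  have c1 := S.cons1 le_rfl ht.1 ht.2 hB'
  have i : ∀ j t, 0 ≤ ∫ y, u j t y ^ 2 := fun j t => integral_nonneg fun _ => sq_nonneg _
  have cu : ∀ k τ, Continuous (u k τ) := S.conty
  have ab : ∀ τ y, |u 0 τ y ^ 2| ≤ (∫ y, u 0 τ y ^ 2) + ∫ y, u 1 τ y ^ 2 := fun τ y => by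
    rw [abs_of_nonneg (sq_nonneg _)]; exact S.sup01 τ y
  have I4 : ∀ τ, Integrable fun y => 1 / 2 * u 0 τ y ^ 4 := fun τ => by
    have := (S.i_mul 0 τ (p := fun y => u 0 τ y ^ 2) ((cu 0 τ).pow 2) (ab τ)).const_mul (1 / 2)
    refine this.congr (Eventually.of_forall fun y => ?_)
    simp only; ring
  have E1 : ∀ τ, ∫ y, (u 1 τ y ^ 2 - 1 / 2 * u 0 τ y ^ 4)
      = (∫ y, u 1 τ y ^ 2) - 1 / 2 * ∫ y, u 0 τ y ^ 2 * u 0 τ y ^ 2 := fun τ => by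
    rw [integral_sub (S.isq 1 τ) (I4 τ), integral_const_mul]
    congr 2
    exact integral_congr_ae (Eventually.of_forall fun y => by simp only; ring)
  rw [E1, E1] at c1
  have k4 := S.int_mul_le 0 t (p := fun y => u 0 t y ^ 2) ((cu 0 t).pow 2) (fun y => sq_nonneg _) (S.sup01 t)
  have k4' : 0 ≤ ∫ y, u 0 0 y ^ 2 * u 0 0 y ^ 2 := integral_nonneg fun y => by positivity
  have hA : ∫ y, u 0 t y ^ 2 ≤ ε ^ 2 := c0 ▸ h0
  have pA := i 0 t
  have pX := i 1 t
  have e : ((∫ y, u 0 t y ^ 2) + ∫ y, u 1 t y ^ 2) * (∫ y, u 0 t y ^ 2)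
      ≤ (ε ^ 2 + ∫ y, u 1 t y ^ 2) * (1 / 2) := by
    gcongr
    exact hA.trans hε
  have hX : ∫ y, u 1 t y ^ 2 ≤ 2 * ε ^ 2 := by nlinarith
  exact ⟨hA, hX, fun y => (S.sup01 t y).trans (by linarith)⟩

end FlowData

/-- A bounded nondecreasing weight `p 0` with its first three derivatives `p 1`, `p 2`, `p 3`, slowly
varying with respect to `c₀` in the sense of the field `third`. The functions `p k` with `k ≥ 4` play
no role beyond being continuous and bounded. -/
structure Wt (p : ℕ → ℝ → ℝ) (c₀ : ℝ) : Prop where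
  cont : ∀ k, Continuous (p k)
  d0 : ∀ x, HasDerivAt (p 0) (p 1 x) x
  d1 : ∀ x, HasDerivAt (p 1) (p 2 x) x
  d2 : ∀ x, HasDerivAt (p 2) (p 3 x) x
  bd : ∃ K, 0 ≤ K ∧ ∀ k x, |p k x| ≤ K
  nn : ∀ x, 0 ≤ p 0 x
  mono : ∀ x, 0 ≤ p 1 x
  third : ∀ x, p 3 x ≤ c₀ / 16 * p 1 x

/-- The source term in the balance law for the localized energy
`∫ p(y + σt - α) (u² + u_y² - u⁴/2) dy`. -/
def wsrc (c : ℝ → ℝ) (u : ℕ → ℝ → ℝ → ℝ) (p : ℕ → ℝ → ℝ) (σ α t y : ℝ) : ℝ :=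
  p 1 (y + σ * t - α) * ((σ - c t) * (u 0 t y ^ 2 + u 1 t y ^ 2 - 1 / 2 * u 0 t y ^ 4) - 3 * u 1 t y ^ 2
    + 3 / 2 * u 0 t y ^ 4 - 3 * u 2 t y ^ 2 - 2 * u 0 t y ^ 3 * u 2 t y + 6 * u 0 t y ^ 2 * u 1 t y ^ 2 - u 0 t y ^ 6)
  + p 3 (y + σ * t - α) * (u 0 t y ^ 2 + u 1 t y ^ 2)

/-- Coercivity: for small `u` the source of the localized energy is at most a negative multiple of
`p' (u² + u_y² + u_yy²)`. The drift `-(c - σ) ≤ -3c₀/8` absorbs both `p'''` and the nonlinear terms. -/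
lemma wsrc_le {c₀ σ ct κ p1 p3 u0 u1 u2 : ℝ} (hc₀ : 0 < c₀) (hσ0 : 0 ≤ σ) (hσ : σ ≤ c₀ / 8) (h1 : c₀ / 2 ≤ ct)
    (h2 : ct ≤ 2 * c₀) (hκ : κ ≤ 1 / 2) (hκ' : (c₀ + 3 / 2) * κ ≤ c₀ / 16) (hu : u0 ^ 2 ≤ κ) (hp : 0 ≤ p1)
    (h3 : p3 ≤ c₀ / 16 * p1) :
    p1 * ((σ - ct) * (u0 ^ 2 + u1 ^ 2 - 1 / 2 * u0 ^ 4) - 3 * u1 ^ 2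
    + 3 / 2 * u0 ^ 4 - 3 * u2 ^ 2 - 2 * u0 ^ 3 * u2 + 6 * u0 ^ 2 * u1 ^ 2 - u0 ^ 6)
    + p3 * (u0 ^ 2 + u1 ^ 2) ≤ - (min (c₀ / 8) 1 * (p1 * (u0 ^ 2 + u1 ^ 2 + u2 ^ 2))) := by
  set θ := min (c₀ / 8) 1
  have t1 : θ ≤ c₀ / 8 := min_le_left _ _
  have t2 : θ ≤ 1 := min_le_right _ _
  have a0 := sq_nonneg u0
  have a1 := sq_nonneg u1
  have a2 := sq_nonneg u2
  have q4 : u0 ^ 4 ≤ κ * u0 ^ 2 := by nlinarith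
  have q5 : u0 ^ 2 * u1 ^ 2 ≤ κ * u1 ^ 2 := by nlinarith
  have q6 : -2 * u0 ^ 3 * u2 ≤ u0 ^ 6 + u2 ^ 2 := by nlinarith [sq_nonneg (u0 ^ 3 + u2)]
  have n4 : 0 ≤ u0 ^ 4 := by positivity
  have q7 : (ct - σ) * u0 ^ 4 ≤ 2 * c₀ * (κ * u0 ^ 2) := by
    apply mul_le_mul (by linarith) q4 n4 (by linarith)
  have q8 : (3 / 8 * c₀) * (u0 ^ 2 + u1 ^ 2) ≤ (ct - σ) * (u0 ^ 2 + u1 ^ 2) := by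
    apply mul_le_mul_of_nonneg_right (by linarith) (by linarith)
  have q9 : (c₀ + 3 / 2) * κ * u0 ^ 2 ≤ c₀ / 16 * u0 ^ 2 := mul_le_mul_of_nonneg_right hκ' a0
  have q10 : κ * u1 ^ 2 ≤ 1 / 2 * u1 ^ 2 := mul_le_mul_of_nonneg_right hκ a1
  have r1 : θ * u0 ^ 2 ≤ c₀ / 8 * u0 ^ 2 := mul_le_mul_of_nonneg_right t1 a0
  have r2 : θ * u1 ^ 2 ≤ c₀ / 8 * u1 ^ 2 := mul_le_mul_of_nonneg_right t1 a1
  have r3 : θ * u2 ^ 2 ≤ 1 * u2 ^ 2 := mul_le_mul_of_nonneg_right t2 a2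
  have key : (σ - ct) * (u0 ^ 2 + u1 ^ 2 - 1 / 2 * u0 ^ 4) - 3 * u1 ^ 2
    + 3 / 2 * u0 ^ 4 - 3 * u2 ^ 2 - 2 * u0 ^ 3 * u2 + 6 * u0 ^ 2 * u1 ^ 2 - u0 ^ 6
    + c₀ / 16 * (u0 ^ 2 + u1 ^ 2) ≤ - (θ * (u0 ^ 2 + u1 ^ 2 + u2 ^ 2)) := by
    nlinarith [mul_nonneg hc₀.le a0, mul_nonneg hc₀.le a1]
  have l1 := mul_le_mul_of_nonneg_left key hp
  have l2 := mul_le_mul_of_nonneg_right h3 (add_nonneg a0 a1)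
  nlinarith

namespace FlowData
variable {c : ℝ → ℝ} {T c₁ : ℝ} {u : ℕ → ℝ → ℝ → ℝ}

lemma wsrcQB (S : FlowData c T c₁ u) {p : ℕ → ℝ → ℝ} {c₀ : ℝ} (hp : Wt p c₀) (σ α : ℝ) {b B : ℝ}
    (hB : ∀ t ∈ Icc 0 b, ∫ y, dens u t y ≤ B) : QB 0 b (dens u) (wsrc c u p σ α) := by
  have b0 := S.bd hB (k := 0) (by norm_num)
  have bc := S.bdc (a := 0) (b := b)
  have bp : ∀ k, Bd 0 b (fun t y => p k (y + σ * t - α)) := fun k => by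
    obtain ⟨K, hK, h⟩ := hp.bd
    exact ⟨K, hK, fun t _ y => h k _⟩
  have Q : ∀ {i j : ℕ}, i < 4 → j < 4 → QB 0 b (dens u) (fun t y => u i t y * u j t y) := fun hi hj => qd hi hj
  have Qe : QB 0 b (dens u) (fun t y => u 0 t y ^ 2 + u 1 t y ^ 2 - 1 / 2 * u 0 t y ^ 4) := by
    have := ((Q (i := 0) (j := 0) (by norm_num) (by norm_num)).add
      (Q (i := 1) (j := 1) (by norm_num) (by norm_num))).sub
      (QB.mul ((Bd.const (1/2)).mul (b0.pow 2)) (Q (i := 0) (j := 0) (by norm_num) (by norm_num)))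
    convert this using 3
    ring
  have H : QB 0 b (dens u) (fun t y => p 1 (y + σ * t - α) *
      ((σ + (-1) * c t) * (u 0 t y ^ 2 + u 1 t y ^ 2 - 1 / 2 * u 0 t y ^ 4) - 3 * (u 1 t y * u 1 t y)
      + (3 / 2 * u 0 t y ^ 2) * (u 0 t y * u 0 t y) - 3 * (u 2 t y * u 2 t y)
      - (2 * u 0 t y ^ 2) * (u 0 t y * u 2 t y) + (6 * u 0 t y ^ 2) * (u 1 t y * u 1 t y)
      - u 0 t y ^ 4 * (u 0 t y * u 0 t y))
      + p 3 (y + σ * t - α) * (u 0 t y * u 0 t y + u 1 t y * u 1 t y)) := by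
    refine QB.add (QB.mul (bp 1) (QB.sub (QB.add (QB.sub (QB.sub (QB.add (QB.sub (QB.mul
      ((Bd.const _).add ((Bd.const _).mul bc)) Qe) (QB.mul (.const _) (Q ?_ ?_))) (QB.mul ?_ (Q ?_ ?_)))
      (QB.mul (.const _) (Q ?_ ?_))) (QB.mul ?_ (Q ?_ ?_))) (QB.mul ?_ (Q ?_ ?_))) (QB.mul (b0.pow 4) (Q ?_ ?_))))
      (QB.mul (bp 3) (QB.add (Q ?_ ?_) (Q ?_ ?_)))
    all_goals first
      | norm_num; done
      | exact (Bd.const _).mul (b0.pow _)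
  convert H using 3
  unfold wsrc
  ring

/-- Balance law for the localized energy. -/
lemma wbalance (S : FlowData c T c₁ u) {p : ℕ → ℝ → ℝ} {c₀ : ℝ} (hp : Wt p c₀) (σ α : ℝ) {b B : ℝ}
    (h0b : 0 ≤ b) (hb : b ≤ T) (hB : ∀ t ∈ Icc 0 b, ∫ y, dens u t y ≤ B) :
    (∫ y, p 0 (y + σ * b - α) * (u 0 b y ^ 2 + u 1 b y ^ 2 - 1 / 2 * u 0 b y ^ 4))
      - (∫ y, p 0 (y + σ * 0 - α) * (u 0 0 y ^ 2 + u 1 0 y ^ 2 - 1 / 2 * u 0 0 y ^ 4))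
      = ∫ t in (0:ℝ)..b, ∫ y, wsrc c u p σ α t y := by
  have b0 := S.bd hB (k := 0) (by norm_num)
  have bc := S.bdc (a := 0) (b := b)
  have cc := S.cc
  have u0 := S.contu 0
  have u1 := S.contu 1
  have u2 := S.contu 2
  have u3 := S.contu 3
  have u4 := S.contu 4
  have w0 := hp.cont 0
  have w1 := hp.cont 1
  have w2 := hp.cont 2
  have w3 := hp.cont 3
  have bp : ∀ k, Bd 0 b (fun t y => p k (y + σ * t - α)) := fun k => by
    obtain ⟨K, hK, h⟩ := hp.bd
    exact ⟨K, hK, fun t _ y => h k _⟩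
  have Q : ∀ {i j : ℕ}, i < 4 → j < 4 → QB 0 b (dens u) (fun t y => u i t y * u j t y) := fun hi hj => qd hi hj
  have Qe : QB 0 b (dens u) (fun t y => u 0 t y ^ 2 + u 1 t y ^ 2 - 1 / 2 * u 0 t y ^ 4) := by
    have := ((Q (i := 0) (j := 0) (by norm_num) (by norm_num)).add
      (Q (i := 1) (j := 1) (by norm_num) (by norm_num))).sub
      (QB.mul ((Bd.const (1/2)).mul (b0.pow 2)) (Q (i := 0) (j := 0) (by norm_num) (by norm_num)))
    convert this using 3
    ring
  have hs : ∀ t y, HasDerivAt (fun x => x + σ * t - α) 1 y := fun t y =>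
    ((hasDerivAt_id y).add_const _).sub_const _
  have wd : ∀ k, (∀ x, HasDerivAt (p k) (p (k+1) x) x) → ∀ t y,
      HasDerivAt (fun x => p k (x + σ * t - α)) (p (k+1) (y + σ * t - α)) y := fun k hk t y => by
    exact ((hk _).comp y (hs t y)).congr_deriv (mul_one _)
  have wt : ∀ t y, HasDerivAt (fun s => p 0 (y + σ * s - α)) (p 1 (y + σ * t - α) * σ) t := fun t y => by
    have : HasDerivAt (fun s => y + σ * s - α) σ t := by
      simpa using (((hasDerivAt_id t).const_mul σ).const_add y).sub_const α
    exact (hp.d0 _).comp t this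
  refine balance' (n := dens u) (B := B) h0b
    (ρ := fun t y => p 0 (y + σ * t - α) * (u 0 t y ^ 2 + u 1 t y ^ 2 - 1 / 2 * u 0 t y ^ 4))
    (q := fun t y => p 1 (y + σ * t - α) * σ * (u 0 t y ^ 2 + u 1 t y ^ 2 - 1 / 2 * u 0 t y ^ 4)
      + p 0 (y + σ * t - α) * (2 * u 0 t y * (c t * u 1 t y - u 3 t y - 3 * u 0 t y ^ 2 * u 1 t y)
      + 2 * u 1 t y * (c t * u 2 t y - u 4 t y - (3 * u 0 t y ^ 2 * u 2 t y + 6 * u 0 t y * u 1 t y ^ 2))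
      - 2 * u 0 t y ^ 3 * (c t * u 1 t y - u 3 t y - 3 * u 0 t y ^ 2 * u 1 t y)))
    (F := fun t y => p 0 (y + σ * t - α) * (c t * (u 0 t y ^ 2 + u 1 t y ^ 2 - 1 / 2 * u 0 t y ^ 4)
        - 2 * (u 0 t y * u 2 t y) + u 1 t y * u 1 t y
        - 3 / 2 * u 0 t y ^ 2 * (u 0 t y * u 0 t y) - 2 * (u 1 t y * u 3 t y)
        + u 2 t y * u 2 t y + 2 * u 0 t y ^ 2 * (u 0 t y * u 2 t y) - 6 * u 0 t y ^ 2 * (u 1 t y * u 1 t y)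
        + u 0 t y ^ 4 * (u 0 t y * u 0 t y))
      + 2 * p 1 (y + σ * t - α) * (u 0 t y * u 1 t y) - p 2 (y + σ * t - α) * (u 0 t y * u 0 t y)
      + 2 * p 1 (y + σ * t - α) * (u 1 t y * u 2 t y) - p 2 (y + σ * t - α) * (u 1 t y * u 1 t y))
    (f := fun t y => p 0 (y + σ * t - α) * (c t * (u 0 t y ^ 2 + u 1 t y ^ 2 - 1 / 2 * u 0 t y ^ 4)
        - 2 * (u 0 t y * u 2 t y) + u 1 t y * u 1 t y
        - 3 / 2 * u 0 t y ^ 2 * (u 0 t y * u 0 t y) - 2 * (u 1 t y * u 3 t y)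
        + u 2 t y * u 2 t y + 2 * u 0 t y ^ 2 * (u 0 t y * u 2 t y) - 6 * u 0 t y ^ 2 * (u 1 t y * u 1 t y)
        + u 0 t y ^ 4 * (u 0 t y * u 0 t y))
      + 2 * p 1 (y + σ * t - α) * (u 0 t y * u 1 t y) - p 2 (y + σ * t - α) * (u 0 t y * u 0 t y)
      + 2 * p 1 (y + σ * t - α) * (u 1 t y * u 2 t y) - p 2 (y + σ * t - α) * (u 1 t y * u 1 t y))
    (g := fun _ _ => 0) (r := wsrc c u p σ α)
    (by fun_prop) (by fun_prop) (by fun_prop) (by fun_prop) (by unfold wsrc; fun_prop)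
    (fun t ht y => ?_) (fun t y => ?_) (fun t y => ?_)
    (fun t _ => S.idens t) hB dens_nonneg (QB.mul (bp 0) Qe) ?_ QB.zero ?_
  · have hI : t ∈ Ioo 0 T := ⟨ht.1, ht.2.trans_le hb⟩
    refine ((wt t y).mul ((((S.d0 t hI y).pow 2).add ((S.d1 t hI y).pow 2)).sub
      (((S.d0 t hI y).pow 4).const_mul (1/2)))).congr_deriv ?_
    simp; left; ring
  · have e0 := S.dy 0 t y
    have e1 := S.dy 1 t y
    have e2 := S.dy 2 t y
    have e3 := S.dy 3 t y
    have v0 := wd 0 hp.d0 t y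
    have v1 := wd 1 hp.d1 t y
    have v2 := wd 2 hp.d2 t y
    refine (((((v0.mul ((((((((((((e0.pow 2).add (e1.pow 2)).sub ((e0.pow 4).const_mul (1/2))).const_mul (c t)).sub
      ((e0.mul e2).const_mul 2)).add (e1.mul e1)).sub (((e0.pow 2).const_mul (3/2)).mul (e0.mul e0))).sub
      ((e1.mul e3).const_mul 2)).add (e2.mul e2)).add (((e0.pow 2).const_mul 2).mul (e0.mul e2))).sub
      (((e0.pow 2).const_mul 6).mul (e1.mul e1))).add ((e0.pow 4).mul (e0.mul e0)))).add
      ((v1.const_mul 2).mul (e0.mul e1))).sub (v2.mul (e0.mul e0))).add ((v1.const_mul 2).mul (e1.mul e2))).sub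
      (v2.mul (e1.mul e1))).congr_deriv ?_
    simp [wsrc]; ring
  · simpa using hasDerivAt_const y (0:ℝ)
  · refine QB.sub (QB.add (QB.sub (QB.add (QB.mul (bp 0) (QB.add (QB.sub (QB.add (QB.add (QB.sub (QB.sub (QB.add
      (QB.sub (QB.mul bc Qe) (QB.mul (.const _) (Q ?_ ?_))) (Q ?_ ?_)) (QB.mul ?_ (Q ?_ ?_))) (QB.mul (.const _) (Q ?_ ?_)))
      (Q ?_ ?_)) (QB.mul ?_ (Q ?_ ?_))) (QB.mul ?_ (Q ?_ ?_))) (QB.mul (b0.pow 4) (Q ?_ ?_))))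
      (QB.mul ((Bd.const _).mul (bp 1)) (Q ?_ ?_))) (QB.mul (bp 2) (Q ?_ ?_)))
      (QB.mul ((Bd.const _).mul (bp 1)) (Q ?_ ?_))) (QB.mul (bp 2) (Q ?_ ?_))
    all_goals first
      | norm_num; done
      | exact (Bd.const _).mul (b0.pow _)
  · exact S.wsrcQB hp σ α hB

end FlowData

/-! ### Monotonicity of the localized energy -/

namespace FlowData
variable {c : ℝ → ℝ} {T c₁ : ℝ} {u : ℕ → ℝ → ℝ → ℝ}

lemma ipe (S : FlowData c T c₁ u) {p : ℝ → ℝ} (hp : Continuous p) {K : ℝ} (hK : ∀ x, |p x| ≤ K) (t : ℝ) :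
    Integrable fun y => p y * (u 0 t y ^ 2 + u 1 t y ^ 2) := by
  refine ((S.i_mul 0 t hp hK).add (S.i_mul 1 t hp hK)).congr (Eventually.of_forall fun y => ?_)
  simp only [Pi.add_apply]; ring

lemma ipe3 (S : FlowData c T c₁ u) {p : ℝ → ℝ} (hp : Continuous p) {K : ℝ} (hK : ∀ x, |p x| ≤ K) (t : ℝ) :
    Integrable fun y => p y * (u 0 t y ^ 2 + u 1 t y ^ 2 + u 2 t y ^ 2) := by
  refine (((S.i_mul 0 t hp hK).add (S.i_mul 1 t hp hK)).add (S.i_mul 2 t hp hK)).congr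
    (Eventually.of_forall fun y => ?_)
  simp only [Pi.add_apply]; ring

/-- Monotonicity of the localized energy together with the dissipated virial quantity. -/
lemma mono_est (S : FlowData c T c₁ u) {p : ℕ → ℝ → ℝ} {c₀ σ κ : ℝ} (hp : Wt p c₀) (hc₀ : 0 < c₀)
    (hσ0 : 0 ≤ σ) (hσ : σ ≤ c₀ / 8) (hc : ∀ t ∈ Icc 0 T, c₀ / 2 ≤ c t ∧ c t ≤ 2 * c₀) (hκ : κ ≤ 1 / 2)
    (hκ' : (c₀ + 3 / 2) * κ ≤ c₀ / 16) (hu : ∀ t ∈ Icc 0 T, ∀ y, u 0 t y ^ 2 ≤ κ) (α : ℝ) {b : ℝ}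
    (hb : b ∈ Icc 0 T) :
    (1 / 2 * ∫ y, p 0 (y + σ * b - α) * (u 0 b y ^ 2 + u 1 b y ^ 2))
      + min (c₀ / 8) 1 * (∫ t in (0:ℝ)..b, ∫ y, p 1 (y + σ * t - α) * (u 0 t y ^ 2 + u 1 t y ^ 2 + u 2 t y ^ 2))
      ≤ ∫ y, p 0 (y - α) * (u 0 0 y ^ 2 + u 1 0 y ^ 2) := by
  obtain ⟨B, hB⟩ := S.bounded
  obtain ⟨K, hK0, hK⟩ := hp.bd
  have hT : (0:ℝ) ∈ Icc 0 T := ⟨le_rfl, hb.1.trans hb.2⟩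
  have hB' : ∀ τ ∈ Icc 0 b, ∫ y, dens u τ y ≤ B := fun τ hτ => hB τ ⟨hτ.1, hτ.2.trans hb.2⟩
  have W := S.wbalance hp σ α hb.1 hb.2 hB'
  obtain ⟨Cs, hCs0, hCs⟩ := S.wsrcQB hp σ α hB'
  have cu : ∀ k τ, Continuous (u k τ) := S.conty
  have cp : ∀ k a, Continuous fun y => p k (y + a - α) := fun k a => by
    have := hp.cont k
    fun_prop
  have u0 := S.contu 0
  have u1 := S.contu 1
  have u2 := S.contu 2
  have w1 := hp.cont 1
  have w3 := hp.cont 3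
  have cc := S.cc
  have cs : Continuous fun q : ℝ × ℝ => wsrc c u p σ α q.1 q.2 := by unfold wsrc; fun_prop
  have is : ∀ t ∈ Icc 0 b, Integrable (wsrc c u p σ α t) := fun t ht =>
    integrable_of_dom (cs.comp (by fun_prop : Continuous fun y : ℝ => (t, y))) (S.idens t) (hCs t ht)
  have Is := intervalIntegrable_param hb.1 hCs0 cs (fun t _ => S.idens t) hB' hCs
  have bg : ∀ t ∈ Icc 0 b, ∀ y, |p 1 (y + σ * t - α) * (u 0 t y ^ 2 + u 1 t y ^ 2 + u 2 t y ^ 2)| ≤ K * dens u t y := by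
    intro t _ y
    rw [abs_mul]
    apply mul_le_mul (hK _ _) _ (abs_nonneg _) hK0
    rw [abs_of_nonneg (by positivity)]
    unfold dens
    nlinarith [sq_nonneg (u 3 t y)]
  have Ig : IntervalIntegrable (fun t => ∫ y, p 1 (y + σ * t - α) * (u 0 t y ^ 2 + u 1 t y ^ 2 + u 2 t y ^ 2)) volume 0 b := by
    refine intervalIntegrable_param hb.1 hK0 ?_ (fun t _ => S.idens t) hB' bg
    fun_prop
  have M1 : (∫ t in (0:ℝ)..b, ∫ y, wsrc c u p σ α t y) ≤ ∫ t in (0:ℝ)..b, -(min (c₀ / 8) 1 *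
      ∫ y, p 1 (y + σ * t - α) * (u 0 t y ^ 2 + u 1 t y ^ 2 + u 2 t y ^ 2)) := by
    refine intervalIntegral.integral_mono_on hb.1 Is (Ig.const_mul _).neg fun t ht => ?_
    have htT : t ∈ Icc 0 T := ⟨ht.1, ht.2.trans hb.2⟩
    rw [← integral_const_mul, ← integral_neg]
    refine integral_mono (is t ht) ((S.ipe3 (cp 1 _) (fun x => hK 1 _) t).const_mul _).neg fun y => ?_
    exact wsrc_le hc₀ hσ0 hσ (hc t htT).1 (hc t htT).2 hκ hκ' (hu t htT y) (hp.mono _) (hp.third _)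
  rw [intervalIntegral.integral_neg, intervalIntegral.integral_const_mul] at M1
  have i4 : ∀ t ∈ Icc 0 T, ∀ a, Integrable fun y => p 0 (y + a - α) * (u 0 t y ^ 2 + u 1 t y ^ 2 - 1 / 2 * u 0 t y ^ 4) := by
    intro t ht a
    refine integrable_of_dom ((cp 0 a).mul ((((cu 0 t).pow 2).add ((cu 1 t).pow 2)).sub (((cu 0 t).pow 4).const_mul (1 / 2))))
      (S.idens t) (C := K * 1) (fun y => ?_)
    rw [abs_mul, mul_assoc]
    apply mul_le_mul (hK _ _) _ (abs_nonneg _) hK0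
    have h1 := hu t ht y
    have h2 := sq_nonneg (u 0 t y)
    have h3 : u 0 t y ^ 4 ≤ u 0 t y ^ 2 := by nlinarith
    have h4 : 0 ≤ u 0 t y ^ 4 := by positivity
    unfold dens
    rw [abs_le]
    constructor <;> nlinarith [sq_nonneg (u 1 t y), sq_nonneg (u 2 t y), sq_nonneg (u 3 t y)]
  have L : (1 / 2 * ∫ y, p 0 (y + σ * b - α) * (u 0 b y ^ 2 + u 1 b y ^ 2)) ≤
      ∫ y, p 0 (y + σ * b - α) * (u 0 b y ^ 2 + u 1 b y ^ 2 - 1 / 2 * u 0 b y ^ 4) := by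
    rw [← integral_const_mul]
    refine integral_mono ((S.ipe (cp 0 _) (fun x => hK 0 _) b).const_mul _) (i4 b hb _) fun y => ?_
    have h1 := hu b hb y
    have h2 := sq_nonneg (u 0 b y)
    have h3 : u 0 b y ^ 4 ≤ u 0 b y ^ 2 := by nlinarith
    have h5 : 1 / 2 * (u 0 b y ^ 2 + u 1 b y ^ 2) ≤ u 0 b y ^ 2 + u 1 b y ^ 2 - 1 / 2 * u 0 b y ^ 4 := by
      nlinarith [sq_nonneg (u 1 b y)]
    have := mul_le_mul_of_nonneg_left h5 (hp.nn (y + σ * b - α))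
    simp only
    linarith
  have R : (∫ y, p 0 (y + σ * 0 - α) * (u 0 0 y ^ 2 + u 1 0 y ^ 2 - 1 / 2 * u 0 0 y ^ 4)) ≤
      ∫ y, p 0 (y - α) * (u 0 0 y ^ 2 + u 1 0 y ^ 2) := by
    have : (fun y => p 0 (y - α) * (u 0 0 y ^ 2 + u 1 0 y ^ 2)) =
      fun y => p 0 (y + σ * 0 - α) * (u 0 0 y ^ 2 + u 1 0 y ^ 2) := by simp
    rw [this]
    refine integral_mono (i4 0 hT _) (S.ipe (cp 0 _) (fun x => hK 0 _) 0) fun y => ?_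
    apply mul_le_mul_of_nonneg_left _ (hp.nn _)
    have h4 : 0 ≤ u 0 0 y ^ 4 := by positivity
    linarith
  linarith

end FlowData

/-! ### The tanh weight -/

lemma hasDerivAt_tanh' (x : ℝ) : HasDerivAt Real.tanh (1 - Real.tanh x ^ 2) x := by
  have h : Real.tanh = fun x => Real.sinh x / Real.cosh x := funext Real.tanh_eq_sinh_div_cosh
  have hc := (Real.cosh_pos x).ne'
  rw [h]
  refine ((Real.hasDerivAt_sinh x).div (Real.hasDerivAt_cosh x) hc).congr_deriv ?_
  field_simp

lemma continuous_tanh' : Continuous Real.tanh :=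
  continuous_iff_continuousAt.2 fun x => (hasDerivAt_tanh' x).continuousAt

/-- `1 + tanh (δ x)` and its first three derivatives (zero beyond). -/
def tw (δ : ℝ) (k : ℕ) (x : ℝ) : ℝ :=
  match k with
  | 0 => 1 + Real.tanh (δ * x)
  | 1 => δ * (1 - Real.tanh (δ * x) ^ 2)
  | 2 => -2 * δ ^ 2 * Real.tanh (δ * x) * (1 - Real.tanh (δ * x) ^ 2)
  | 3 => δ ^ 3 * (1 - Real.tanh (δ * x) ^ 2) * (6 * Real.tanh (δ * x) ^ 2 - 2)
  | _ => 0

lemma tanh_sq_le (x : ℝ) : Real.tanh x ^ 2 ≤ 1 := by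
  have h1 := Real.tanh_lt_one x
  have h2 := Real.neg_one_lt_tanh x
  nlinarith

lemma tw_Wt {δ c₀ : ℝ} (hδ : 0 < δ) (h : 4 * δ ^ 2 ≤ c₀ / 16) : Wt (tw δ) c₀ where
  cont k := by
    have := continuous_tanh'
    match k with
    | 0 | 1 | 2 | 3 | _ + 4 => unfold tw; fun_prop
  d0 x := by
    have hl : HasDerivAt (fun x => δ * x) δ x := by simpa using (hasDerivAt_id x).const_mul δ
    have ht := (hasDerivAt_tanh' (δ * x)).comp x hl
    exact (ht.const_add 1).congr_deriv (by simp only [tw]; ring)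
  d1 x := by
    have hl : HasDerivAt (fun x => δ * x) δ x := by simpa using (hasDerivAt_id x).const_mul δ
    have ht := (hasDerivAt_tanh' (δ * x)).comp x hl
    exact (((ht.pow 2).const_sub 1).const_mul δ).congr_deriv (by simp [tw]; ring)
  d2 x := by
    have hl : HasDerivAt (fun x => δ * x) δ x := by simpa using (hasDerivAt_id x).const_mul δ
    have ht := (hasDerivAt_tanh' (δ * x)).comp x hl
    exact ((ht.const_mul (-2 * δ ^ 2)).mul ((ht.pow 2).const_sub 1)).congr_deriv (by simp [tw]; ring)
  bd := by
    refine ⟨2 + δ + 2 * δ ^ 2 + 8 * δ ^ 3, by positivity, fun k x => ?_⟩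
    have h1 := Real.tanh_lt_one (δ * x)
    have h2 := Real.neg_one_lt_tanh (δ * x)
    have hT : |Real.tanh (δ * x)| ≤ 1 := (Real.abs_tanh_lt_one _).le
    have hs := tanh_sq_le (δ * x)
    have hs' := sq_nonneg (Real.tanh (δ * x))
    have h4 : |1 - Real.tanh (δ * x) ^ 2| ≤ 1 := by rw [abs_le]; constructor <;> linarith
    have h5 : |6 * Real.tanh (δ * x) ^ 2 - 2| ≤ 8 := by rw [abs_le]; constructor <;> linarith
    have p2 : 0 < δ ^ 2 := by positivity
    have p3 : 0 < δ ^ 3 := by positivity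
    match k with
    | 0 => simp only [tw]; rw [abs_le]; constructor <;> linarith
    | 1 =>
      simp only [tw]; rw [abs_mul, abs_of_pos hδ]
      nlinarith
    | 2 =>
      simp only [tw]; rw [abs_mul, abs_mul, abs_mul, abs_of_pos p2]
      have := mul_le_mul hT h4 (abs_nonneg _) zero_le_one
      norm_num
      nlinarith
    | 3 =>
      simp only [tw]; rw [abs_mul, abs_mul, abs_of_pos p3]
      have := mul_le_mul h4 h5 (abs_nonneg _) zero_le_one
      nlinarith
    | _ + 4 => simp only [tw, abs_zero]; positivity
  nn x := by simp only [tw]; linarith [Real.neg_one_lt_tanh (δ * x)]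
  mono x := by
    simp only [tw]
    have := tanh_sq_le (δ * x)
    exact mul_nonneg hδ.le (by linarith)
  third x := by
    simp only [tw]
    have hs := tanh_sq_le (δ * x)
    have a : 0 ≤ δ * (1 - Real.tanh (δ * x) ^ 2) := mul_nonneg hδ.le (by linarith)
    have b : δ ^ 2 * (6 * Real.tanh (δ * x) ^ 2 - 2) ≤ c₀ / 16 := by nlinarith [sq_nonneg δ]
    nlinarith [mul_le_mul_of_nonneg_left b a]

/-! ### Comparison of weights -/

/-- The squared weight `⟨y₊⟩^(2m)`. -/
def Jm (m y : ℝ) : ℝ := (1 + (max y 0) ^ 2) ^ m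

lemma Jm_cont (m : ℝ) : Continuous (Jm m) := by
  unfold Jm
  exact Continuous.rpow_const (by fun_prop) fun x => Or.inl (by positivity)

lemma Jm_pos (m y : ℝ) : 0 < Jm m y := by unfold Jm; positivity

lemma one_le_Jm {m : ℝ} (hm : 0 < m) (y : ℝ) : 1 ≤ Jm m y := by
  unfold Jm
  exact Real.one_le_rpow (by nlinarith [sq_nonneg (max y 0)]) hm.le

lemma Jm_le (m : ℝ) : ∃ N : ℕ, ∀ y, Jm m y ≤ (1 + y ^ 2) ^ N := by
  refine ⟨⌈m⌉₊, fun y => ?_⟩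
  have h0 : (max y 0) ^ 2 ≤ y ^ 2 := by
    rcases le_total y 0 with h | h
    · rw [max_eq_right h]; nlinarith [sq_nonneg y]
    · rw [max_eq_left h]
  have h1 : (1:ℝ) ≤ 1 + (max y 0) ^ 2 := by nlinarith [sq_nonneg (max y 0)]
  calc Jm m y ≤ (1 + (max y 0) ^ 2) ^ ((⌈m⌉₊ : ℕ) : ℝ) :=
        Real.rpow_le_rpow_of_exponent_le h1 (Nat.le_ceil m)
    _ = (1 + (max y 0) ^ 2) ^ ⌈m⌉₊ := Real.rpow_natCast _ _
    _ ≤ _ := by gcongr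

lemma Jm_le_pow {m : ℝ} (hm : 0 < m) (y : ℝ) : Jm m y ≤ 2 ^ m * (1 + (max y 0) ^ (2 * m)) := by
  set s := max y 0 with hs
  have s0 : 0 ≤ s := le_max_right _ _
  have e : s ^ (2 * m) = (s ^ 2) ^ m := by
    rw [Real.rpow_mul s0]; norm_num
  have h : (1 + s ^ 2) ≤ 2 * max 1 (s ^ 2) := by
    have := le_max_left 1 (s ^ 2)
    have := le_max_right 1 (s ^ 2)
    linarith
  calc Jm m y = (1 + s ^ 2) ^ m := rfl
    _ ≤ (2 * max 1 (s ^ 2)) ^ m := Real.rpow_le_rpow (by positivity) h hm.le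
    _ = 2 ^ m * (max 1 (s ^ 2)) ^ m := Real.mul_rpow (by norm_num) (by positivity)
    _ ≤ 2 ^ m * (1 + s ^ (2 * m)) := by
      gcongr
      rw [e]
      rcases le_total 1 (s ^ 2) with h | h
      · rw [max_eq_right h]; linarith
      · rw [max_eq_left h, Real.one_rpow]
        have : 0 ≤ (s ^ 2) ^ m := by positivity
        linarith

lemma pow_le_Jm {m : ℝ} (hm : 0 < m) (y : ℝ) : (max y 0) ^ (2 * m) ≤ Jm m y := by
  set s := max y 0 with hs
  have s0 : 0 ≤ s := le_max_right _ _
  have e : s ^ (2 * m) = (s ^ 2) ^ m := by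
    rw [Real.rpow_mul s0]; norm_num
  rw [e]
  exact Real.rpow_le_rpow (by positivity) (by rw [← hs]; linarith) hm.le

lemma tw_le_two (δ x : ℝ) : tw δ 0 x ≤ 2 := by
  simp only [tw]; linarith [Real.tanh_lt_one (δ * x)]

lemma tw_le_exp (δ x : ℝ) : tw δ 0 x ≤ 2 * Real.exp (2 * (δ * x)) := by
  simp only [tw]
  set z := δ * x
  rw [Real.tanh_eq, two_mul z, Real.exp_add]
  have h1 := Real.exp_pos z
  have h2 := Real.exp_pos (-z)
  have h3 : Real.exp z * Real.exp (-z) = 1 := by rw [← Real.exp_add]; simp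
  have : 1 + (Real.exp z - Real.exp (-z)) / (Real.exp z + Real.exp (-z))
      = 2 * Real.exp z / (Real.exp z + Real.exp (-z)) := by field_simp; ring
  rw [this, div_le_iff₀ (by positivity)]
  nlinarith [mul_pos h1 h1, mul_pos (mul_pos h1 h1) h1]

lemma one_le_tw {δ x : ℝ} (hδ : 0 ≤ δ) (hx : 0 ≤ x) : 1 ≤ tw δ 0 x := by
  simp only [tw]
  have : 0 ≤ Real.tanh (δ * x) := by
    rw [Real.tanh_eq_sinh_div_cosh]
    exact div_nonneg (Real.sinh_nonneg_iff.2 (by positivity)) (Real.cosh_pos _).le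
  linarith

/-- Exponential decay beats the polynomial growth of `⟨t⟩^(2m)`. -/
lemma poly_exp {a m : ℝ} (ha : 0 < a) (hm : 0 < m) :
    ∃ C, 0 < C ∧ ∀ t, 0 ≤ t → (1 + t ^ 2) ^ m * Real.exp (-(a * t)) ≤ C := by
  set κ := a / m with hκ
  have κ0 : 0 < κ := by positivity
  refine ⟨(1 + 2 / κ ^ 2) ^ m, by positivity, fun t ht => ?_⟩
  have h := Real.quadratic_le_exp_of_nonneg (x := κ * t) (by positivity)
  have h1 : 1 + t ^ 2 ≤ (1 + 2 / κ ^ 2) * Real.exp (κ * t) := by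
    have e1 : 1 ≤ Real.exp (κ * t) := Real.one_le_exp (by positivity)
    have e2 : t ^ 2 = 2 / κ ^ 2 * ((κ * t) ^ 2 / 2) := by field_simp
    have e3 : (κ * t) ^ 2 / 2 ≤ Real.exp (κ * t) := by nlinarith [mul_nonneg κ0.le ht]
    have : t ^ 2 ≤ 2 / κ ^ 2 * Real.exp (κ * t) := by
      rw [e2]; gcongr
    linarith
  have h2 : (1 + t ^ 2) ^ m ≤ (1 + 2 / κ ^ 2) ^ m * Real.exp (a * t) := by
    refine (Real.rpow_le_rpow (by positivity) h1 hm.le).trans_eq ?_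
    rw [Real.mul_rpow (by positivity) (Real.exp_pos _).le, ← Real.exp_mul]
    congr 2
    rw [hκ]; field_simp
  calc _ ≤ (1 + 2 / κ ^ 2) ^ m * Real.exp (a * t) * Real.exp (-(a * t)) := by gcongr
    _ = (1 + 2 / κ ^ 2) ^ m := by rw [mul_assoc, ← Real.exp_add]; simp

/-- The tanh weight translated by `σt` costs a factor `⟨t⟩^(2m)` against `⟨y₊⟩^(2m)`: either
`y₊ ≥ σt/2`, or the weight is exponentially small in `t`. -/
lemma shift_bound {δ σ m : ℝ} (hδ : 0 < δ) (hσ : 0 < σ) (hm : 0 < m) :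
    ∃ C, 0 < C ∧ ∀ t, 0 ≤ t → ∀ y, (1 + t ^ 2) ^ m * tw δ 0 (y - σ * t) ≤ C * Jm m y := by
  obtain ⟨C, hC, h⟩ := poly_exp (a := δ * σ) (mul_pos hδ hσ) hm
  refine ⟨2 * (1 + 4 / σ ^ 2) ^ m + 2 * C, by positivity, fun t ht y => ?_⟩
  have J1 := one_le_Jm hm y
  have J0 := Jm_pos m y
  have hpos : 0 < (1 + t ^ 2) ^ m := by positivity
  rcases le_total (σ * t / 2) (max y 0) with hy | hy
  · have a : t ≤ 2 / σ * max y 0 := by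
      rw [div_mul_eq_mul_div, le_div_iff₀ hσ]; linarith
    have a2 : t ^ 2 ≤ (2 / σ * max y 0) ^ 2 := by gcongr
    have b : 1 + t ^ 2 ≤ (1 + 4 / σ ^ 2) * (1 + (max y 0) ^ 2) := by
      have : (2 / σ * max y 0) ^ 2 = 4 / σ ^ 2 * (max y 0) ^ 2 := by ring
      have h4 : 0 ≤ 4 / σ ^ 2 := by positivity
      nlinarith [sq_nonneg (max y 0)]
    have b' : (1 + t ^ 2) ^ m ≤ (1 + 4 / σ ^ 2) ^ m * Jm m y := by
      refine (Real.rpow_le_rpow (by positivity) b hm.le).trans_eq ?_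
      rw [Real.mul_rpow (by positivity) (by positivity)]; rfl
    have := mul_le_mul_of_nonneg_left (tw_le_two δ (y - σ * t)) hpos.le
    nlinarith [mul_pos hC J0]
  · have hy' : y ≤ σ * t / 2 := (le_max_left _ _).trans hy
    have e : tw δ 0 (y - σ * t) ≤ 2 * Real.exp (-(δ * σ * t)) := by
      refine (tw_le_exp _ _).trans ?_
      gcongr
      nlinarith
    have := mul_le_mul_of_nonneg_left e hpos.le
    have hh := h t ht
    have : 0 ≤ (1 + 4 / σ ^ 2) ^ m * Jm m y := by positivity
    nlinarith

/-- The superposition of the translated weights is at least `y₊^(2m) / (2m)`, from the range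
`0 < α ≤ y₊` where the weight is at least `1`. -/
lemma G_lower {δ m : ℝ} (hδ : 0 < δ) (hm : 0 < m) (y : ℝ) :
    ENNReal.ofReal ((max y 0) ^ (2 * m) / (2 * m)) ≤
      ∫⁻ α in Ioi (0:ℝ), ENNReal.ofReal (α ^ (2 * m - 1) * tw δ 0 (y - α)) := by
  set s := max y 0 with hs
  have s0 : 0 ≤ s := le_max_right _ _
  have hi : IntegrableOn (fun α : ℝ => α ^ (2 * m - 1)) (Ioc 0 s) :=
    (intervalIntegrable_iff_integrableOn_Ioc_of_le s0).1
      (intervalIntegral.intervalIntegrable_rpow' (by linarith))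
  have hv : ∫ α in Ioc 0 s, α ^ (2 * m - 1) = s ^ (2 * m) / (2 * m) := by
    rw [← intervalIntegral.integral_of_le s0, integral_rpow (Or.inl (by linarith))]
    rw [Real.zero_rpow (by linarith)]
    simp
  rw [← hv, ofReal_integral_eq_lintegral_ofReal hi
    ((ae_restrict_iff' measurableSet_Ioc).2 (Eventually.of_forall fun α hα => Real.rpow_nonneg hα.1.le _))]
  calc _ ≤ ∫⁻ α in Ioc 0 s, ENNReal.ofReal (α ^ (2 * m - 1) * tw δ 0 (y - α)) := by
        refine setLIntegral_mono' measurableSet_Ioc fun α hα => ENNReal.ofReal_le_ofReal ?_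
        have ys : s = y := by
          apply max_eq_left
          by_contra hh
          push Not at hh
          rw [max_eq_right hh.le] at hs
          linarith [hα.1, hα.2]
        have := one_le_tw hδ.le (x := y - α) (by linarith [hα.2])
        exact le_mul_of_one_le_right (Real.rpow_nonneg hα.1.le _) this
    _ ≤ _ := lintegral_mono_set Ioc_subset_Ioi_self

/-- The superposition of the translated weights is at most a multiple of `⟨y₊⟩^(2m)`. -/
lemma G_upper {δ m : ℝ} (hδ : 0 < δ) (hm : 0 < m) : ∃ C, 0 < C ∧ ∀ y,
    (∫⁻ α in Ioi (0:ℝ), ENNReal.ofReal (α ^ (2 * m - 1) * tw δ 0 (y - α))) ≤ ENNReal.ofReal (C * Jm m y) := by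
  have hg : IntegrableOn (fun α : ℝ => α ^ (2 * m - 1) * Real.exp (-δ * α ^ (1:ℝ))) (Ioi 0) :=
    integrableOn_rpow_mul_exp_neg_mul_rpow (by linarith) one_pos hδ
  set Γ₀ := ∫ α in Ioi (0:ℝ), α ^ (2 * m - 1) * Real.exp (-δ * α ^ (1:ℝ)) with hΓ
  have gnn : ∀ α ∈ Ioi (0:ℝ), 0 ≤ α ^ (2 * m - 1) * Real.exp (-δ * α ^ (1:ℝ)) := fun α hα =>
    mul_nonneg (Real.rpow_nonneg (le_of_lt hα) _) (Real.exp_pos _).le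
  have Γ0 : 0 ≤ Γ₀ := setIntegral_nonneg measurableSet_Ioi gnn
  refine ⟨2 * (2 ^ (2 * m) / (2 * m)) + 2 * Γ₀, by positivity, fun y => ?_⟩
  set s := max y 0 with hs
  have s0 : 0 ≤ s := le_max_right _ _
  have hi : IntegrableOn (fun α : ℝ => α ^ (2 * m - 1)) (Ioc 0 (2 * s)) :=
    (intervalIntegrable_iff_integrableOn_Ioc_of_le (by linarith)).1
      (intervalIntegral.intervalIntegrable_rpow' (by linarith))
  have hv : ∫ α in Ioc 0 (2 * s), α ^ (2 * m - 1) = (2 * s) ^ (2 * m) / (2 * m) := by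
    rw [← intervalIntegral.integral_of_le (by linarith), integral_rpow (Or.inl (by linarith))]
    rw [Real.zero_rpow (by linarith)]
    simp
  have hiI : Integrable ((Ioc 0 (2 * s)).indicator fun α : ℝ => α ^ (2 * m - 1)) :=
    (integrable_indicator_iff measurableSet_Ioc).2 hi
  have hvI : ∫ α in Ioi (0:ℝ), (Ioc 0 (2 * s)).indicator (fun α : ℝ => α ^ (2 * m - 1)) α
      = (2 * s) ^ (2 * m) / (2 * m) := by
    rw [setIntegral_indicator measurableSet_Ioc, inter_eq_self_of_subset_right Ioc_subset_Ioi_self, hv]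
  have dom : ∀ α ∈ Ioi (0:ℝ), α ^ (2 * m - 1) * tw δ 0 (y - α) ≤
      2 * (Ioc 0 (2 * s)).indicator (fun α : ℝ => α ^ (2 * m - 1)) α
        + 2 * (α ^ (2 * m - 1) * Real.exp (-δ * α ^ (1:ℝ))) := by
    intro α hα
    have hα0 : (0:ℝ) < α := hα
    have r0 : 0 ≤ α ^ (2 * m - 1) := Real.rpow_nonneg hα0.le _
    by_cases hc : α ≤ 2 * s
    · rw [indicator_of_mem (show α ∈ Ioc 0 (2 * s) from ⟨hα0, hc⟩)]
      have := mul_le_mul_of_nonneg_left (tw_le_two δ (y - α)) r0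
      have := gnn α hα
      linarith
    · rw [indicator_of_notMem (fun h => hc h.2)]
      push Not at hc
      have hy : y ≤ s := le_max_left _ _
      have e : tw δ 0 (y - α) ≤ 2 * Real.exp (-δ * α ^ (1:ℝ)) := by
        refine (tw_le_exp _ _).trans ?_
        rw [Real.rpow_one]
        exact mul_le_mul_of_nonneg_left (Real.exp_le_exp.2 (by nlinarith)) (by norm_num)
      have := mul_le_mul_of_nonneg_left e r0
      linarith
  have Isum : IntegrableOn (fun α => 2 * (Ioc 0 (2 * s)).indicator (fun α : ℝ => α ^ (2 * m - 1)) α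
        + 2 * (α ^ (2 * m - 1) * Real.exp (-δ * α ^ (1:ℝ)))) (Ioi 0) :=
    (hiI.integrableOn.const_mul 2).add (hg.const_mul 2)
  calc _ ≤ ∫⁻ α in Ioi (0:ℝ), ENNReal.ofReal (2 * (Ioc 0 (2 * s)).indicator (fun α : ℝ => α ^ (2 * m - 1)) α
        + 2 * (α ^ (2 * m - 1) * Real.exp (-δ * α ^ (1:ℝ)))) :=
        setLIntegral_mono' measurableSet_Ioi fun α hα => ENNReal.ofReal_le_ofReal (dom α hα)
    _ = ENNReal.ofReal (∫ α in Ioi (0:ℝ), (2 * (Ioc 0 (2 * s)).indicator (fun α : ℝ => α ^ (2 * m - 1)) α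
        + 2 * (α ^ (2 * m - 1) * Real.exp (-δ * α ^ (1:ℝ))))) := by
        rw [ofReal_integral_eq_lintegral_ofReal Isum]
        refine (ae_restrict_iff' measurableSet_Ioi).2 (Eventually.of_forall fun α hα => ?_)
        have := gnn α hα
        have : 0 ≤ (Ioc 0 (2 * s)).indicator (fun α : ℝ => α ^ (2 * m - 1)) α :=
          indicator_nonneg (fun β hβ => Real.rpow_nonneg hβ.1.le _) α
        simp only [Pi.zero_apply]
        linarith
    _ ≤ _ := by
        apply ENNReal.ofReal_le_ofReal
        rw [integral_add (hiI.integrableOn.const_mul 2) (hg.const_mul 2), integral_const_mul, integral_const_mul, hvI,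
          ← hΓ, Real.mul_rpow (by norm_num) s0]
        have h1 := pow_le_Jm hm y
        have h2 := one_le_Jm hm y
        have h3 : 2 ^ (2 * m) / (2 * m) * s ^ (2 * m) ≤ 2 ^ (2 * m) / (2 * m) * Jm m y := by gcongr
        have h4 : Γ₀ * 1 ≤ Γ₀ * Jm m y := by gcongr
        have h5 : 2 ^ (2 * m) * s ^ (2 * m) / (2 * m) = 2 ^ (2 * m) / (2 * m) * s ^ (2 * m) := by ring
        rw [h5]
        linarith

/-! ### The weighted estimates for the flow -/

/-- Tonelli's theorem for the superposition of translated weights. -/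
lemma swap_aux {k : ℝ → ℝ} (hk : Continuous k) {e : ℝ → ENNReal} (he : Measurable e) {r : ℝ} :
    (∫⁻ y, (∫⁻ α in Ioi (0:ℝ), ENNReal.ofReal (α ^ r * k (y - α))) * e y) =
      ∫⁻ α in Ioi (0:ℝ), ENNReal.ofReal (α ^ r) * ∫⁻ y, ENNReal.ofReal (k (y - α)) * e y := by
  have hkm := hk.measurable
  calc _ = ∫⁻ y, ∫⁻ α in Ioi (0:ℝ), ENNReal.ofReal (α ^ r) * (ENNReal.ofReal (k (y - α)) * e y) := by
        refine lintegral_congr fun y => ?_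
        rw [← lintegral_mul_const _ (by fun_prop)]
        refine setLIntegral_congr_fun measurableSet_Ioi fun α hα => ?_
        rw [ENNReal.ofReal_mul (Real.rpow_nonneg (le_of_lt hα) _), mul_assoc]
    _ = ∫⁻ α in Ioi (0:ℝ), ∫⁻ y, ENNReal.ofReal (α ^ r) * (ENNReal.ofReal (k (y - α)) * e y) := by
        refine lintegral_lintegral_swap (Measurable.aemeasurable ?_)
        fun_prop
    _ = _ := by
        refine lintegral_congr fun α => ?_
        rw [lintegral_const_mul _ (by fun_prop)]

namespace FlowData
variable {c : ℝ → ℝ} {T c₁ : ℝ} {u : ℕ → ℝ → ℝ → ℝ}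

lemma iJ (S : FlowData c T c₁ u) (m : ℝ) (k : ℕ) (t : ℝ) : Integrable fun y => Jm m y * u k t y ^ 2 := by
  obtain ⟨N, hN⟩ := Jm_le m
  obtain ⟨A, hA⟩ := S.dec k (N + 1) t
  obtain ⟨A0, hA0⟩ := S.dec k 0 t
  refine integrable_of_decay (C := A * A0) ((Jm_cont m).mul ((S.conty k t).pow 2)) fun y => ?_
  have h0 := hA y
  have h1 := hA0 y
  rw [pow_zero, one_mul] at h1
  rw [abs_of_nonneg (mul_nonneg (Jm_pos m y).le (sq_nonneg _)), ← sq_abs (u k t y)]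
  calc (1 + y ^ 2) * (Jm m y * |u k t y| ^ 2) ≤ (1 + y ^ 2) * ((1 + y ^ 2) ^ N * |u k t y| ^ 2) := by
        gcongr; exact hN y
    _ = ((1 + y ^ 2) ^ (N + 1) * |u k t y|) * |u k t y| := by ring
    _ ≤ A * A0 := mul_le_mul h0 h1 (abs_nonneg _) (le_trans (by positivity) h0)

lemma iJE (S : FlowData c T c₁ u) (m : ℝ) (t : ℝ) : Integrable fun y => Jm m y * (u 0 t y ^ 2 + u 1 t y ^ 2) := by
  refine ((S.iJ m 0 t).add (S.iJ m 1 t)).congr (Eventually.of_forall fun y => ?_)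
  simp only [Pi.add_apply]; ring

lemma E_le_D (S : FlowData c T c₁ u) {m : ℝ} (hm : 0 < m) (t : ℝ) :
    (∫ y, u 0 t y ^ 2) + (∫ y, u 1 t y ^ 2) ≤ ∫ y, Jm m y * (u 0 t y ^ 2 + u 1 t y ^ 2) := by
  rw [← integral_add (S.isq 0 t) (S.isq 1 t)]
  refine integral_mono ((S.isq 0 t).add (S.isq 1 t)) (S.iJE m t) fun y => ?_
  exact le_mul_of_one_le_left (by positivity) (one_le_Jm hm y)

/-- Superposition of the shifted monotonicity estimates against `α ^ (2m-1) dα`. -/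
lemma poly_est (S : FlowData c T c₁ u) {δ m : ℝ} (hδ : 0 < δ) (hm : 0 < m) {C : ℝ} (hC : 0 < C)
    (hup : ∀ y, (∫⁻ α in Ioi (0:ℝ), ENNReal.ofReal (α ^ (2 * m - 1) * tw δ 0 (y - α))) ≤ ENNReal.ofReal (C * Jm m y))
    {t : ℝ} (H : ∀ α, ∫ y, tw δ 0 (y - α) * (u 0 t y ^ 2 + u 1 t y ^ 2)
      ≤ 2 * ∫ y, tw δ 0 (y - α) * (u 0 0 y ^ 2 + u 1 0 y ^ 2)) :
    ∫ y, (max y 0) ^ (2 * m) / (2 * m) * (u 0 t y ^ 2 + u 1 t y ^ 2) ≤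
      2 * C * ∫ y, Jm m y * (u 0 0 y ^ 2 + u 1 0 y ^ 2) := by
  have ctw : Continuous (tw δ 0) := by
    have := continuous_tanh'
    unfold tw; fun_prop
  have nn : ∀ x, 0 ≤ tw δ 0 x := fun x => by simp only [tw]; linarith [Real.neg_one_lt_tanh (δ * x)]
  have I : ∀ τ α, Integrable fun y => tw δ 0 (y - α) * (u 0 τ y ^ 2 + u 1 τ y ^ 2) := fun τ α =>
    S.ipe (p := fun y => tw δ 0 (y - α)) (K := 2) (by fun_prop)
      (fun x => by rw [abs_of_nonneg (nn _)]; exact tw_le_two _ _) τ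
  have ce : ∀ τ, Continuous fun y => u 0 τ y ^ 2 + u 1 τ y ^ 2 := fun τ =>
    ((S.conty 0 τ).pow 2).add ((S.conty 1 τ).pow 2)
  have e0 : ∀ τ y, 0 ≤ u 0 τ y ^ 2 + u 1 τ y ^ 2 := fun τ y => by positivity
  have Hl : ∀ α, (∫⁻ y, ENNReal.ofReal (tw δ 0 (y - α)) * ENNReal.ofReal (u 0 t y ^ 2 + u 1 t y ^ 2)) ≤
      2 * ∫⁻ y, ENNReal.ofReal (tw δ 0 (y - α)) * ENNReal.ofReal (u 0 0 y ^ 2 + u 1 0 y ^ 2) := by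
    intro α
    simp only [← ENNReal.ofReal_mul (nn _)]
    rw [← ofReal_integral_eq_lintegral_ofReal (I t α) (Eventually.of_forall fun y => mul_nonneg (nn _) (e0 _ _)),
      ← ofReal_integral_eq_lintegral_ofReal (I 0 α) (Eventually.of_forall fun y => mul_nonneg (nn _) (e0 _ _))]
    rw [show (2:ENNReal) = ENNReal.ofReal 2 by simp, ← ENNReal.ofReal_mul (by norm_num)]
    exact ENNReal.ofReal_le_ofReal (H α)
  have swap : ∀ τ, (∫⁻ y, (∫⁻ α in Ioi (0:ℝ), ENNReal.ofReal (α ^ (2 * m - 1) * tw δ 0 (y - α)))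
        * ENNReal.ofReal (u 0 τ y ^ 2 + u 1 τ y ^ 2)) =
      ∫⁻ α in Ioi (0:ℝ), ENNReal.ofReal (α ^ (2 * m - 1)) *
        ∫⁻ y, ENNReal.ofReal (tw δ 0 (y - α)) * ENNReal.ofReal (u 0 τ y ^ 2 + u 1 τ y ^ 2) :=
    fun τ => swap_aux ctw (ce τ).measurable.ennreal_ofReal
  have low : ENNReal.ofReal (∫ y, (max y 0) ^ (2 * m) / (2 * m) * (u 0 t y ^ 2 + u 1 t y ^ 2)) ≤
      ∫⁻ y, (∫⁻ α in Ioi (0:ℝ), ENNReal.ofReal (α ^ (2 * m - 1) * tw δ 0 (y - α)))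
        * ENNReal.ofReal (u 0 t y ^ 2 + u 1 t y ^ 2) := by
    have q0 : ∀ y, 0 ≤ (max y 0) ^ (2 * m) / (2 * m) := fun y => by positivity
    rw [ofReal_integral_eq_lintegral_ofReal _ (Eventually.of_forall fun y => mul_nonneg (q0 y) (e0 _ _))]
    · refine lintegral_mono fun y => ?_
      rw [ENNReal.ofReal_mul (q0 y)]
      gcongr
      exact G_lower hδ hm y
    · refine integrable_of_dom (C := 1 / (2 * m)) ?_ (S.iJE m t) fun y => ?_
      · refine Continuous.mul (Continuous.div_const (Continuous.rpow_const (by fun_prop)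
          fun x => Or.inr (by linarith)) _) (ce t)
      · rw [abs_of_nonneg (mul_nonneg (q0 y) (e0 _ _))]
        have := pow_le_Jm hm y
        rw [← mul_assoc, one_div_mul_eq_div]
        exact mul_le_mul_of_nonneg_right (by gcongr) (e0 _ _)
  have up : (∫⁻ y, (∫⁻ α in Ioi (0:ℝ), ENNReal.ofReal (α ^ (2 * m - 1) * tw δ 0 (y - α)))
        * ENNReal.ofReal (u 0 0 y ^ 2 + u 1 0 y ^ 2)) ≤
      ENNReal.ofReal (C * ∫ y, Jm m y * (u 0 0 y ^ 2 + u 1 0 y ^ 2)) := by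
    rw [← integral_const_mul, ofReal_integral_eq_lintegral_ofReal ((S.iJE m 0).const_mul C)
      (Eventually.of_forall fun y => mul_nonneg hC.le (mul_nonneg (Jm_pos m y).le (e0 _ _)))]
    refine lintegral_mono fun y => ?_
    rw [← mul_assoc, ENNReal.ofReal_mul (mul_nonneg hC.le (Jm_pos m y).le)]
    gcongr
    exact hup y
  have D0 : 0 ≤ ∫ y, Jm m y * (u 0 0 y ^ 2 + u 1 0 y ^ 2) :=
    integral_nonneg fun y => mul_nonneg (Jm_pos m y).le (e0 _ _)
  have key : ENNReal.ofReal (∫ y, (max y 0) ^ (2 * m) / (2 * m) * (u 0 t y ^ 2 + u 1 t y ^ 2)) ≤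
      ENNReal.ofReal (2 * C * ∫ y, Jm m y * (u 0 0 y ^ 2 + u 1 0 y ^ 2)) := by
    calc _ ≤ _ := low
      _ = _ := swap t
      _ ≤ ∫⁻ α in Ioi (0:ℝ), 2 * (ENNReal.ofReal (α ^ (2 * m - 1)) *
        ∫⁻ y, ENNReal.ofReal (tw δ 0 (y - α)) * ENNReal.ofReal (u 0 0 y ^ 2 + u 1 0 y ^ 2)) := by
          refine lintegral_mono fun α => ?_
          rw [mul_left_comm]
          gcongr
          exact Hl α
      _ = 2 * ∫⁻ α in Ioi (0:ℝ), ENNReal.ofReal (α ^ (2 * m - 1)) *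
        ∫⁻ y, ENNReal.ofReal (tw δ 0 (y - α)) * ENNReal.ofReal (u 0 0 y ^ 2 + u 1 0 y ^ 2) :=
          lintegral_const_mul' _ _ (by norm_num)
      _ ≤ 2 * ENNReal.ofReal (C * ∫ y, Jm m y * (u 0 0 y ^ 2 + u 1 0 y ^ 2)) := by
          rw [← swap 0]; gcongr
      _ = _ := by
          rw [show (2:ENNReal) = ENNReal.ofReal 2 by simp, ← ENNReal.ofReal_mul (by norm_num), mul_assoc]
  exact (ENNReal.ofReal_le_ofReal_iff (by positivity)).1 key

end FlowData

/-- The three weighted bounds for a flow whose initial energy with weight `⟨y₊⟩^(2m)` is at most a small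
`D`. -/
theorem main_est {c₀ m : ℝ} (hc₀ : 0 < c₀) (hm : 0 < m) {δ : ℝ} (hδ : 0 < δ) (hδ' : 4 * δ ^ 2 ≤ c₀ / 16) :
    ∃ C, 0 < C ∧ ∀ {c : ℝ → ℝ} {T c₁ : ℝ} {u : ℕ → ℝ → ℝ → ℝ}, FlowData c T c₁ u → 0 ≤ T →
      (∀ t ∈ Icc 0 T, c₀ / 2 ≤ c t ∧ c t ≤ 2 * c₀) → ∀ D,
      (∫ y, Jm m y * (u 0 0 y ^ 2 + u 1 0 y ^ 2)) ≤ D → 3 * D ≤ 1 / 2 → (c₀ + 3 / 2) * (3 * D) ≤ c₀ / 16 →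
      (∀ t ∈ Icc 0 T, (1 + t ^ 2) ^ m * (∫ y, tw δ 0 y * (u 0 t y ^ 2 + u 1 t y ^ 2)) ≤ C * D) ∧
      (∀ t ∈ Icc 0 T, (∫ y, Jm m y * (u 0 t y ^ 2 + u 1 t y ^ 2)) ≤ C * D) ∧
      (∫ t in (0:ℝ)..T, ∫ y, tw δ 1 y * (u 0 t y ^ 2 + u 1 t y ^ 2 + u 2 t y ^ 2)) ≤ C * D := by
  set θ := min (c₀ / 8) 1 with hθ
  have θ0 : 0 < θ := lt_min (by positivity) one_pos
  obtain ⟨C1, hC1, h1⟩ := shift_bound (σ := c₀ / 8) hδ (by positivity) hm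
  obtain ⟨C2, hC2, h2⟩ := G_upper hδ hm
  have p := tw_Wt hδ hδ'
  have pm : (0:ℝ) < 2 ^ m := by positivity
  refine ⟨2 * C1 + 2 ^ m * (3 + 4 * m * C2) + 2 / θ, by positivity, ?_⟩
  intro c T c₁ u S hT hc D hD hD1 hD2
  have E0 := S.E_le_D hm 0
  have e0 : ∀ τ y, 0 ≤ u 0 τ y ^ 2 + u 1 τ y ^ 2 := fun τ y => by positivity
  have a0 : 0 ≤ ∫ y, u 0 0 y ^ 2 := integral_nonneg fun _ => sq_nonneg _
  have a1 : 0 ≤ ∫ y, u 1 0 y ^ 2 := integral_nonneg fun _ => sq_nonneg _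
  have D0 : 0 ≤ D := by linarith
  have sD : (√D) ^ 2 = D := Real.sq_sqrt D0
  have sm : ∀ t ∈ Icc 0 T, (∫ y, u 0 t y ^ 2) ≤ D ∧ (∫ y, u 1 t y ^ 2) ≤ 2 * D ∧ ∀ y, u 0 t y ^ 2 ≤ 3 * D := by
    intro t ht
    have := S.small (ε := √D) (by rw [sD]; linarith) (by rw [sD]; linarith) (by rw [sD]; linarith) ht
    rwa [sD] at this
  have M : ∀ σ, 0 ≤ σ → σ ≤ c₀ / 8 → ∀ α, ∀ b ∈ Icc 0 T, _ := fun σ h h' α b hb =>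
    S.mono_est p hc₀ h h' hc hD1 hD2 (fun t ht => (sm t ht).2.2) α hb
  have Gn : ∀ σ α b, 0 ≤ b → 0 ≤ ∫ t in (0:ℝ)..b, ∫ y, tw δ 1 (y + σ * t - α) * (u 0 t y ^ 2 + u 1 t y ^ 2 + u 2 t y ^ 2) :=
    fun σ α b hb => intervalIntegral.integral_nonneg hb fun t _ => integral_nonneg fun y =>
      mul_nonneg (p.mono _) (by positivity)
  have ctw : Continuous (tw δ 0) := p.cont 0
  have I : ∀ τ α, Integrable fun y => tw δ 0 (y - α) * (u 0 τ y ^ 2 + u 1 τ y ^ 2) := fun τ α =>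
    S.ipe (p := fun y => tw δ 0 (y - α)) (K := 2) (by fun_prop)
      (fun x => by rw [abs_of_nonneg (p.nn _)]; exact tw_le_two _ _) τ
  refine ⟨fun t ht => ?_, fun t ht => ?_, ?_⟩
  · have := M (c₀ / 8) (by positivity) le_rfl (c₀ / 8 * t) t ht
    have g := mul_nonneg θ0.le (Gn (c₀ / 8) (c₀ / 8 * t) t ht.1)
    simp only [add_sub_cancel_right] at this
    have b : (1 + t ^ 2) ^ m * (∫ y, tw δ 0 (y - c₀ / 8 * t) * (u 0 0 y ^ 2 + u 1 0 y ^ 2)) ≤ C1 * D := by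
      rw [← integral_const_mul]
      calc _ ≤ ∫ y, C1 * (Jm m y * (u 0 0 y ^ 2 + u 1 0 y ^ 2)) := by
            refine integral_mono ((I 0 _).const_mul _) ((S.iJE m 0).const_mul _) fun y => ?_
            have := mul_le_mul_of_nonneg_right (h1 t ht.1 y) (e0 0 y)
            simp only
            linarith
        _ ≤ C1 * D := by rw [integral_const_mul]; gcongr
    have q : 0 < (1 + t ^ 2) ^ m := by positivity
    have l : (∫ y, tw δ 0 y * (u 0 t y ^ 2 + u 1 t y ^ 2)) ≤
      2 * ∫ y, tw δ 0 (y - c₀ / 8 * t) * (u 0 0 y ^ 2 + u 1 0 y ^ 2) := by linarith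
    have l' := mul_le_mul_of_nonneg_left l q.le
    have r1 : 0 ≤ 2 ^ m * (3 + 4 * m * C2) * D := by positivity
    have r2 : 0 ≤ 2 / θ * D := by positivity
    nlinarith
  · have H : ∀ α, ∫ y, tw δ 0 (y - α) * (u 0 t y ^ 2 + u 1 t y ^ 2)
      ≤ 2 * ∫ y, tw δ 0 (y - α) * (u 0 0 y ^ 2 + u 1 0 y ^ 2) := fun α => by
      have := M 0 le_rfl (by positivity) α t ht
      have g := mul_nonneg θ0.le (Gn 0 α t ht.1)
      simp only [zero_mul, add_zero] at this g
      linarith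
    have Q := S.poly_est hδ hm hC2 h2 H
    have IE : Integrable fun y => u 0 t y ^ 2 + u 1 t y ^ 2 := (S.isq 0 t).add (S.isq 1 t)
    have IQ : Integrable fun y => (max y 0) ^ (2 * m) / (2 * m) * (u 0 t y ^ 2 + u 1 t y ^ 2) := by
      refine integrable_of_dom (C := 1 / (2 * m)) ?_ (S.iJE m t) fun y => ?_
      · refine Continuous.mul (Continuous.div_const (Continuous.rpow_const (by fun_prop)
          fun x => Or.inr (by linarith)) _) (((S.conty 0 t).pow 2).add ((S.conty 1 t).pow 2))
      · rw [abs_of_nonneg (mul_nonneg (by positivity) (e0 _ _))]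
        have := pow_le_Jm hm y
        rw [← mul_assoc, one_div_mul_eq_div]
        exact mul_le_mul_of_nonneg_right (by gcongr) (e0 _ _)
    have A : (∫ y, Jm m y * (u 0 t y ^ 2 + u 1 t y ^ 2)) ≤ 2 ^ m * ((∫ y, (u 0 t y ^ 2 + u 1 t y ^ 2)) +
        2 * m * ∫ y, (max y 0) ^ (2 * m) / (2 * m) * (u 0 t y ^ 2 + u 1 t y ^ 2)) := by
      rw [← integral_const_mul (2 * m), ← integral_add IE (IQ.const_mul _), ← integral_const_mul]
      refine integral_mono (S.iJE m t) ((IE.add (IQ.const_mul _)).const_mul _) fun y => ?_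
      have := mul_le_mul_of_nonneg_right (Jm_le_pow hm y) (e0 t y)
      simp only
      refine this.trans_eq ?_
      field_simp
    rw [integral_add (S.isq 0 t) (S.isq 1 t)] at A
    obtain ⟨s1, s2, -⟩ := sm t ht
    have r1 : 0 ≤ C1 * D := by positivity
    have r2 : 0 ≤ 2 / θ * D := by positivity
    have Q' : (∫ y, (max y 0) ^ (2 * m) / (2 * m) * (u 0 t y ^ 2 + u 1 t y ^ 2)) ≤ 2 * C2 * D :=
      Q.trans (by gcongr)
    calc _ ≤ _ := A
      _ ≤ 2 ^ m * ((D + 2 * D) + 2 * m * (2 * C2 * D)) := by gcongr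
      _ ≤ _ := by nlinarith
  · have := M 0 le_rfl (by positivity) 0 T ⟨hT, le_rfl⟩
    simp only [zero_mul, add_zero, sub_zero] at this
    have g : 0 ≤ ∫ y, tw δ 0 y * (u 0 T y ^ 2 + u 1 T y ^ 2) := integral_nonneg fun y => mul_nonneg (p.nn _) (e0 _ _)
    have k : (∫ y, tw δ 0 y * (u 0 0 y ^ 2 + u 1 0 y ^ 2)) ≤ 2 * D := by
      calc _ ≤ ∫ y, 2 * (Jm m y * (u 0 0 y ^ 2 + u 1 0 y ^ 2)) := by
            refine integral_mono (by simpa using I 0 0) ((S.iJE m 0).const_mul _) fun y => ?_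
            simp only
            rw [← mul_assoc]
            exact mul_le_mul_of_nonneg_right (by linarith [tw_le_two δ y, one_le_Jm hm y]) (e0 _ _)
        _ ≤ 2 * D := by rw [integral_const_mul]; gcongr
    have r1 : 0 ≤ C1 * D := by positivity
    have r2 : 0 ≤ 2 ^ m * (3 + 4 * m * C2) * D := by positivity
    have f : (∫ t in (0:ℝ)..T, ∫ y, tw δ 1 y * (u 0 t y ^ 2 + u 1 t y ^ 2 + u 2 t y ^ 2)) ≤ 2 * D / θ := by
      rw [le_div_iff₀ θ0]; linarith
    have e : 2 * D / θ = 2 / θ * D := by ring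
    rw [e] at f
    linarith

/-! ### Classical solutions define a flow -/

/-- Exchange of the time derivative and one space derivative, from the symmetry of the second
derivative. -/
lemma mixed {F : ℝ × ℝ → ℝ} {t y : ℝ} (hF : ∀ z, ContDiffAt ℝ (⊤ : ℕ∞) F (t, z)) {G : ℝ → ℝ} {G' : ℝ}
    (hG : ∀ z, HasDerivAt (fun s => F (s, z)) (G z) t) (hG' : HasDerivAt G G' y) :
    HasDerivAt (fun s => fderiv ℝ F (s, y) (0, 1)) G' t := by
  have lt : ∀ z, HasDerivAt (fun s : ℝ => (s, z)) ((1:ℝ), (0:ℝ)) t := fun z =>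
    (hasDerivAt_id t).prodMk (hasDerivAt_const t z)
  have ly : HasDerivAt (fun z : ℝ => (t, z)) ((0:ℝ), (1:ℝ)) y :=
    (hasDerivAt_const y t).prodMk (hasDerivAt_id y)
  have e : ∀ z, fderiv ℝ F (t, z) (1, 0) = G z := fun z => by
    have d : HasFDerivAt F (fderiv ℝ F (t, z)) (t, z) := ((hF z).differentiableAt (by simp)).hasFDerivAt
    exact (d.comp_hasDerivAt t (lt z)).unique (hG z)
  have sym := (hF y).isSymmSndFDerivAt (by rw [minSmoothness_of_isRCLikeNormedField]; exact WithTop.coe_le_coe.2 (le_top : (2 : ℕ∞) ≤ ⊤))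
  have dd : DifferentiableAt ℝ (fderiv ℝ F) (t, y) :=
    ((hF y).fderiv_right (m := (⊤ : ℕ∞)) (by simp)).differentiableAt (by simp)
  have D := dd.hasFDerivAt
  have D1 : HasDerivAt (fun s => fderiv ℝ F (s, y) (0, 1)) (fderiv ℝ (fderiv ℝ F) (t, y) (1, 0) (0, 1)) t := by
    have h := D.comp_hasDerivAt t (lt y)
    simpa using h.clm_apply (hasDerivAt_const t ((0:ℝ), (1:ℝ)))
  have D2 : HasDerivAt (fun z => fderiv ℝ F (t, z) (1, 0)) (fderiv ℝ (fderiv ℝ F) (t, y) (0, 1) (1, 0)) y := by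
    have h := D.comp_hasDerivAt y ly
    simpa using h.clm_apply (hasDerivAt_const y ((1:ℝ), (0:ℝ)))
  rw [funext e] at D2
  rw [hG'.unique D2, ← sym.eq]
  exact D1

/-- The `k`-th space derivative of `f` on `s`, defined through derivatives within `s` so that it is
smooth up to the boundary of the closed strip. -/
def dYs (f : ℝ × ℝ → ℝ) (s : Set (ℝ × ℝ)) : ℕ → ℝ × ℝ → ℝ
  | 0 => f
  | k + 1 => fun q => fderivWithin ℝ (dYs f s k) s q (0, 1)

lemma dYs_contDiffOn {f : ℝ × ℝ → ℝ} {s : Set (ℝ × ℝ)} (hs : UniqueDiffOn ℝ s)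
    (hf : ContDiffOn ℝ (⊤ : ℕ∞) f s) (k : ℕ) : ContDiffOn ℝ (⊤ : ℕ∞) (dYs f s k) s := by
  induction k with
  | zero => exact hf
  | succ k ih => exact (ih.fderivWithin hs (by simp)).clm_apply contDiffOn_const

lemma dYs_hasDerivAt {f : ℝ × ℝ → ℝ} {I : Set ℝ} (hs : UniqueDiffOn ℝ (I ×ˢ (univ : Set ℝ)))
    (hf : ContDiffOn ℝ (⊤ : ℕ∞) f (I ×ˢ (univ : Set ℝ))) (k : ℕ) {t : ℝ} (ht : t ∈ I) (y : ℝ) :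
    HasDerivAt (fun z => dYs f (I ×ˢ univ) k (t, z)) (dYs f (I ×ˢ univ) (k + 1) (t, y)) y := by
  have ly : HasDerivAt (fun z : ℝ => (t, z)) ((0:ℝ), (1:ℝ)) y :=
    (hasDerivAt_const y t).prodMk (hasDerivAt_id y)
  have d := ((dYs_contDiffOn hs hf k).differentiableOn (by simp) (t, y) ⟨ht, trivial⟩).hasFDerivWithinAt
  have := d.comp_hasDerivWithinAt y (ly.hasDerivWithinAt (s := univ)) (fun z _ => ⟨ht, trivial⟩)
  exact this.hasDerivAt univ_mem

lemma dYs_iter {v : ℝ → ℝ → ℝ} {I : Set ℝ} (hs : UniqueDiffOn ℝ (I ×ˢ (univ : Set ℝ)))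
    (hf : ContDiffOn ℝ (⊤ : ℕ∞) (Function.uncurry v) (I ×ˢ (univ : Set ℝ))) (k : ℕ) {t : ℝ} (ht : t ∈ I) (y : ℝ) :
    iteratedDeriv k (v t) y = dYs (Function.uncurry v) (I ×ˢ univ) k (t, y) := by
  induction k generalizing y with
  | zero => rfl
  | succ k ih => rw [iteratedDeriv_succ, funext ih]; exact (dYs_hasDerivAt hs hf k ht y).deriv

lemma schwartz_dec (g : SchwartzMap ℝ ℝ) (k j : ℕ) :
    ∃ C, ∀ y, (1 + y ^ 2) ^ j * |iteratedDeriv k g y| ≤ C := by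
  refine ⟨_, fun y => le_trans ?_ (SchwartzMap.one_add_le_sup_seminorm_apply (𝕜 := ℝ) (m := (2 * j, k)) le_rfl le_rfl g y)⟩
  rw [norm_iteratedFDeriv_eq_norm_iteratedDeriv, Real.norm_eq_abs (iteratedDeriv k g y), pow_mul]
  gcongr
  rw [Real.norm_eq_abs, ← sq_abs]
  nlinarith [abs_nonneg y]

/-- Clamping of the time variable to `[0,T]`. -/
def clampT (T t : ℝ) : ℝ := max 0 (min t T)

lemma clampT_mem {T : ℝ} (hT : 0 ≤ T) (t : ℝ) : clampT T t ∈ Icc 0 T :=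
  ⟨le_max_left _ _, max_le hT (min_le_right _ _)⟩

lemma clampT_eq {T t : ℝ} (ht : t ∈ Icc 0 T) : clampT T t = t := by
  unfold clampT; rw [min_eq_left ht.2, max_eq_right ht.1]

lemma clampT_cont (T : ℝ) : Continuous (clampT T) := by unfold clampT; fun_prop

/-- A classical solution, with time clamped to `[0, T]` so that everything is continuous on the whole
plane, defines a flow. The equation is only used at interior times, where the two-sided time
derivative in its formulation is the true one. For `T = 0` the strip has no interior, and joint
continuity comes from the smoothness of `v 0` alone. -/
theorem flowData_of {ct : ℝ → ℝ} {v : ℝ → ℝ → ℝ} {T c₁ : ℝ} (hT : 0 ≤ T) (hc : ContinuousOn ct (Icc 0 T))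
    (hcb : ∀ t ∈ Icc 0 T, |ct t| ≤ c₁) (hv : IsFrameMKdV ct v T) :
    FlowData (fun t => ct (clampT T t)) T c₁ (fun k t y => iteratedDeriv k (v (clampT T t)) y) := by
  obtain ⟨hsm, hS, hP⟩ := hv
  have sm : ∀ t ∈ Icc 0 T, ContDiff ℝ (⊤ : ℕ∞) (v t) := fun t ht => by
    obtain ⟨g, hg⟩ := hS t ht
    rw [funext hg]
    exact g.smooth _
  have dY : ∀ k, ∀ t ∈ Icc 0 T, ∀ y, HasDerivAt (iteratedDeriv k (v t)) (iteratedDeriv (k + 1) (v t) y) y := by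
    intro k t ht y
    rw [iteratedDeriv_succ]
    exact (((sm t ht).differentiable_iteratedDeriv k (by exact_mod_cast ENat.natCast_lt_top k)) y).hasDerivAt
  have hopen : ∀ t ∈ Ioo 0 T, ∀ z : ℝ, Icc 0 T ×ˢ (univ : Set ℝ) ∈ 𝓝 (t, z) := fun t ht z =>
    prod_mem_nhds (Icc_mem_nhds ht.1 ht.2) univ_mem
  have main : 0 < T → ∀ t ∈ Ioo 0 T, ∀ (k : ℕ) (G G' : ℝ → ℝ), (∀ z, HasDerivAt (fun s => iteratedDeriv k (v s) z) (G z) t) →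
      (∀ z, HasDerivAt G (G' z) z) → ∀ y, HasDerivAt (fun s => iteratedDeriv (k + 1) (v s) y) (G' y) t := by
    intro hT t ht k G G' hG hG' y
    have hs : UniqueDiffOn ℝ (Icc 0 T ×ˢ (univ : Set ℝ)) := (uniqueDiffOn_Icc hT).prod uniqueDiffOn_univ
    have hev : ∀ᶠ s in 𝓝 t, s ∈ Ioo 0 T := Ioo_mem_nhds ht.1 ht.2
    have := mixed (F := dYs (Function.uncurry v) (Icc 0 T ×ˢ univ) k) (t := t) (y := y) (G := G)
      (fun z => (dYs_contDiffOn hs hsm k).contDiffAt (hopen t ht z))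
      (fun z => (hG z).congr_of_eventuallyEq (by
        filter_upwards [hev] with s hs'
        exact (dYs_iter hs hsm k (Ioo_subset_Icc_self hs') z).symm)) (hG' y)
    refine this.congr_of_eventuallyEq ?_
    filter_upwards [hev] with s hs'
    rw [dYs_iter hs hsm (k + 1) (Ioo_subset_Icc_self hs') y]
    show fderivWithin ℝ _ _ _ _ = _
    rw [fderivWithin_of_mem_nhds (hopen s hs' y)]
  have D0 : ∀ t ∈ Ioo 0 T, ∀ y, HasDerivAt (fun s => iteratedDeriv 0 (v s) y)
      (ct t * iteratedDeriv 1 (v t) y - iteratedDeriv 3 (v t) y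
        - 3 * iteratedDeriv 0 (v t) y ^ 2 * iteratedDeriv 1 (v t) y) t := by
    intro t ht y
    have ht' := Ioo_subset_Icc_self ht
    have d : DifferentiableAt ℝ (fun s => v s y) t := by
      have h1 : DifferentiableAt ℝ (Function.uncurry v) (t, y) :=
        ((hsm.contDiffAt (hopen t ht y)).differentiableAt (by simp))
      exact h1.comp t (f := fun s => (s, y)) (by fun_prop)
    have e := hP t ht' y
    have c3 : deriv (fun z => (v t z) ^ 3) y = 3 * v t y ^ 2 * deriv (v t) y := by
      have h := (dY 0 t ht' y).pow 3
      simp only [iteratedDeriv_zero, zero_add, iteratedDeriv_one] at h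
      have h' : HasDerivAt (fun z => (v t z) ^ 3) _ y := h
      rw [h'.deriv]; norm_num
    simp only [iteratedDeriv_zero, iteratedDeriv_one]
    refine d.hasDerivAt.congr_deriv ?_
    rw [c3] at e
    have : (fun z => v t z) = v t := rfl
    rw [this] at e
    linarith
  have D1 : ∀ t ∈ Ioo 0 T, ∀ y, HasDerivAt (fun s => iteratedDeriv 1 (v s) y)
      (ct t * iteratedDeriv 2 (v t) y - iteratedDeriv 4 (v t) y
        - (3 * iteratedDeriv 0 (v t) y ^ 2 * iteratedDeriv 2 (v t) y
          + 6 * iteratedDeriv 0 (v t) y * iteratedDeriv 1 (v t) y ^ 2)) t := by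
    intro t ht
    have ht' := Ioo_subset_Icc_self ht
    refine main (ht.1.trans ht.2) t ht 0 _ _ (D0 t ht) fun z => ?_
    have e0 := dY 0 t ht' z
    have e1 := dY 1 t ht' z
    have e3 := dY 3 t ht' z
    refine (((e1.const_mul (ct t)).sub e3).sub (((e0.pow 2).const_mul 3).mul e1)).congr_deriv ?_
    simp only [Pi.pow_apply, zero_add, Nat.reduceAdd]
    ring
  have D2 : ∀ t ∈ Ioo 0 T, ∀ y, HasDerivAt (fun s => iteratedDeriv 2 (v s) y)
      (ct t * iteratedDeriv 3 (v t) y - iteratedDeriv 5 (v t) y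
        - (3 * iteratedDeriv 0 (v t) y ^ 2 * iteratedDeriv 3 (v t) y
          + 18 * iteratedDeriv 0 (v t) y * iteratedDeriv 1 (v t) y * iteratedDeriv 2 (v t) y
          + 6 * iteratedDeriv 1 (v t) y ^ 3)) t := by
    intro t ht
    have ht' := Ioo_subset_Icc_self ht
    refine main (ht.1.trans ht.2) t ht 1 _ _ (D1 t ht) fun z => ?_
    have e0 := dY 0 t ht' z
    have e1 := dY 1 t ht' z
    have e2 := dY 2 t ht' z
    have e4 := dY 4 t ht' z
    refine (((e2.const_mul (ct t)).sub e4).sub ((((e0.pow 2).const_mul 3).mul e2).add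
      ((e0.const_mul 6).mul (e1.pow 2)))).congr_deriv ?_
    simp only [Pi.pow_apply, zero_add, Nat.reduceAdd]
    ring
  have tr : ∀ (k : ℕ) (a : ℝ), ∀ t ∈ Ioo 0 T, ∀ y, HasDerivAt (fun s => iteratedDeriv k (v s) y) a t →
      HasDerivAt (fun s => iteratedDeriv k (v (clampT T s)) y) a t := by
    intro k a t ht y h
    refine h.congr_of_eventuallyEq ?_
    filter_upwards [Ioo_mem_nhds ht.1 ht.2] with s hs
    rw [clampT_eq (Ioo_subset_Icc_self hs)]
  refine ⟨?_, fun t => hcb _ (clampT_mem hT t), fun k => ?_, fun k t y => dY k _ (clampT_mem hT t) y, fun k j t => ?_,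
    fun t ht y => ?_, fun t ht y => ?_,
    fun t ht y => ?_⟩
  rotate_left 3
  · simp only [clampT_eq (Ioo_subset_Icc_self ht)]
    exact tr 0 _ t ht y (D0 t ht y)
  · simp only [clampT_eq (Ioo_subset_Icc_self ht)]
    exact tr 1 _ t ht y (D1 t ht y)
  · simp only [clampT_eq (Ioo_subset_Icc_self ht)]
    exact tr 2 _ t ht y (D2 t ht y)
  · exact hc.comp_continuous (clampT_cont T) (clampT_mem hT)
  · rcases hT.eq_or_lt with rfl | hT'
    · have e : ∀ t, clampT 0 t = 0 := fun t => le_antisymm (clampT_mem le_rfl t).2 (clampT_mem le_rfl t).1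
      simp only [e]
      have c : Continuous (iteratedDeriv k (v 0)) := continuous_iff_continuousAt.2 fun y =>
        (dY k 0 (by simp) y).continuousAt
      exact c.comp continuous_snd
    · have hs : UniqueDiffOn ℝ (Icc 0 T ×ˢ (univ : Set ℝ)) := (uniqueDiffOn_Icc hT').prod uniqueDiffOn_univ
      have := (dYs_contDiffOn hs hsm k).continuousOn.comp_continuous
        (f := fun q : ℝ × ℝ => (clampT T q.1, q.2)) (((clampT_cont T).comp continuous_fst).prodMk continuous_snd)
        (fun q => ⟨clampT_mem hT _, trivial⟩)
      refine this.congr fun q => ?_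
      exact (dYs_iter hs hsm k (clampT_mem hT _) _).symm
  · obtain ⟨g, hg⟩ := hS _ (clampT_mem hT t)
    obtain ⟨C, hC⟩ := schwartz_dec g k j
    refine ⟨C, fun y => ?_⟩
    rw [funext hg]
    exact hC y

/-! ### Passage to the weighted Sobolev norms -/

lemma L2r_sq (g : ℝ → ℝ) : L2r g ^ 2 = ∫ x, g x ^ 2 :=
  Real.sq_sqrt (integral_nonneg fun _ => sq_nonneg _)

lemma hasDerivAt_posPart_sq (y : ℝ) : HasDerivAt (fun y : ℝ => (max y 0) ^ 2) (2 * max y 0) y := by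
  rcases lt_trichotomy y 0 with h | rfl | h
  · rw [max_eq_right h.le, mul_zero]
    refine (hasDerivAt_const y (0:ℝ)).congr_of_eventuallyEq ?_
    filter_upwards [Iio_mem_nhds h] with x hx
    rw [max_eq_right (le_of_lt hx)]; simp
  · have : HasFDerivAt (fun y : ℝ => (max y 0) ^ 2) (0 : ℝ →L[ℝ] ℝ) 0 := by
      refine Asymptotics.IsBigO.hasFDerivAt (n := 2) ?_ (by norm_num)
      refine Asymptotics.IsBigO.of_bound 1 (Eventually.of_forall fun x => ?_)
      rw [one_mul, sub_zero, norm_pow, norm_pow, norm_norm]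
      gcongr
      rw [Real.norm_eq_abs, Real.norm_eq_abs, abs_of_nonneg (le_max_right _ _)]
      exact max_le (le_abs_self x) (abs_nonneg x)
    simpa using this.hasDerivAt
  · rw [max_eq_left h.le]
    have := (hasDerivAt_id y).pow 2
    refine (this.congr_of_eventuallyEq ?_).congr_deriv (by simp)
    filter_upwards [Ioi_mem_nhds h] with x hx
    rw [max_eq_left (le_of_lt hx)]; rfl

/-- The logarithmic derivative of `⟨y₊⟩^m`. -/
def lq (m y : ℝ) : ℝ := m * max y 0 / (1 + (max y 0) ^ 2)

lemma lq_sq_le (m y : ℝ) : lq m y ^ 2 ≤ m ^ 2 := by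
  unfold lq
  set s := max y 0
  have h : 0 < 1 + s ^ 2 := by positivity
  rw [div_pow, div_le_iff₀ (by positivity)]
  have : s ^ 2 ≤ (1 + s ^ 2) ^ 2 := by nlinarith [sq_nonneg s, sq_nonneg (s ^ 2)]
  calc (m * s) ^ 2 = m ^ 2 * s ^ 2 := by ring
    _ ≤ _ := by gcongr

lemma hasDerivAt_japPlus (m y : ℝ) : HasDerivAt (japPlus m) (japPlus m y * lq m y) y := by
  have h : 0 < 1 + (max y 0) ^ 2 := by positivity
  have := ((hasDerivAt_posPart_sq y).const_add 1).rpow_const (p := m / 2) (Or.inl h.ne')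
  refine this.congr_deriv ?_
  rw [Real.rpow_sub_one h.ne']
  unfold japPlus lq
  field_simp

lemma japPlus_sq (m y : ℝ) : japPlus m y ^ 2 = Jm m y := by
  unfold japPlus Jm
  rw [← Real.rpow_natCast, ← Real.rpow_mul (by positivity)]
  norm_num

lemma deriv_J_mul {m : ℝ} {f f' : ℝ → ℝ} (hf : ∀ y, HasDerivAt f (f' y) y) (y : ℝ) :
    deriv (fun y => japPlus m y * f y) y = japPlus m y * (lq m y * f y + f' y) := by
  have h : HasDerivAt (fun y => japPlus m y * f y) _ y := (hasDerivAt_japPlus m y).mul (hf y)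
  rw [h.deriv]; ring

lemma H1r_J {m : ℝ} {f f' : ℝ → ℝ} (hf : ∀ y, HasDerivAt f (f' y) y) :
    H1r (fun y => japPlus m y * f y) ^ 2 =
      (∫ y, Jm m y * f y ^ 2) + ∫ y, Jm m y * (lq m y * f y + f' y) ^ 2 := by
  unfold H1r
  rw [Real.sq_sqrt (by positivity), L2r_sq, L2r_sq]
  congr 1
  · exact integral_congr_ae (Eventually.of_forall fun y => by simp only; rw [mul_pow, japPlus_sq])
  · refine integral_congr_ae (Eventually.of_forall fun y => ?_)
    simp only
    rw [deriv_J_mul hf, mul_pow, japPlus_sq]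

lemma lq_cont (m : ℝ) : Continuous (lq m) := by
  unfold lq
  refine Continuous.div (by fun_prop) (by fun_prop) fun y => ?_
  positivity

/-- Weighting before or after differentiation gives equivalent `H¹` norms, since the logarithmic
derivative of the weight is bounded. -/
lemma J_compare {m : ℝ} {f f' : ℝ → ℝ} (hf : ∀ y, HasDerivAt f (f' y) y) (cf : Continuous f) (cf' : Continuous f')
    (i0 : Integrable fun y => Jm m y * f y ^ 2) (i1 : Integrable fun y => Jm m y * f' y ^ 2) :
    (∫ y, Jm m y * (f y ^ 2 + f' y ^ 2)) ≤ (3 + 2 * m ^ 2) * H1r (fun y => japPlus m y * f y) ^ 2 ∧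
    H1r (fun y => japPlus m y * f y) ^ 2 ≤ (2 + 2 * m ^ 2) * ∫ y, Jm m y * (f y ^ 2 + f' y ^ 2) := by
  have cJ := Jm_cont m
  have cl := lq_cont m
  have J0 := fun y => (Jm_pos m y).le
  have iE : Integrable fun y => Jm m y * (f y ^ 2 + f' y ^ 2) := by
    refine (i0.add i1).congr (Eventually.of_forall fun y => ?_)
    simp only [Pi.add_apply]; ring
  have pw : ∀ y, Jm m y * (lq m y * f y + f' y) ^ 2 ≤ (2 + 2 * m ^ 2) * (Jm m y * (f y ^ 2 + f' y ^ 2)) := fun y => by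
    have h1 : (lq m y * f y + f' y) ^ 2 ≤ 2 * (lq m y ^ 2 * f y ^ 2) + 2 * f' y ^ 2 := by
      nlinarith [sq_nonneg (lq m y * f y - f' y)]
    have h2 : lq m y ^ 2 * f y ^ 2 ≤ m ^ 2 * f y ^ 2 := mul_le_mul_of_nonneg_right (lq_sq_le m y) (sq_nonneg _)
    have h3 : (lq m y * f y + f' y) ^ 2 ≤ (2 + 2 * m ^ 2) * (f y ^ 2 + f' y ^ 2) := by
      nlinarith [sq_nonneg (f y), mul_nonneg (sq_nonneg m) (sq_nonneg (f' y))]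
    have := mul_le_mul_of_nonneg_left h3 (J0 y)
    linarith
  have pw' : ∀ y, Jm m y * f y ^ 2 + Jm m y * (lq m y * f y + f' y) ^ 2 ≤
      (2 + 2 * m ^ 2) * (Jm m y * (f y ^ 2 + f' y ^ 2)) := fun y => by
    have h1 : (lq m y * f y + f' y) ^ 2 ≤ 2 * (lq m y ^ 2 * f y ^ 2) + 2 * f' y ^ 2 := by
      nlinarith [sq_nonneg (lq m y * f y - f' y)]
    have h2 : lq m y ^ 2 ≤ m ^ 2 / 4 := by
      unfold lq
      set s := max y 0
      have h : 0 < 1 + s ^ 2 := by positivity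
      rw [div_pow, div_le_iff₀ (by positivity)]
      have : s ^ 2 ≤ (1 + s ^ 2) ^ 2 / 4 := by nlinarith [sq_nonneg (s ^ 2 - 1)]
      calc (m * s) ^ 2 = m ^ 2 * s ^ 2 := by ring
        _ ≤ m ^ 2 * ((1 + s ^ 2) ^ 2 / 4) := by gcongr
        _ = _ := by ring
    have h2 : lq m y ^ 2 * f y ^ 2 ≤ m ^ 2 / 4 * f y ^ 2 := mul_le_mul_of_nonneg_right h2 (sq_nonneg _)
    have h3 : f y ^ 2 + (lq m y * f y + f' y) ^ 2 ≤ (2 + 2 * m ^ 2) * (f y ^ 2 + f' y ^ 2) := by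
      nlinarith [sq_nonneg (f y), mul_nonneg (sq_nonneg m) (sq_nonneg (f' y)), mul_nonneg (sq_nonneg m) (sq_nonneg (f y))]
    have := mul_le_mul_of_nonneg_left h3 (J0 y)
    linarith
  have i2 : Integrable fun y => Jm m y * (lq m y * f y + f' y) ^ 2 :=
    integrable_of_dom (by fun_prop) iE fun y => by
      rw [abs_of_nonneg (mul_nonneg (J0 y) (sq_nonneg _))]; exact pw y
  rw [H1r_J hf, ← integral_add i0 i2, ← integral_const_mul, ← integral_const_mul]
  refine ⟨integral_mono iE ((i0.add i2).const_mul _) fun y => ?_, integral_mono (i0.add i2) (iE.const_mul _) pw'⟩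
  simp only
  have h2 : lq m y ^ 2 * f y ^ 2 ≤ m ^ 2 * f y ^ 2 := mul_le_mul_of_nonneg_right (lq_sq_le m y) (sq_nonneg _)
  have h1 : f' y ^ 2 ≤ 2 * (lq m y * f y + f' y) ^ 2 + 2 * (lq m y ^ 2 * f y ^ 2) := by
    nlinarith [sq_nonneg (2 * (lq m y * f y) + f' y)]
  have h3 : f y ^ 2 + f' y ^ 2 ≤ (3 + 2 * m ^ 2) * (f y ^ 2 + (lq m y * f y + f' y) ^ 2) := by
    nlinarith [sq_nonneg (f y), mul_nonneg (sq_nonneg m) (sq_nonneg (lq m y * f y + f' y)), sq_nonneg (lq m y * f y + f' y)]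
  have := mul_le_mul_of_nonneg_left h3 (J0 y)
  linarith

lemma wgt_sq (δ x : ℝ) : wgt δ x ^ 2 = tw δ 0 x := by
  unfold wgt tw
  exact Real.sq_sqrt (by linarith [Real.neg_one_lt_tanh (δ * x)])

/-- With `w² = 1 + tanh(δ·)` one has `4 w² (w')² = ((w²)')²`, and `((w²)')² ≤ 2δ w² (w²)'`. -/
lemma deriv_wgt_sq {δ : ℝ} (hδ : 0 < δ) (x : ℝ) : deriv (wgt δ) x ^ 2 ≤ δ / 2 * tw δ 1 x := by
  have hτ := Real.neg_one_lt_tanh (δ * x)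
  have hτ' := Real.tanh_lt_one (δ * x)
  have hl : HasDerivAt (fun x => δ * x) δ x := by simpa using (hasDerivAt_id x).const_mul δ
  have ht := ((hasDerivAt_tanh' (δ * x)).comp x hl).const_add 1
  have h : HasDerivAt (wgt δ) _ x := ht.sqrt (by simp only [Function.comp]; linarith)
  rw [h.deriv]
  simp only [Function.comp, tw]
  set τ := Real.tanh (δ * x)
  rw [div_pow, mul_pow 2, Real.sq_sqrt (by linarith), div_le_iff₀ (by linarith)]
  have e : ((1 - τ ^ 2) * δ) ^ 2 = δ ^ 2 * (1 - τ ^ 2) * ((1 - τ) * (1 + τ)) := by ring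
  have p : 0 ≤ δ ^ 2 * (1 - τ ^ 2) * (1 + τ) := by
    have : 0 ≤ 1 - τ ^ 2 := by nlinarith
    have : 0 ≤ 1 + τ := by linarith
    positivity
  rw [e]
  nlinarith

lemma jap_rpow_sq (m t : ℝ) : (jap t ^ (-m)) ^ 2 = ((1 + t ^ 2) ^ m)⁻¹ := by
  unfold jap
  rw [← Real.rpow_natCast, ← Real.rpow_mul (Real.sqrt_nonneg _), Real.sqrt_eq_rpow, ← Real.rpow_mul (by positivity),
    ← Real.rpow_neg (by positivity)]
  congr 1
  push_cast
  ring

/-- The choice `δ = √c₀ / 8` makes the tanh weight slowly varying, and `β`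
is the admissible size of `ε₀²`. -/
theorem virial_decay_aux (c₀ m : ℝ) (hc₀ : 0 < c₀) (hm : 1/2 < m) :
    ∃ δ C : ℝ, 0 < δ ∧ 0 < C ∧
      ∃ ε' : ℝ, 0 < ε' ∧
        ∀ ε₀ : ℝ, 0 < ε₀ → ε₀ ≤ ε' →
          ∀ T : ℝ, 0 ≤ T →
            ∀ ct : ℝ → ℝ, ContinuousOn ct (Set.Icc 0 T) →
              (∀ t ∈ Set.Icc (0:ℝ) T, c₀/2 ≤ ct t ∧ ct t ≤ 2 * c₀) →
              ∀ v : ℝ → ℝ → ℝ, IsFrameMKdV ct v T →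
                H1r (v 0) + H1r (fun y => japPlus m y * v 0 y) ≤ ε₀ →
                (∀ t ∈ Set.Icc (0:ℝ) T,
                    H1w (wgt δ) (v t) ≤ C * ε₀ * jap t ^ (-m) ∧
                    H1r (fun y => japPlus m y * v t y) ≤ C * ε₀) ∧
                (∫ t in Set.Icc (0:ℝ) T, H2wSq (deriv (wgt δ)) (v t)) ≤ C * ε₀ ^ 2 := by
  have hm0 : 0 < m := by linarith
  have hδ : 0 < √c₀ / 8 := by positivity
  have hδ' : 4 * (√c₀ / 8) ^ 2 ≤ c₀ / 16 := by
    rw [div_pow, Real.sq_sqrt hc₀.le]; linarith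
  set δ := √c₀ / 8 with hδdef
  obtain ⟨C₁, hC₁, main⟩ := main_est hc₀ hm0 hδ hδ'
  set A := 3 + 2 * m ^ 2 with hA
  have A0 : 0 < A := by positivity
  set β := min (1 / (6 * A)) (c₀ / (48 * A * (c₀ + 3 / 2))) with hβ
  have β0 : 0 < β := lt_min (by positivity) (by positivity)
  set K := C₁ * A with hK
  have K0 : 0 < K := by positivity
  refine ⟨δ, √K + √((2 + 2 * m ^ 2) * K) + δ / 2 * K, hδ, by positivity, √β, Real.sqrt_pos.2 β0, ?_⟩
  intro ε₀ hε hεβ T hT ct hct hcb v hv hin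
  have hε2 : ε₀ ^ 2 ≤ β := by
    have := pow_le_pow_left₀ hε.le hεβ 2
    rwa [Real.sq_sqrt β0.le] at this
  have hb1 : A * ε₀ ^ 2 ≤ 1 / 6 := by
    have := hε2.trans (min_le_left _ _)
    rw [le_div_iff₀ (by positivity)] at this
    linarith
  have hb2 : (c₀ + 3 / 2) * (3 * (A * ε₀ ^ 2)) ≤ c₀ / 16 := by
    have := hε2.trans (min_le_right _ _)
    rw [le_div_iff₀ (by positivity)] at this
    linarith
  have S := flowData_of (c₁ := 2 * c₀) hT hct
    (fun t ht => abs_le.2 ⟨by linarith [(hcb t ht).1], (hcb t ht).2⟩) hv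
  set u : ℕ → ℝ → ℝ → ℝ := fun k t y => iteratedDeriv k (v (clampT T t)) y with hu
  have uk : ∀ k, ∀ t ∈ Icc 0 T, u k t = iteratedDeriv k (v t) := fun k t ht => by
    simp only [hu]
    rw [clampT_eq ht]
  have u0 : ∀ t ∈ Icc 0 T, u 0 t = v t := fun t ht => by rw [uk 0 t ht, iteratedDeriv_zero]
  have u1 : ∀ t ∈ Icc 0 T, u 1 t = deriv (v t) := fun t ht => by rw [uk 1 t ht, iteratedDeriv_one]
  have h0T : (0:ℝ) ∈ Icc 0 T := ⟨le_rfl, hT⟩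
  have cmp := fun t => J_compare (m := m) (S.dy 0 t) (S.conty 0 t) (S.conty 1 t) (S.iJ m 0 t) (S.iJ m 1 t)
  have hD : (∫ y, Jm m y * (u 0 0 y ^ 2 + u 1 0 y ^ 2)) ≤ A * ε₀ ^ 2 := by
    refine (cmp 0).1.trans ?_
    have n1 : 0 ≤ H1r (v 0) := Real.sqrt_nonneg _
    have n2 : 0 ≤ H1r (fun y => japPlus m y * v 0 y) := Real.sqrt_nonneg _
    rw [u0 0 h0T]
    gcongr
    linarith
  obtain ⟨M1, M2, M3⟩ := main S hT
    (fun t ht => by simp only [clampT_eq ht]; exact hcb t ht) (A * ε₀ ^ 2) hD (by linarith) hb2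
  have s1 : (√K * ε₀) ^ 2 = C₁ * (A * ε₀ ^ 2) := by rw [mul_pow, Real.sq_sqrt K0.le, hK]; ring
  have s2 : (√((2 + 2 * m ^ 2) * K) * ε₀) ^ 2 = (2 + 2 * m ^ 2) * (C₁ * (A * ε₀ ^ 2)) := by
    rw [mul_pow, Real.sq_sqrt (by positivity), hK]; ring
  refine ⟨fun t ht => ⟨?_, ?_⟩, ?_⟩
  · have j0 : 0 ≤ jap t ^ (-m) := Real.rpow_nonneg (Real.sqrt_nonneg _) _
    have : H1w (wgt δ) (v t) ≤ √K * ε₀ * jap t ^ (-m) := by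
      unfold H1w
      refine Real.sqrt_le_iff.2 ⟨by positivity, ?_⟩
      rw [mul_pow, s1, jap_rpow_sq, ← div_eq_mul_inv, le_div_iff₀ (by positivity), mul_comm]
      refine le_trans (le_of_eq ?_) (M1 t ht)
      congr 1
      rw [L2r_sq, L2r_sq, u0 t ht, u1 t ht]
      have p := tw_Wt hδ hδ'
      have I := fun k => S.i_mul k t (p.cont 0) (K := 2)
        (fun x => by rw [abs_of_nonneg (p.nn _)]; exact tw_le_two _ _)
      have I0 := I 0
      have I1 := I 1
      rw [u0 t ht] at I0
      rw [u1 t ht] at I1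
      simp only [mul_pow, wgt_sq, mul_add]
      exact (integral_add I0 I1).symm
    refine this.trans ?_
    gcongr
    have : 0 ≤ √((2 + 2 * m ^ 2) * K) := Real.sqrt_nonneg _
    have : 0 ≤ δ / 2 * K := by positivity
    linarith
  · have : H1r (fun y => japPlus m y * v t y) ≤ √((2 + 2 * m ^ 2) * K) * ε₀ := by
      refine abs_le_of_sq_le_sq' ?_ (by positivity) |>.2
      rw [s2]
      have := (cmp t).2
      rw [u0 t ht] at this
      refine this.trans ?_
      have := M2 t ht
      rw [u0 t ht] at this
      gcongr
    refine this.trans ?_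
    gcongr
    have : 0 ≤ √K := Real.sqrt_nonneg _
    have : 0 ≤ δ / 2 * K := by positivity
    linarith
  · obtain ⟨B, hB⟩ := S.bounded
    have p := tw_Wt hδ hδ'
    obtain ⟨Kp, hKp0, hKp⟩ := p.bd
    have c0 := S.contu 0
    have c1 := S.contu 1
    have c2 := S.contu 2
    have cp := p.cont 1
    have Ig : IntervalIntegrable (fun t => ∫ y, tw δ 1 y * (u 0 t y ^ 2 + u 1 t y ^ 2 + u 2 t y ^ 2)) volume 0 T := by
      refine intervalIntegrable_param hT hKp0 ?_ (fun t _ => S.idens t) hB fun t _ y => ?_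
      · fun_prop
      rw [abs_mul]
      apply mul_le_mul (hKp _ _) _ (abs_nonneg _) hKp0
      rw [abs_of_nonneg (by positivity)]
      unfold dens
      nlinarith [sq_nonneg (u 3 t y)]
    have H : ∀ t ∈ Icc 0 T, H2wSq (deriv (wgt δ)) (v t) ≤
        δ / 2 * ∫ y, tw δ 1 y * (u 0 t y ^ 2 + u 1 t y ^ 2 + u 2 t y ^ 2) := by
      intro t ht
      have I := fun k => S.i_mul k t (p.cont 1) (hKp 1)
      have e : (∫ y, tw δ 1 y * (u 0 t y ^ 2 + u 1 t y ^ 2 + u 2 t y ^ 2)) =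
          (∫ y, tw δ 1 y * u 0 t y ^ 2) + (∫ y, tw δ 1 y * u 1 t y ^ 2) + ∫ y, tw δ 1 y * u 2 t y ^ 2 := by
        have I01 : Integrable fun y => tw δ 1 y * u 0 t y ^ 2 + tw δ 1 y * u 1 t y ^ 2 :=
          (I 0).add (I 1)
        rw [← integral_add (I 0) (I 1), ← integral_add I01 (I 2)]
        simp only [mul_add]
      have each : ∀ k, L2r (fun x => deriv (wgt δ) x * iteratedDeriv k (v t) x) ^ 2 ≤
          δ / 2 * ∫ y, tw δ 1 y * u k t y ^ 2 := fun k => by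
        rw [L2r_sq, ← integral_const_mul]
        refine integral_mono_of_nonneg (Eventually.of_forall fun y => sq_nonneg _) ((I k).const_mul _)
          (Eventually.of_forall fun y => ?_)
        simp only
        rw [mul_pow, uk k t ht, ← mul_assoc]
        exact mul_le_mul_of_nonneg_right (deriv_wgt_sq hδ y) (sq_nonneg _)
      unfold H2wSq
      rw [Finset.sum_range_succ, Finset.sum_range_succ, Finset.sum_range_one, e]
      linarith [each 0, each 1, each 2]
    have fin : (∫ t in Icc (0:ℝ) T, H2wSq (deriv (wgt δ)) (v t)) ≤ δ / 2 * (C₁ * (A * ε₀ ^ 2)) := by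
      rw [integral_Icc_eq_integral_Ioc]
      calc _ ≤ ∫ t in Ioc (0:ℝ) T, δ / 2 * ∫ y, tw δ 1 y * (u 0 t y ^ 2 + u 1 t y ^ 2 + u 2 t y ^ 2) := by
            refine integral_mono_of_nonneg (Eventually.of_forall fun t => ?_)
              (((intervalIntegrable_iff_integrableOn_Ioc_of_le hT).1 Ig).const_mul _)
              ((ae_restrict_iff' measurableSet_Ioc).2 (Eventually.of_forall fun t ht => H t (Ioc_subset_Icc_self ht)))
            unfold H2wSq
            exact Finset.sum_nonneg fun k _ => sq_nonneg _
        _ = δ / 2 * ∫ t in (0:ℝ)..T, ∫ y, tw δ 1 y * (u 0 t y ^ 2 + u 1 t y ^ 2 + u 2 t y ^ 2) := by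
            rw [integral_const_mul, ← intervalIntegral.integral_of_le hT]
        _ ≤ _ := by gcongr
    refine fin.trans ?_
    have e : δ / 2 * (C₁ * (A * ε₀ ^ 2)) = δ / 2 * K * ε₀ ^ 2 := by rw [hK]; ring
    rw [e]
    gcongr
    have : 0 ≤ √K := Real.sqrt_nonneg _
    have : 0 ≤ √((2 + 2 * m ^ 2) * K) := Real.sqrt_nonneg _
    linarith

end VirialProof

/-- Proposition 3.5: virial decay estimates for the free mKdV flow in a moving frame. -/
theorem virial_decay_estimates (c₀ m : ℝ) (hc₀ : 0 < c₀) (hm : 1/2 < m) :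
    ∃ δ C : ℝ, 0 < δ ∧ 0 < C ∧
      ∃ ε' : ℝ, 0 < ε' ∧
        ∀ ε₀ : ℝ, 0 < ε₀ → ε₀ ≤ ε' →
          ∀ T : ℝ, 0 ≤ T →
            ∀ ct : ℝ → ℝ, ContinuousOn ct (Set.Icc 0 T) →
              (∀ t ∈ Set.Icc (0:ℝ) T, c₀/2 ≤ ct t ∧ ct t ≤ 2 * c₀) →
              ∀ v : ℝ → ℝ → ℝ, IsFrameMKdV ct v T →
                H1r (v 0) + H1r (fun y => japPlus m y * v 0 y) ≤ ε₀ →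
                (∀ t ∈ Set.Icc (0:ℝ) T,
                    H1w (wgt δ) (v t) ≤ C * ε₀ * jap t ^ (-m) ∧
                    H1r (fun y => japPlus m y * v t y) ≤ C * ε₀) ∧
                (∫ t in Set.Icc (0:ℝ) T, H2wSq (deriv (wgt δ)) (v t)) ≤ C * ε₀ ^ 2 := by
  exact virial_decay_aux c₀ m hc₀ hm
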